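/- Let Γ be a loopless 3-edge connected metric graph with canonical model (G₀, l₀). Then the following are equivalent: (A) |V(G₀)| ∈ {2,3}, or Γ is trigonal (there exists a non-degenerate harmonic morphism of degree 3 from a tropical modification of Γ to a metric tree); (B) Γ is divisorially trigonal. Moreover, in case (A) with |V(G₀)| > 3, the tropical modification may be taken to be Γ itself, i.e. Γ is strictly trigonal. -/

import Mathlib

open scoped Classical

/-!
Combinatorial models of metric graphs: a finite (multi-)graph together with a
positive length for each edge.  A metric graph is determined by such a model;
its canonical model is the (unique) model with all valences at least `3`.
-/

structure MetricGraphModel : Type 1 where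
  V : Type
  E : Type
  fV : Fintype V
  fE : Fintype E
  dV : DecidableEq V
  dE : DecidableEq E
  src : E → V
  tgt : E → V
  len : E → ℝ
  len_pos : ∀ e, 0 < len e

attribute [instance] MetricGraphModel.fV MetricGraphModel.fE
attribute [instance] MetricGraphModel.dV MetricGraphModel.dE

namespace MetricGraphModel

/-- An edge is incident to a vertex. -/
def Incident (Γ : MetricGraphModel) (e : Γ.E) (v : Γ.V) : Prop :=
  Γ.src e = v ∨ Γ.tgt e = v

/-- Incidence multiplicity (a loop counts twice). -/
def incid (Γ : MetricGraphModel) (e : Γ.E) (v : Γ.V) : ℕ :=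
  (if Γ.src e = v then 1 else 0) + (if Γ.tgt e = v then 1 else 0)

/-- The valence of a vertex. -/
def valence (Γ : MetricGraphModel) (v : Γ.V) : ℕ := ∑ e : Γ.E, Γ.incid e v

def dSrc (Γ : MetricGraphModel) (x : Γ.E × Bool) : Γ.V :=
  if x.2 then Γ.src x.1 else Γ.tgt x.1

def dTgt (Γ : MetricGraphModel) (x : Γ.E × Bool) : Γ.V :=
  if x.2 then Γ.tgt x.1 else Γ.src x.1

/-- Walks, given as lists of oriented edges. -/
def IsWalk (Γ : MetricGraphModel) : List (Γ.E × Bool) → Γ.V → Γ.V → Prop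
  | [], u, v => u = v
  | x :: xs, u, v => Γ.dSrc x = u ∧ IsWalk Γ xs (Γ.dTgt x) v

def Connected (Γ : MetricGraphModel) : Prop :=
  Nonempty Γ.V ∧ ∀ u v : Γ.V, ∃ L, IsWalk Γ L u v

/-- Removing any set of at most `2` edges leaves the graph connected. -/
def ThreeEdgeConnected (Γ : MetricGraphModel) : Prop :=
  ∀ S : Finset Γ.E, S.card ≤ 2 → ∀ u v : Γ.V,
    ∃ L, IsWalk Γ L u v ∧ ∀ x ∈ L, x.1 ∉ S

def Loopless (Γ : MetricGraphModel) : Prop := ∀ e : Γ.E, Γ.src e ≠ Γ.tgt e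

/-- A canonical model: connected, with all valences at least `3`. -/
def IsCanonical (Γ : MetricGraphModel) : Prop :=
  Γ.Connected ∧ ∀ v : Γ.V, 3 ≤ Γ.valence v

/-- A (model of a) metric tree. -/
def IsTreeModel (Γ : MetricGraphModel) : Prop :=
  Γ.Connected ∧ Fintype.card Γ.E + 1 = Fintype.card Γ.V

/-- Points of the associated metric graph: vertices together with interior
points of edges (parametrised by their distance from the source). -/
abbrev Pt (Γ : MetricGraphModel) : Type :=
  Γ.V ⊕ Σ e : Γ.E, {t : ℝ // 0 < t ∧ t < Γ.len e}

end MetricGraphModel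

open MetricGraphModel

/-- The (canonical) loopless model: insert a vertex at the midpoint of every loop. -/
noncomputable def looplessModel (Γ : MetricGraphModel) : MetricGraphModel where
  V := Γ.V ⊕ {e : Γ.E // Γ.src e = Γ.tgt e}
  E := {e : Γ.E // Γ.src e ≠ Γ.tgt e} ⊕ ({e : Γ.E // Γ.src e = Γ.tgt e} × Bool)
  fV := inferInstance
  fE := inferInstance
  dV := inferInstance
  dE := inferInstance
  src := fun x => match x with
    | Sum.inl e => Sum.inl (Γ.src e.1)
    | Sum.inr p => Sum.inl (Γ.src p.1.1)
  tgt := fun x => match x with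
    | Sum.inl e => Sum.inl (Γ.tgt e.1)
    | Sum.inr p => Sum.inr p.1
  len := fun x => match x with
    | Sum.inl e => Γ.len e.1
    | Sum.inr p => Γ.len p.1.1 / 2
  len_pos := by
    rintro (e | p)
    · exact Γ.len_pos e.1
    · have h := Γ.len_pos p.1.1
      show 0 < Γ.len p.1.1 / 2
      linarith

/-- The metric subgraph obtained by removing all loops. -/
noncomputable def deloop (Γ : MetricGraphModel) : MetricGraphModel where
  V := Γ.V
  E := {e : Γ.E // Γ.src e ≠ Γ.tgt e}
  fV := inferInstance
  fE := inferInstance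
  dV := inferInstance
  dE := inferInstance
  src := fun e => Γ.src e.1
  tgt := fun e => Γ.tgt e.1
  len := fun e => Γ.len e.1
  len_pos := fun e => Γ.len_pos e.1

namespace MetricGraphModel

/-! ### Divisors and rational functions -/

abbrev Divisor (Γ : MetricGraphModel) : Type := Γ.Pt → ℤ

noncomputable def divDegree {Γ : MetricGraphModel} (D : Divisor Γ) : ℤ := finsum D

def DivEffective {Γ : MetricGraphModel} (D : Divisor Γ) : Prop := ∀ p, 0 ≤ D p

def DivFinSupp {Γ : MetricGraphModel} (D : Divisor Γ) : Prop :=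
  (Function.support D).Finite

noncomputable def unitDiv (Γ : MetricGraphModel) (p : Γ.Pt) : Divisor Γ :=
  fun q => if q = p then 1 else 0

/-- `f` is continuous piecewise linear with integer slopes on `[0, L]`. -/
def PLInt (f : ℝ → ℝ) (L : ℝ) : Prop :=
  ∃ n : ℕ, ∃ t : Fin (n + 1) → ℝ, t 0 = 0 ∧ t (Fin.last n) = L ∧ StrictMono t ∧
    ∀ i : Fin n, ∃ m : ℤ, ∀ s ∈ Set.Icc (t i.castSucc) (t i.succ),
      f s = f (t i.castSucc) + (m : ℝ) * (s - t i.castSucc)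

/-- The (integer) outgoing slope of `f` to the right of `t0`. -/
noncomputable def slopeR (f : ℝ → ℝ) (t0 : ℝ) : ℤ :=
  if h : ∃ m : ℤ, ∃ ε : ℝ, 0 < ε ∧ ∀ s ∈ Set.Icc t0 (t0 + ε),
      f s = f t0 + (m : ℝ) * (s - t0)
  then h.choose else 0

/-- The (integer) outgoing slope of `f` to the left of `t0`. -/
noncomputable def slopeL (f : ℝ → ℝ) (t0 : ℝ) : ℤ :=
  if h : ∃ m : ℤ, ∃ ε : ℝ, 0 < ε ∧ ∀ s ∈ Set.Icc (t0 - ε) t0,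
      f s = f t0 + (m : ℝ) * (t0 - s)
  then h.choose else 0

/-- A rational function: continuous, piecewise linear with integer slopes. -/
structure RationalFunction (Γ : MetricGraphModel) where
  vVal : Γ.V → ℝ
  eFun : Γ.E → ℝ → ℝ
  pl : ∀ e, PLInt (eFun e) (Γ.len e)
  srcVal : ∀ e, eFun e 0 = vVal (Γ.src e)
  tgtVal : ∀ e, eFun e (Γ.len e) = vVal (Γ.tgt e)

/-- The principal divisor of a rational function: the sum of the outgoing
slopes at every point. -/
noncomputable def ratDiv {Γ : MetricGraphModel} (f : RationalFunction Γ) : Divisor Γ :=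
  fun p => match p with
  | Sum.inl v => ∑ e : Γ.E,
      ((if Γ.src e = v then slopeR (f.eFun e) 0 else 0) +
       (if Γ.tgt e = v then slopeL (f.eFun e) (Γ.len e) else 0))
  | Sum.inr q => slopeR (f.eFun q.1) q.2.1 + slopeL (f.eFun q.1) q.2.1

/-- Evaluation of a rational function at a point of the metric graph. -/
def ratEval {Γ : MetricGraphModel} (f : RationalFunction Γ) : Γ.Pt → ℝ
  | Sum.inl v => f.vVal v
  | Sum.inr q => f.eFun q.1 q.2.1

/-- Linear equivalence of divisors. -/
def LinEquiv (Γ : MetricGraphModel) (D D' : Divisor Γ) : Prop :=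
  ∃ f : RationalFunction Γ, ∀ p, D p = D' p + ratDiv f p

/-- The Baker–Norine rank of `D` is at least `k`. -/
def RankGE (Γ : MetricGraphModel) (D : Divisor Γ) (k : ℕ) : Prop :=
  ∀ A : Divisor Γ, DivEffective A → DivFinSupp A → divDegree A = (k : ℤ) →
    ∃ B : Divisor Γ, DivEffective B ∧ DivFinSupp B ∧
      LinEquiv Γ (fun p => D p - A p) B

/-- `W¹₃(Γ) ≠ ∅`: some divisor of degree `3` has rank at least `1`. -/
def DivisoriallyTrigonal (Γ : MetricGraphModel) : Prop :=
  ∃ D : Divisor Γ, DivFinSupp D ∧ divDegree D = 3 ∧ RankGE Γ D 1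

end MetricGraphModel

/-! ### Harmonic morphisms of metric graphs -/

/-- An indexed morphism of metric graph models.  An edge is either mapped onto
an edge (with an integer stretching index `mu`) or contracted to a vertex. -/
structure MGMorphism (Γ Δ : MetricGraphModel) where
  vMap : Γ.V → Δ.V
  eMap : Γ.E → Δ.E ⊕ Δ.V
  mu : Γ.E → ℕ
  mu_zero : ∀ e, mu e = 0 ↔ ∃ v', eMap e = Sum.inr v'
  contract_ok : ∀ e v', eMap e = Sum.inr v' →
    vMap (Γ.src e) = v' ∧ vMap (Γ.tgt e) = v'
  edge_ok : ∀ e e', eMap e = Sum.inl e' →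
    ((vMap (Γ.src e) = Δ.src e' ∧ vMap (Γ.tgt e) = Δ.tgt e') ∨
     (vMap (Γ.src e) = Δ.tgt e' ∧ vMap (Γ.tgt e) = Δ.src e'))
  len_ok : ∀ e e', eMap e = Sum.inl e' → (mu e : ℝ) * Γ.len e = Δ.len e'

namespace MGMorphism

variable {Γ Δ : MetricGraphModel}

/-- The local sum `m_φ(v)` computed along a fixed edge `e'` at `φ(v)`. -/
noncomputable def locDeg (φ : MGMorphism Γ Δ) (v : Γ.V) (e' : Δ.E) : ℕ :=
  ∑ e : Γ.E, if φ.eMap e = Sum.inl e' then φ.mu e * Γ.incid e v else 0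

def Harmonic (φ : MGMorphism Γ Δ) : Prop :=
  ∀ (v : Γ.V) (e₁ e₂ : Δ.E),
    Δ.Incident e₁ (φ.vMap v) → Δ.Incident e₂ (φ.vMap v) →
      locDeg φ v e₁ = locDeg φ v e₂

def Nondegenerate (φ : MGMorphism Γ Δ) : Prop :=
  ∀ v : Γ.V, ∃ e' : Δ.E, Δ.Incident e' (φ.vMap v) ∧ 1 ≤ locDeg φ v e'

def HasDegree (φ : MGMorphism Γ Δ) (d : ℕ) : Prop :=
  ∀ e' : Δ.E, (∑ e : Γ.E, if φ.eMap e = Sum.inl e' then φ.mu e else 0) = d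

/-- The horizontal multiplicity `m_φ(v)` at a vertex. -/
noncomputable def mVal (φ : MGMorphism Γ Δ) (v : Γ.V) : ℕ :=
  (Finset.univ.filter fun e' : Δ.E => Δ.Incident e' (φ.vMap v)).sup (locDeg φ v)

end MGMorphism

/-! ### Isomorphisms, subdivisions and tropical modifications -/

def sameEndsMap (Γ Δ : MetricGraphModel) (f : Γ.V → Δ.V) (e : Γ.E) (e' : Δ.E) : Prop :=
  (f (Γ.src e) = Δ.src e' ∧ f (Γ.tgt e) = Δ.tgt e') ∨
  (f (Γ.src e) = Δ.tgt e' ∧ f (Γ.tgt e) = Δ.src e')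

structure MGMIso (Γ Δ : MetricGraphModel) where
  vEquiv : Γ.V ≃ Δ.V
  eEquiv : Γ.E ≃ Δ.E
  ends : ∀ e, sameEndsMap Γ Δ (fun v => vEquiv v) e (eEquiv e)
  len_eq : ∀ e, Δ.len (eEquiv e) = Γ.len e

/-- Deletion of a leaf (a valence-one vertex together with its edge). -/
def LeafDeletion (Δ Δ' : MetricGraphModel) : Prop :=
  ∃ (v₀ : Δ.V) (e₀ : Δ.E), Δ.valence v₀ = 1 ∧ Δ.Incident e₀ v₀ ∧
    ∃ (fv : Δ'.V ≃ {v : Δ.V // v ≠ v₀}) (fe : Δ'.E ≃ {e : Δ.E // e ≠ e₀}),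
      (∀ e : Δ'.E, sameEndsMap Δ' Δ (fun v => (fv v).1) e (fe e).1) ∧
      ∀ e : Δ'.E, Δ.len (fe e).1 = Δ'.len e

/-- Suppression of a valence-two vertex, merging its two edges and adding
their lengths. -/
def SeriesReduction (Δ Δ' : MetricGraphModel) : Prop :=
  ∃ (v₀ : Δ.V) (e₁ e₂ : Δ.E) (u₁ u₂ : Δ.V),
    e₁ ≠ e₂ ∧ Δ.valence v₀ = 2 ∧ u₁ ≠ v₀ ∧ u₂ ≠ v₀ ∧
    ({Δ.src e₁, Δ.tgt e₁} : Set Δ.V) = {v₀, u₁} ∧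
    ({Δ.src e₂, Δ.tgt e₂} : Set Δ.V) = {v₀, u₂} ∧
    ∃ (fv : Δ'.V ≃ {v : Δ.V // v ≠ v₀}) (ebar : Δ'.E)
      (fe : {e : Δ'.E // e ≠ ebar} ≃ {e : Δ.E // e ≠ e₁ ∧ e ≠ e₂}),
      Δ'.len ebar = Δ.len e₁ + Δ.len e₂ ∧
      ({(fv (Δ'.src ebar)).1, (fv (Δ'.tgt ebar)).1} : Set Δ.V) = {u₁, u₂} ∧
      (∀ e : {e : Δ'.E // e ≠ ebar},
        sameEndsMap Δ' Δ (fun v => (fv v).1) e.1 (fe e).1) ∧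
      ∀ e : {e : Δ'.E // e ≠ ebar}, Δ.len (fe e).1 = Δ'.len e.1

def ReductionStep (Δ Δ' : MetricGraphModel) : Prop :=
  LeafDeletion Δ Δ' ∨ SeriesReduction Δ Δ' ∨ Nonempty (MGMIso Δ Δ')

/-- `Δ` reduces to `Γ` by deleting leaves and suppressing valence-two
vertices.  When `Γ` is a canonical model, this says exactly that the metric
graph of `Δ` is a tropical modification of the metric graph of `Γ`. -/
def Reduces (Δ Γ : MetricGraphModel) : Prop :=
  Relation.ReflTransGen ReductionStep Δ Γ

def IsTropicalModificationOf (Δ Γ : MetricGraphModel) : Prop := Reduces Δ Γ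

def ModelStep (Δ Δ' : MetricGraphModel) : Prop :=
  SeriesReduction Δ Δ' ∨ Nonempty (MGMIso Δ Δ')

/-- `Δ` and `Γ` are models of the same metric graph (no trees added). -/
def SameMetricGraph (Δ Γ : MetricGraphModel) : Prop :=
  Relation.ReflTransGen ModelStep Δ Γ

/-- `Γ` is trigonal: a tropical modification of `Γ` admits a non-degenerate
harmonic morphism of degree `3` onto a metric tree. -/
def Trigonal (Γ : MetricGraphModel) : Prop :=
  ∃ Δ T : MetricGraphModel, IsTropicalModificationOf Δ Γ ∧ T.IsTreeModel ∧
    ∃ φ : MGMorphism Δ T,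
      MGMorphism.Harmonic φ ∧ MGMorphism.Nondegenerate φ ∧ MGMorphism.HasDegree φ 3

/-- `Γ` is strictly trigonal: `Γ` itself (i.e. some model of the same metric
graph) admits a non-degenerate harmonic morphism of degree `3` onto a metric
tree. -/
def StrictlyTrigonal (Γ : MetricGraphModel) : Prop :=
  ∃ Δ T : MetricGraphModel, SameMetricGraph Δ Γ ∧ T.IsTreeModel ∧
    ∃ φ : MGMorphism Δ T,
      MGMorphism.Harmonic φ ∧ MGMorphism.Nondegenerate φ ∧ MGMorphism.HasDegree φ 3

/-! ### Embeddings up to subdivision (for tropical modifications of morphisms) -/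

structure SubEmbed (G Δ : MetricGraphModel) where
  v : G.V → Δ.V
  inj : Function.Injective v
  path : G.E → List (Δ.E × Bool)
  ne : ∀ e, path e ≠ []
  walk : ∀ e, MetricGraphModel.IsWalk Δ (path e) (v (G.src e)) (v (G.tgt e))
  len_sum : ∀ e, ((path e).map fun x => Δ.len x.1).sum = G.len e

/-! ### Pullback of points along a harmonic morphism -/

/-- `φ` maps the point `p` of `Γ` to the point `t` of `Δ`. -/
def MapsToPt {Γ Δ : MetricGraphModel} (φ : MGMorphism Γ Δ) : Γ.Pt → Δ.Pt → Prop
  | Sum.inl v, Sum.inl t => φ.vMap v = t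
  | Sum.inl _, Sum.inr _ => False
  | Sum.inr q, Sum.inl t => φ.eMap q.1 = Sum.inr t
  | Sum.inr q, Sum.inr r =>
      φ.eMap q.1 = Sum.inl r.1 ∧
      ((φ.vMap (Γ.src q.1) = Δ.src r.1 ∧ (r.2.1 : ℝ) = (φ.mu q.1 : ℝ) * (q.2.1 : ℝ)) ∨
       (φ.vMap (Γ.src q.1) = Δ.tgt r.1 ∧
         (r.2.1 : ℝ) = Δ.len r.1 - (φ.mu q.1 : ℝ) * (q.2.1 : ℝ)))

/-- Horizontal multiplicity of a point. -/
noncomputable def hmult {Γ Δ : MetricGraphModel} (φ : MGMorphism Γ Δ) : Γ.Pt → ℕ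
  | Sum.inl v => MGMorphism.mVal φ v
  | Sum.inr q => φ.mu q.1

/-- The pullback divisor `φ*(t)` of a point `t`. -/
noncomputable def pullbackDiv {Γ Δ : MetricGraphModel} (φ : MGMorphism Γ Δ)
    (t : Δ.Pt) : MetricGraphModel.Divisor Γ :=
  fun p => if MapsToPt φ p t then (hmult φ p : ℤ) else 0

/-! ### Points on edges, admissible representatives, consecutive divisors -/

open MetricGraphModel

/-- `p` is an interior point of the edge `e`. -/
def interiorOf (Γ : MetricGraphModel) (e : Γ.E) (p : Γ.Pt) : Prop :=
  ∃ q : {t : ℝ // 0 < t ∧ t < Γ.len e}, p = Sum.inr ⟨e, q⟩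

def SameEdgeInterior (Γ : MetricGraphModel) (p q : Γ.Pt) : Prop :=
  ∃ e : Γ.E, interiorOf Γ e p ∧ interiorOf Γ e q

/-- `Dx` is the admissible representative of `D` with respect to the vertex
`x`: it is linearly equivalent to `D`, of the form `x + x₁ + x₂`, and `x₁, x₂`
do not both lie in the interior of one edge. -/
def AdmissibleRep (Γ : MetricGraphModel) (D : Divisor Γ) (x : Γ.V)
    (Dx : Divisor Γ) : Prop :=
  LinEquiv Γ D Dx ∧
  ∃ p q : Γ.Pt,
    Dx = (fun z => unitDiv Γ (Sum.inl x) z + unitDiv Γ p z + unitDiv Γ q z) ∧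
    ¬ SameEdgeInterior Γ p q

/-- `p` lies on the (closed) edge `e` at distance `s` from its source. -/
def LiesOn (Γ : MetricGraphModel) (e : Γ.E) (p : Γ.Pt) (s : ℝ) : Prop :=
  (p = Sum.inl (Γ.src e) ∧ s = 0) ∨ (p = Sum.inl (Γ.tgt e) ∧ s = Γ.len e) ∨
  (∃ h : 0 < s ∧ s < Γ.len e, p = Sum.inr ⟨e, ⟨s, h⟩⟩)

/-- Vertices of the refinement `G_D`: vertices of `G₀` together with all
support points of admissible representatives of `D`. -/
def SpecialPt (Γ : MetricGraphModel) (D : Divisor Γ) (p : Γ.Pt) : Prop :=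
  (∃ v : Γ.V, p = Sum.inl v) ∨
  ∃ (x : Γ.V) (Dx : Divisor Γ), AdmissibleRep Γ D x Dx ∧ Dx p ≠ 0

/-- An edge of the refinement `G_D` joining the supports of `Dx` and `Dy`:
a segment of an edge of `Γ` between a point of `Supp Dx` and a point of
`Supp Dy` containing no vertex of `G_D` in its interior. -/
def ConnSeg (Γ : MetricGraphModel) (D Dx Dy : Divisor Γ) (e : Γ.E) (s t : ℝ) : Prop :=
  s < t ∧ ∃ p q : Γ.Pt, LiesOn Γ e p s ∧ LiesOn Γ e q t ∧
    ((Dx p ≠ 0 ∧ Dy q ≠ 0) ∨ (Dy p ≠ 0 ∧ Dx q ≠ 0)) ∧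
    ∀ r, s < r → r < t → ∀ z, LiesOn Γ e z r → ¬ SpecialPt Γ D z

/-- Two admissible representatives are consecutive. -/
def Consecutive (Γ : MetricGraphModel) (D Dx Dy : Divisor Γ) : Prop :=
  Dx ≠ Dy ∧ ∃ e s t, ConnSeg Γ D Dx Dy e s t

/-- The open segment of `e` between parameters `s` and `t`, as a set of points. -/
def segSet (Γ : MetricGraphModel) (e : Γ.E) (s t : ℝ) : Set Γ.Pt :=
  {z | ∃ r, s < r ∧ r < t ∧ LiesOn Γ e z r}

/-- Two points can be joined inside one edge avoiding the removed set `R`. -/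
def AvoidAdj (Γ : MetricGraphModel) (R : Set Γ.Pt) (p q : Γ.Pt) : Prop :=
  ∃ (e : Γ.E) (s t : ℝ), s ≤ t ∧
    ((LiesOn Γ e p s ∧ LiesOn Γ e q t) ∨ (LiesOn Γ e q s ∧ LiesOn Γ e p t)) ∧
    ∀ r, s < r → r < t → ∀ z, LiesOn Γ e z r → z ∉ R

/-- The complement of `R` in the metric graph is connected. -/
def ComplementConnected (Γ : MetricGraphModel) (R : Set Γ.Pt) : Prop :=
  ∀ p q : Γ.Pt, p ∉ R → q ∉ R →
    Relation.ReflTransGen (fun a b => a ∉ R ∧ b ∉ R ∧ AvoidAdj Γ R a b) p q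

/-! ### Minimizing/maximizing sets of a rational function -/

def minSet {Γ : MetricGraphModel} (f : RationalFunction Γ) : Set Γ.Pt :=
  {p | ∀ q, ratEval f p ≤ ratEval f q}

def maxSet {Γ : MetricGraphModel} (f : RationalFunction Γ) : Set Γ.Pt :=
  {p | ∀ q, ratEval f q ≤ ratEval f p}

/-- `p` is a boundary point of `A`: it belongs to `A` and there are points of
the complement arbitrarily close to it along some edge. -/
def InBoundary (Γ : MetricGraphModel) (A : Set Γ.Pt) (p : Γ.Pt) : Prop :=
  p ∈ A ∧ ∃ (e : Γ.E) (s : ℝ), LiesOn Γ e p s ∧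
    ∀ ε : ℝ, 0 < ε → ∃ r z, |r - s| < ε ∧ LiesOn Γ e z r ∧ z ∉ A

/-- There is an edge leaving `A` at `p`, in the direction of `e` at parameter
`s` (increasing if `b = true`, decreasing if `b = false`). -/
def ExitsAt (Γ : MetricGraphModel) (A : Set Γ.Pt) (p : Γ.Pt) (e : Γ.E)
    (s : ℝ) (b : Bool) : Prop :=
  LiesOn Γ e p s ∧
  (b = true → ∃ ε : ℝ, 0 < ε ∧ s + ε ≤ Γ.len e ∧
    ∀ r, s < r → r < s + ε → ∀ z, LiesOn Γ e z r → z ∉ A) ∧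
  (b = false → ∃ ε : ℝ, 0 < ε ∧ 0 ≤ s - ε ∧
    ∀ r, s - ε < r → r < s → ∀ z, LiesOn Γ e z r → z ∉ A)

/-!
Pulling back the points of a tree along a nondegenerate harmonic morphism of degree `d` gives
effective divisors of degree `d`, pairwise linearly equivalent and covering every point, and this
property descends through subdivisions and the removal of trees.  On a loopless graph with at most
`d` vertices, a divisor of degree `d` with a chip at every vertex moves: two chips at the ends of
an edge can walk towards each other.

Conversely, when `D` has degree `3` and rank at least one, moving two chips apart inside an edge
produces for each vertex `v` a divisor `v + p + q` equivalent to `D` with `p` and `q` not interior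
to the same edge.  Subdivide so that all these chips are at vertices.  If `g` is a function whose
divisor is the difference of two of them, every proper superlevel set of `g` is bounded by a cut
with at least three edges while only three chips cross it; so exactly three edges cross with slope
one, and all chips of the first divisor are at the maximum of `g` and those of the second at the
minimum.  Hence the supports partition the vertices.  Each class is a fibre: the graph of classes
is a tree, since removing the edge between two classes separates the values of `g`, and the
quotient map, with a chip's multiplicity as its local degree, is harmonic of degree `3`.
-/

open Filter Topology

namespace MetricGraphModel

/-! ### One-sided slopes -/

section Slopes

variable {f g : ℝ → ℝ} {t d c : ℝ} {m n : ℤ}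

/-- `f` is affine of slope `m` along a short segment leaving `t` in the direction `d`, where
`d = 1` means rightwards and `d = -1` means leftwards. -/
def HasSlope (f : ℝ → ℝ) (t d : ℝ) (m : ℤ) : Prop :=
  ∀ᶠ u in 𝓝[>] (0 : ℝ), f (t + d * u) = f t + m * u

theorem hasSlope_iff_exists : HasSlope f t d m ↔
    ∃ ε > 0, ∀ u ∈ Set.Icc (0 : ℝ) ε, f (t + d * u) = f t + m * u := by
  refine (nhdsGT_basis (0 : ℝ)).eventually_iff.trans ⟨?_, ?_⟩
  · rintro ⟨ε, hε, h⟩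
    refine ⟨ε / 2, half_pos hε, fun u hu => ?_⟩
    rcases hu.1.eq_or_lt with rfl | hu0
    · simp
    · exact h ⟨hu0, hu.2.trans_lt (half_lt_self hε)⟩
  · rintro ⟨ε, hε, h⟩
    exact ⟨ε, hε, fun u hu => h u (Set.Ioo_subset_Icc_self hu)⟩

theorem HasSlope.unique (hm : HasSlope f t d m) (hn : HasSlope f t d n) : m = n := by
  obtain ⟨u, ⟨hmu, hnu⟩, hu⟩ := ((hm.and hn).and self_mem_nhdsWithin).exists
  have h : (m : ℝ) * u = n * u := by linarith
  exact_mod_cast mul_right_cancel₀ (ne_of_gt hu) h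

theorem hasSlope_const : HasSlope (fun _ => c) t d 0 := by simp [HasSlope]

theorem HasSlope.add (hf : HasSlope f t d m) (hg : HasSlope g t d n) :
    HasSlope (fun x => f x + g x) t d (m + n) := by
  filter_upwards [hf, hg] with u hfu hgu
  rw [hfu, hgu]
  push_cast
  ring

theorem HasSlope.neg (hf : HasSlope f t d m) : HasSlope (fun x => -f x) t d (-m) := by
  filter_upwards [hf] with u hfu
  rw [hfu]
  push_cast
  ring

theorem HasSlope.congr (hf : HasSlope f t d m) (h : ∀ᶠ u in 𝓝[>] (0 : ℝ), f (t + d * u) =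
    g (t + d * u)) (h0 : f t = g t) : HasSlope g t d m := by
  filter_upwards [hf, h] with u hfu hu
  rw [← hu, hfu, h0]

theorem hasSlope_affine {a b : ℝ} (ha : a * d = m) : HasSlope (fun x => a * x + b) t d m :=
  Eventually.of_forall fun u => by
    rw [← ha]
    ring

theorem hasSlope_comp_affine {a ε : ℝ} :
    HasSlope (fun s => f (a + ε * s)) t d m ↔ HasSlope f (a + ε * t) (ε * d) m := by
  unfold HasSlope
  simp only [mul_add, add_assoc, mul_assoc]

theorem HasSlope.tendsto (hf : HasSlope f t d m) :
    Tendsto (fun u => f (t + d * u)) (𝓝[>] 0) (𝓝 (f t)) := by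
  have h : Tendsto (fun u : ℝ => f t + m * u) (𝓝[>] 0) (𝓝 (f t + m * 0)) :=
    ((continuous_const.add (continuous_const.mul continuous_id)).tendsto 0).mono_left
      nhdsWithin_le_nhds
  rw [mul_zero, add_zero] at h
  exact h.congr' (hf.mono fun _ hu => hu.symm)

theorem HasSlope.max_of_lt (hf : HasSlope f t d m) (h : c < f t) :
    HasSlope (fun x => max (f x) c) t d m :=
  hf.congr ((hf.tendsto.eventually_const_lt h).mono fun _ hu => (max_eq_left hu.le).symm)
    (max_eq_left h.le).symm

theorem HasSlope.max_of_gt (hf : HasSlope f t d m) (h : f t < c) :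
    HasSlope (fun x => max (f x) c) t d 0 :=
  (hasSlope_const (c := c)).congr
    ((hf.tendsto.eventually_lt_const h).mono fun _ hu => (max_eq_right hu.le).symm)
    (max_eq_right h.le).symm

theorem HasSlope.max_of_eq (hf : HasSlope f t d m) (h : f t = c) :
    HasSlope (fun x => max (f x) c) t d (max m 0) := by
  filter_upwards [hf, self_mem_nhdsWithin] with u hfu hu
  have hu : (0 : ℝ) < u := hu
  rw [hfu, h, max_self, Int.cast_max, Int.cast_zero, max_mul_of_nonneg _ _ hu.le, zero_mul,
    add_max, add_zero]

theorem HasSlope.exists_max (hf : HasSlope f t d m) :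
    ∃ k, HasSlope (fun x => max (f x) c) t d k := by
  rcases lt_trichotomy c (f t) with h | h | h
  exacts [⟨_, hf.max_of_lt h⟩, ⟨_, hf.max_of_eq h.symm⟩, ⟨_, hf.max_of_gt h⟩]

/-- The sign of a direction: `true` is increasing, `false` decreasing. -/
def dirSign (b : Bool) : ℝ := if b then 1 else -1

@[simp] theorem dirSign_true : dirSign true = 1 := rfl

@[simp] theorem dirSign_false : dirSign false = -1 := rfl

/-- The slope of `f` leaving `t` in the direction `b`. -/
noncomputable def outSlope (f : ℝ → ℝ) (t : ℝ) (b : Bool) : ℤ :=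
  if b then slopeR f t else slopeL f t

theorem HasSlope.slopeR_eq (h : HasSlope f t 1 m) : slopeR f t = m := by
  have key : ∀ k : ℤ, HasSlope f t 1 k ↔ ∃ ε : ℝ, 0 < ε ∧ ∀ s ∈ Set.Icc t (t + ε),
      f s = f t + (k : ℝ) * (s - t) := fun k => by
    refine hasSlope_iff_exists.trans (exists_congr fun ε => and_congr_right fun _ => ⟨?_, ?_⟩)
    · intro hu s hs
      simpa using hu (s - t) ⟨sub_nonneg.2 hs.1, by linarith [hs.2]⟩
    · intro hs u hu
      simpa using hs (t + 1 * u) ⟨by linarith [hu.1], by linarith [hu.2]⟩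
  have hex : ∃ k : ℤ, ∃ ε : ℝ, 0 < ε ∧ ∀ s ∈ Set.Icc t (t + ε), f s = f t + (k : ℝ) * (s - t) :=
    ⟨m, (key m).1 h⟩
  rw [slopeR, dif_pos hex]
  exact ((key _).2 hex.choose_spec).unique h

theorem HasSlope.slopeL_eq (h : HasSlope f t (-1) m) : slopeL f t = m := by
  have key : ∀ k : ℤ, HasSlope f t (-1) k ↔ ∃ ε : ℝ, 0 < ε ∧ ∀ s ∈ Set.Icc (t - ε) t,
      f s = f t + (k : ℝ) * (t - s) := fun k => by
    refine hasSlope_iff_exists.trans (exists_congr fun ε => and_congr_right fun _ => ⟨?_, ?_⟩)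
    · intro hu s hs
      simpa using hu (t - s) ⟨sub_nonneg.2 hs.2, by linarith [hs.1]⟩
    · intro hs u hu
      simpa using hs (t + -1 * u) ⟨by linarith [hu.2], by linarith [hu.1]⟩
  have hex : ∃ k : ℤ, ∃ ε : ℝ, 0 < ε ∧ ∀ s ∈ Set.Icc (t - ε) t, f s = f t + (k : ℝ) * (t - s) :=
    ⟨m, (key m).1 h⟩
  rw [slopeL, dif_pos hex]
  exact ((key _).2 hex.choose_spec).unique h

theorem HasSlope.outSlope_eq {b : Bool} (h : HasSlope f t (dirSign b) m) : outSlope f t b = m := by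
  cases b
  · exact h.slopeL_eq
  · exact h.slopeR_eq

end Slopes

/-! ### Piecewise linear functions on an interval -/

theorem real_induction {a b : ℝ} {P : ℝ → Prop} (base : P a)
    (step : ∀ x ∈ Set.Ico a b, P x → ∀ᶠ y in 𝓝[>] x, P y)
    (limit : ∀ x ∈ Set.Ioc a b, (∀ y ∈ Set.Ico a x, P y) → P x) : ∀ x ∈ Set.Icc a b, P x := by
  by_contra! hcon
  obtain ⟨x, hx, hPx⟩ := hcon
  let S := {y | y ∈ Set.Icc a b ∧ ¬P y}
  have hxS : x ∈ S := ⟨hx, hPx⟩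
  have hbdd : BddBelow S := ⟨a, fun y hy => hy.1.1⟩
  have hle : sInf S ≤ x := csInf_le hbdd hxS
  have hage : a ≤ sInf S := le_csInf ⟨x, hxS⟩ fun y hy => hy.1.1
  have hbelow : ∀ y ∈ Set.Ico a (sInf S), P y := fun y hy => by
    by_contra hPy
    exact (csInf_le hbdd ⟨⟨hy.1, by linarith [hy.2, hx.2]⟩, hPy⟩).not_gt hy.2
  have hPS : P (sInf S) := by
    rcases hage.eq_or_lt with h | h
    · exact h ▸ base
    · exact limit _ ⟨h, hle.trans hx.2⟩ hbelow
  have hlt : sInf S < x := hle.lt_of_ne fun h => hPx (h ▸ hPS)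
  obtain ⟨c, hc, hPc⟩ :=
    (nhdsGT_basis (sInf S)).eventually_iff.1 (step _ ⟨hage, hlt.trans_le hx.2⟩ hPS)
  obtain ⟨y, hyS, hyc⟩ := exists_lt_of_csInf_lt ⟨x, hxS⟩ hc
  rcases (csInf_le hbdd hyS).eq_or_lt with h | h
  · exact hyS.2 (h ▸ hPS)
  · exact hyS.2 (hPc ⟨h, hyc⟩)

theorem exists_mem_Ico_of_partition {n : ℕ} (t : Fin (n + 1) → ℝ) {x : ℝ}
    (hx : x ∈ Set.Ico (t 0) (t (Fin.last n))) :
    ∃ i : Fin n, x ∈ Set.Ico (t i.castSucc) (t i.succ) := by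
  by_contra! h
  have hle : ∀ i, t i ≤ x := fun i =>
    Fin.induction hx.1 (fun j hj => not_lt.1 fun hlt => h j ⟨hj, hlt⟩) i
  exact (hle _).not_gt hx.2

theorem exists_mem_Ioc_of_partition {n : ℕ} (t : Fin (n + 1) → ℝ) {x : ℝ}
    (hx : x ∈ Set.Ioc (t 0) (t (Fin.last n))) :
    ∃ i : Fin n, x ∈ Set.Ioc (t i.castSucc) (t i.succ) := by
  by_contra! h
  have hlt : ∀ i, t i < x := fun i =>
    Fin.induction hx.1 (fun j hj => not_le.1 fun hle => h j ⟨hj, hle⟩) i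
  exact (hlt _).not_ge hx.2

section PLInt

variable {f : ℝ → ℝ} {L : ℝ}

theorem hasSlope_right_of_affine {a b x : ℝ} {m : ℤ}
    (h : ∀ s ∈ Set.Icc a b, f s = f a + m * (s - a)) (hx : x ∈ Set.Ico a b) :
    HasSlope f x 1 m := by
  refine hasSlope_iff_exists.2 ⟨b - x, sub_pos.2 hx.2, fun u hu => ?_⟩
  rw [h x ⟨hx.1, hx.2.le⟩, h (x + 1 * u) ⟨by linarith [hx.1, hu.1], by linarith [hu.2]⟩]
  ring

theorem hasSlope_left_of_affine {a b x : ℝ} {m : ℤ}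
    (h : ∀ s ∈ Set.Icc a b, f s = f a + m * (s - a)) (hx : x ∈ Set.Ioc a b) :
    HasSlope f x (-1) (-m) := by
  refine hasSlope_iff_exists.2 ⟨x - a, sub_pos.2 hx.1, fun u hu => ?_⟩
  rw [h x ⟨hx.1.le, hx.2⟩, h (x + -1 * u) ⟨by linarith [hu.2], by linarith [hx.2, hu.1]⟩]
  push_cast
  ring

theorem PLInt.exists_hasSlope_right (h : PLInt f L) {x : ℝ} (hx : x ∈ Set.Ico 0 L) :
    ∃ m, HasSlope f x 1 m := by
  obtain ⟨n, t, ht0, htL, -, hlin⟩ := h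
  obtain ⟨i, hi⟩ := exists_mem_Ico_of_partition t (by rwa [ht0, htL])
  exact (hlin i).imp fun m hm => hasSlope_right_of_affine hm hi

theorem PLInt.exists_hasSlope_left (h : PLInt f L) {x : ℝ} (hx : x ∈ Set.Ioc 0 L) :
    ∃ m, HasSlope f x (-1) m := by
  obtain ⟨n, t, ht0, htL, -, hlin⟩ := h
  obtain ⟨i, hi⟩ := exists_mem_Ioc_of_partition t (by rwa [ht0, htL])
  obtain ⟨m, hm⟩ := hlin i
  exact ⟨-m, hasSlope_left_of_affine hm hi⟩

theorem plInt_zero : PLInt f 0 :=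
  ⟨0, fun _ => 0, rfl, rfl, fun i j h => absurd h (by omega), fun i => i.elim0⟩

theorem PLInt.extend {x y : ℝ} {m : ℤ} (h : PLInt f x) (hxy : x < y)
    (hm : ∀ s ∈ Set.Icc x y, f s = f x + m * (s - x)) : PLInt f y := by
  obtain ⟨n, t, ht0, htx, hmono, hlin⟩ := h
  refine ⟨n + 1, Fin.snoc t y, ?_, Fin.snoc_last _ _, ?_, fun i => ?_⟩
  · rw [← Fin.castSucc_zero, Fin.snoc_castSucc, ht0]
  · refine Fin.strictMono_iff_lt_succ.2 fun i => ?_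
    refine Fin.lastCases ?_ (fun j => ?_) i
    · rw [Fin.snoc_castSucc, Fin.succ_last, Fin.snoc_last, htx]
      exact hxy
    · rw [Fin.snoc_castSucc, Fin.succ_castSucc, Fin.snoc_castSucc]
      exact hmono Fin.castSucc_lt_succ
  · refine Fin.lastCases ⟨m, ?_⟩ (fun j => ?_) i
    · rwa [Fin.snoc_castSucc, Fin.succ_last, Fin.snoc_last, htx]
    · rw [Fin.snoc_castSucc, Fin.succ_castSucc, Fin.snoc_castSucc]
      exact hlin j

theorem HasSlope.exists_affine_right {x : ℝ} {m : ℤ} (h : HasSlope f x 1 m) :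
    ∃ c > x, ∀ s ∈ Set.Icc x c, f s = f x + m * (s - x) := by
  obtain ⟨ε, hε, h⟩ := hasSlope_iff_exists.1 h
  refine ⟨x + ε, by linarith, fun s hs => ?_⟩
  simpa using h (s - x) ⟨sub_nonneg.2 hs.1, by linarith [hs.2]⟩

theorem HasSlope.exists_affine_left {x : ℝ} {m : ℤ} (h : HasSlope f x (-1) m) :
    ∃ c < x, ∀ s ∈ Set.Icc c x, f s = f x + m * (x - s) := by
  obtain ⟨ε, hε, h⟩ := hasSlope_iff_exists.1 h
  refine ⟨x - ε, by linarith, fun s hs => ?_⟩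
  simpa using h (x - s) ⟨sub_nonneg.2 hs.2, by linarith [hs.1]⟩

theorem plInt_of_hasSlope (hL : 0 ≤ L) (hright : ∀ x ∈ Set.Ico 0 L, ∃ m, HasSlope f x 1 m)
    (hleft : ∀ x ∈ Set.Ioc 0 L, ∃ m, HasSlope f x (-1) m) : PLInt f L := by
  refine real_induction plInt_zero (fun x hx hP => ?_) (fun x hx hP => ?_) L ⟨hL, le_rfl⟩
  · obtain ⟨m, hm⟩ := hright x hx
    obtain ⟨c, hc, h⟩ := hm.exists_affine_right
    refine (nhdsGT_basis x).eventually_iff.2 ⟨c, hc, fun y hy => ?_⟩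
    exact hP.extend hy.1 fun s hs => h s ⟨hs.1, hs.2.trans hy.2.le⟩
  · obtain ⟨m, hm⟩ := hleft x hx
    obtain ⟨c, hc, h⟩ := hm.exists_affine_left
    have hcx : max 0 c < x := max_lt hx.1 hc
    refine (hP (max 0 c) ⟨le_max_left _ _, hcx⟩).extend (m := -m) hcx fun s hs => ?_
    rw [h s ⟨(le_max_right _ _).trans hs.1, hs.2⟩, h _ ⟨le_max_right _ _, hcx.le⟩]
    push_cast
    ring

theorem plInt_of_forall_hasSlope (hL : 0 ≤ L) (h : ∀ x b, ∃ m, HasSlope f x (dirSign b) m) :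
    PLInt f L :=
  plInt_of_hasSlope hL (fun x _ => h x true) fun x _ => h x false

/-- The failure of `f` to be affine at `x`: the sum of its two outgoing slopes. -/
noncomputable def bend (f : ℝ → ℝ) (x : ℝ) : ℤ := slopeR f x + slopeL f x

theorem PLInt.affine_of_bend_eq_zero (h : PLInt f L) (hbend : ∀ x ∈ Set.Ioo 0 L, bend f x = 0) :
    ∃ m : ℤ, ∀ s ∈ Set.Icc 0 L, f s = f 0 + m * s := by
  obtain ⟨n, t, ht0, htL, hmono, hlin⟩ := h
  suffices ∀ i, ∃ m : ℤ, ∀ s ∈ Set.Icc 0 (t i), f s = f 0 + m * s by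
    simpa only [htL] using this (Fin.last n)
  refine fun i => Fin.induction ⟨0, fun s hs => ?_⟩ (fun j hj => ?_) i
  · rw [ht0] at hs
    simp [le_antisymm hs.2 hs.1]
  · obtain ⟨m, hm⟩ := hj
    obtain ⟨k, hk⟩ := hlin j
    have hlt : t j.castSucc < t j.succ := hmono Fin.castSucc_lt_succ
    have h0 : 0 ≤ t j.castSucc := ht0 ▸ hmono.monotone (Fin.zero_le _)
    refine ⟨k, fun s hs => ?_⟩
    rcases h0.eq_or_lt with h0 | h0
    · rw [← h0] at hk
      simpa using hk s hs
    have hkm : k = m := by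
      have hR : slopeR f (t j.castSucc) = k :=
        (hasSlope_right_of_affine hk ⟨le_rfl, hlt⟩).slopeR_eq
      have hL : slopeL f (t j.castSucc) = -m :=
        (hasSlope_left_of_affine (a := 0) (by simpa using hm) ⟨h0, le_rfl⟩).slopeL_eq
      have h1 : bend f (t j.castSucc) = 0 :=
        hbend _ ⟨h0, htL ▸ hlt.trans_le (hmono.monotone (Fin.le_last _))⟩
      unfold bend at h1
      omega
    rcases le_total s (t j.castSucc) with hs' | hs'
    · rw [hkm, hm s ⟨hs.1, hs'⟩]
    · rw [hk s ⟨hs', hs.2⟩, hm _ ⟨h0.le, le_rfl⟩, hkm]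
      ring

theorem PLInt.exists_finset_sum_bend (h : PLInt f L) (hL : 0 < L) :
    ∃ S : Finset ℝ, (∀ x ∈ S, x ∈ Set.Ioo 0 L) ∧ (∀ x ∈ Set.Ioo 0 L, x ∉ S → bend f x = 0) ∧
      slopeR f 0 + slopeL f L + ∑ x ∈ S, bend f x = 0 := by
  obtain ⟨n, t, ht0, htL, hmono, hlin⟩ := h
  obtain ⟨n, rfl⟩ : ∃ k, n = k + 1 := Nat.exists_eq_succ_of_ne_zero fun hn => by
    subst hn
    exact hL.ne (ht0.symm.trans htL)
  choose m hm using hlin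
  have hR : ∀ i : Fin (n + 1), slopeR f (t i.castSucc) = m i := fun i =>
    (hasSlope_right_of_affine (hm i) ⟨le_rfl, hmono Fin.castSucc_lt_succ⟩).slopeR_eq
  have hLeft : ∀ i : Fin (n + 1), slopeL f (t i.succ) = -m i := fun i =>
    (hasSlope_left_of_affine (hm i) ⟨hmono Fin.castSucc_lt_succ, le_rfl⟩).slopeL_eq
  have hinj : Function.Injective fun i : Fin n => t i.succ.castSucc := fun i j hij =>
    Fin.succ_injective _ (Fin.castSucc_injective _ (hmono.injective hij))
  refine ⟨Finset.univ.image fun i : Fin n => t i.succ.castSucc, ?_, fun x hx hxS => ?_, ?_⟩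
  · simp only [Finset.mem_image, Finset.mem_univ, true_and, forall_exists_index,
      forall_apply_eq_imp_iff]
    exact fun i => ⟨ht0 ▸ hmono (Fin.succ_pos i), htL ▸ hmono (Fin.castSucc_lt_last _)⟩
  · obtain ⟨i, hi⟩ := exists_mem_Ico_of_partition t
      (by rw [ht0, htL]; exact ⟨hx.1.le, hx.2⟩ : x ∈ Set.Ico (t 0) (t (Fin.last (n + 1))))
    have hne : t i.castSucc ≠ x := fun h => by
      rcases Fin.eq_zero_or_eq_succ i with rfl | ⟨j, rfl⟩
      · exact hx.1.ne (by rw [← h, Fin.castSucc_zero, ht0])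
      · exact hxS (Finset.mem_image.2 ⟨j, Finset.mem_univ _, h⟩)
    rw [bend, (hasSlope_right_of_affine (hm i) hi).slopeR_eq,
      (hasSlope_left_of_affine (hm i) ⟨hi.1.lt_of_ne hne, hi.2.le⟩).slopeL_eq, add_neg_cancel]
  · have htelescope : ∑ i, slopeR f (t (Fin.castSucc i)) + ∑ i, slopeL f (t (Fin.succ i)) = 0 := by
      rw [← Finset.sum_add_distrib]
      exact Finset.sum_eq_zero fun i _ => by rw [hR, hLeft, add_neg_cancel]
    rw [Fin.sum_univ_succ, Fin.sum_univ_castSucc (fun i => slopeL f (t (Fin.succ i))),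
      Fin.castSucc_zero, ht0, Fin.succ_last, htL] at htelescope
    rw [Finset.sum_image hinj.injOn]
    simp only [bend, Finset.sum_add_distrib]
    simp only [Fin.succ_castSucc] at htelescope
    linarith

end PLInt

end MetricGraphModel

namespace MetricGraphModel

variable {Γ : MetricGraphModel}

/-! ### Principal divisors through tangent directions -/

/-- The oriented edges leaving `v`; a loop at `v` contributes both of its orientations. -/
noncomputable def darts (Γ : MetricGraphModel) (v : Γ.V) : Finset (Γ.E × Bool) :=
  Finset.univ.filter fun x => Γ.dSrc x = v

theorem mem_darts {v : Γ.V} {x : Γ.E × Bool} : x ∈ Γ.darts v ↔ Γ.dSrc x = v := by simp [darts]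

theorem sum_darts {M : Type*} [AddCommMonoid M] (v : Γ.V) (h : Γ.E × Bool → M) :
    ∑ x ∈ Γ.darts v, h x = ∑ e, ((if Γ.src e = v then h (e, true) else 0) +
      (if Γ.tgt e = v then h (e, false) else 0)) := by
  rw [darts, Finset.sum_filter, Fintype.sum_prod_type]
  simp [dSrc]

/-- The tangent directions of the metric graph at the point `p`, each given by an edge and an
orientation of it. -/
noncomputable def tangents : Γ.Pt → Finset (Γ.E × Bool)
  | Sum.inl v => Γ.darts v
  | Sum.inr q => {(q.1, true), (q.1, false)}

/-- The parameter of `p` on the edge underlying the tangent direction `x` at `p`. -/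
noncomputable def tangentParam : Γ.Pt → Γ.E × Bool → ℝ
  | Sum.inl _, x => if x.2 then 0 else Γ.len x.1
  | Sum.inr q, _ => q.2.1

namespace RationalFunction

theorem exists_hasSlope (F : RationalFunction Γ) {p : Γ.Pt} {x : Γ.E × Bool}
    (hx : x ∈ tangents p) : ∃ m, HasSlope (F.eFun x.1) (tangentParam p x) (dirSign x.2) m := by
  rcases p with v | ⟨e, s, h0, hL⟩
  · obtain ⟨e, b⟩ := x
    cases b
    · exact (F.pl e).exists_hasSlope_left ⟨Γ.len_pos e, le_rfl⟩
    · exact (F.pl e).exists_hasSlope_right ⟨le_rfl, Γ.len_pos e⟩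
  · have hx : x = (e, true) ∨ x = (e, false) := by simpa [tangents] using hx
    rcases hx with rfl | rfl
    · exact (F.pl e).exists_hasSlope_right ⟨h0.le, hL⟩
    · exact (F.pl e).exists_hasSlope_left ⟨h0, hL.le⟩

theorem eFun_tangentParam (F : RationalFunction Γ) {p : Γ.Pt} {x : Γ.E × Bool}
    (hx : x ∈ tangents p) : F.eFun x.1 (tangentParam p x) = ratEval F p := by
  rcases p with v | ⟨e, s⟩
  · obtain ⟨e, b⟩ := x
    have hx : Γ.dSrc (e, b) = v := mem_darts.1 hx
    subst hx
    cases b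
    · exact F.tgtVal e
    · exact F.srcVal e
  · have hx : x = (e, true) ∨ x = (e, false) := by simpa [tangents] using hx
    rcases hx with rfl | rfl <;> rfl

/-- The outgoing slope of `F` at `p` in the tangent direction `x`. -/
noncomputable def slopeAt (F : RationalFunction Γ) (p : Γ.Pt) (x : Γ.E × Bool) : ℤ :=
  outSlope (F.eFun x.1) (tangentParam p x) x.2

theorem hasSlope_slopeAt (F : RationalFunction Γ) {p : Γ.Pt} {x : Γ.E × Bool}
    (hx : x ∈ tangents p) :
    HasSlope (F.eFun x.1) (tangentParam p x) (dirSign x.2) (F.slopeAt p x) := by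
  obtain ⟨m, hm⟩ := F.exists_hasSlope hx
  rwa [slopeAt, hm.outSlope_eq]

end RationalFunction

theorem ratDiv_eq_sum_tangents (F : RationalFunction Γ) (p : Γ.Pt) :
    ratDiv F p = ∑ x ∈ tangents p, F.slopeAt p x := by
  rcases p with v | q
  · exact (sum_darts v fun x => outSlope (F.eFun x.1) (if x.2 then 0 else Γ.len x.1) x.2).symm
  · rw [tangents, Finset.sum_pair (by simp)]
    rfl

namespace RationalFunction

/-- Pointwise sum. -/
def add (F G : RationalFunction Γ) : RationalFunction Γ where
  vVal v := F.vVal v + G.vVal v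
  eFun e s := F.eFun e s + G.eFun e s
  pl e := plInt_of_hasSlope (Γ.len_pos e).le
    (fun _ hx => by
      obtain ⟨m, hm⟩ := (F.pl e).exists_hasSlope_right hx
      obtain ⟨n, hn⟩ := (G.pl e).exists_hasSlope_right hx
      exact ⟨_, hm.add hn⟩)
    (fun _ hx => by
      obtain ⟨m, hm⟩ := (F.pl e).exists_hasSlope_left hx
      obtain ⟨n, hn⟩ := (G.pl e).exists_hasSlope_left hx
      exact ⟨_, hm.add hn⟩)
  srcVal e := by rw [F.srcVal, G.srcVal]
  tgtVal e := by rw [F.tgtVal, G.tgtVal]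

/-- Pointwise negation. -/
def neg (F : RationalFunction Γ) : RationalFunction Γ where
  vVal v := -F.vVal v
  eFun e s := -F.eFun e s
  pl e := plInt_of_hasSlope (Γ.len_pos e).le
    (fun _ hx => ((F.pl e).exists_hasSlope_right hx).elim fun _ hm => ⟨_, hm.neg⟩)
    (fun _ hx => ((F.pl e).exists_hasSlope_left hx).elim fun _ hm => ⟨_, hm.neg⟩)
  srcVal e := by rw [F.srcVal]
  tgtVal e := by rw [F.tgtVal]

/-- The truncation `max F c` at the level `c`. -/
noncomputable def truncate (F : RationalFunction Γ) (c : ℝ) : RationalFunction Γ where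
  vVal v := max (F.vVal v) c
  eFun e s := max (F.eFun e s) c
  pl e := plInt_of_hasSlope (Γ.len_pos e).le
    (fun _ hx => ((F.pl e).exists_hasSlope_right hx).elim fun _ hm => hm.exists_max)
    (fun _ hx => ((F.pl e).exists_hasSlope_left hx).elim fun _ hm => hm.exists_max)
  srcVal e := by rw [F.srcVal]
  tgtVal e := by rw [F.tgtVal]

end RationalFunction

theorem ratDiv_add (F G : RationalFunction Γ) (p : Γ.Pt) :
    ratDiv (F.add G) p = ratDiv F p + ratDiv G p := by
  simp only [ratDiv_eq_sum_tangents, ← Finset.sum_add_distrib]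
  exact Finset.sum_congr rfl fun x hx =>
    ((F.hasSlope_slopeAt hx).add (G.hasSlope_slopeAt hx)).outSlope_eq

theorem ratDiv_neg (F : RationalFunction Γ) (p : Γ.Pt) : ratDiv F.neg p = -ratDiv F p := by
  simp only [ratDiv_eq_sum_tangents, ← Finset.sum_neg_distrib]
  exact Finset.sum_congr rfl fun x hx => (F.hasSlope_slopeAt hx).neg.outSlope_eq

section Truncate

variable {F : RationalFunction Γ} {c : ℝ} {p : Γ.Pt}

theorem ratDiv_truncate_of_lt (h : c < ratEval F p) : ratDiv (F.truncate c) p = ratDiv F p := by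
  simp only [ratDiv_eq_sum_tangents]
  exact Finset.sum_congr rfl fun x hx =>
    ((F.hasSlope_slopeAt hx).max_of_lt (by rwa [F.eFun_tangentParam hx])).outSlope_eq

theorem slopeAt_truncate_of_eq {x : Γ.E × Bool} (hx : x ∈ tangents p) (h : ratEval F p = c) :
    (F.truncate c).slopeAt p x = max (F.slopeAt p x) 0 :=
  ((F.hasSlope_slopeAt hx).max_of_eq (by rwa [F.eFun_tangentParam hx])).outSlope_eq

theorem ratDiv_truncate_nonneg (h : ratEval F p ≤ c) : 0 ≤ ratDiv (F.truncate c) p := by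
  rw [ratDiv_eq_sum_tangents]
  refine Finset.sum_nonneg fun x hx => ?_
  rcases h.lt_or_eq with h | h
  · exact ((F.hasSlope_slopeAt hx).max_of_gt
      (by rwa [F.eFun_tangentParam hx])).outSlope_eq.symm.le
  · exact (slopeAt_truncate_of_eq hx h).symm ▸ le_max_right _ _

theorem ratDiv_truncate_pos {x : Γ.E × Bool} (hx : x ∈ tangents p) (hpos : 0 < F.slopeAt p x) :
    0 < ratDiv (F.truncate (ratEval F p)) p := by
  rw [ratDiv_eq_sum_tangents]
  refine Finset.sum_pos' (fun y hy => ?_) ⟨x, hx, ?_⟩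
  · exact (slopeAt_truncate_of_eq hy rfl).symm ▸ le_max_right _ _
  · exact (slopeAt_truncate_of_eq hx rfl).symm ▸ lt_max_of_lt_left hpos

end Truncate

/-! ### Functions that are affine on every edge -/

/-- A function on the vertices whose affine extension to every edge has an integer slope. -/
structure EdgewiseAffine (Γ : MetricGraphModel) where
  val : Γ.V → ℝ
  slope : Γ.E → ℤ
  val_sub_val : ∀ e, val (Γ.tgt e) - val (Γ.src e) = slope e * Γ.len e

namespace EdgewiseAffine

/-- The slope along an oriented edge. -/
def dartSlope (g : EdgewiseAffine Γ) (x : Γ.E × Bool) : ℤ :=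
  if x.2 then g.slope x.1 else -g.slope x.1

theorem val_dTgt_sub_val_dSrc (g : EdgewiseAffine Γ) (x : Γ.E × Bool) :
    g.val (Γ.dTgt x) - g.val (Γ.dSrc x) = g.dartSlope x * Γ.len x.1 := by
  obtain ⟨e, b⟩ := x
  have h := g.val_sub_val e
  cases b
  · simp only [dTgt, dSrc, dartSlope, Bool.false_eq_true, if_false]
    push_cast
    linarith
  · exact h

/-- The divisor of the function, as a function on the vertices. -/
noncomputable def vertexDiv (g : EdgewiseAffine Γ) (v : Γ.V) : ℤ :=
  ∑ x ∈ Γ.darts v, g.dartSlope x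

/-- The function as a rational function on the metric graph. -/
def toRational (g : EdgewiseAffine Γ) : RationalFunction Γ where
  vVal := g.val
  eFun e s := g.slope e * s + g.val (Γ.src e)
  pl e := plInt_of_forall_hasSlope (Γ.len_pos e).le fun x b => by
    refine ⟨if b then g.slope e else -g.slope e, hasSlope_affine ?_⟩
    cases b <;> simp
  srcVal e := by ring
  tgtVal e := by linarith [g.val_sub_val e]

theorem slopeAt_toRational (g : EdgewiseAffine Γ) (p : Γ.Pt) (x : Γ.E × Bool) :
    g.toRational.slopeAt p x = g.dartSlope x := by
  refine (hasSlope_affine ?_).outSlope_eq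
  obtain ⟨e, b⟩ := x
  cases b <;> simp [dartSlope]

theorem ratDiv_toRational_inl (g : EdgewiseAffine Γ) (v : Γ.V) :
    ratDiv g.toRational (Sum.inl v) = g.vertexDiv v := by
  rw [ratDiv_eq_sum_tangents]
  exact Finset.sum_congr rfl fun x _ => g.slopeAt_toRational _ x

theorem ratDiv_toRational_inr (g : EdgewiseAffine Γ)
    (q : Σ e : Γ.E, {t : ℝ // 0 < t ∧ t < Γ.len e}) :
    ratDiv g.toRational (Sum.inr q) = 0 := by
  rw [ratDiv_eq_sum_tangents, tangents, Finset.sum_pair (by simp)]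
  simp [slopeAt_toRational, dartSlope]

theorem exists_of_bend_eq_zero (F : RationalFunction Γ) (hF : ∀ q, ratDiv F (Sum.inr q) = 0) :
    ∃ g : EdgewiseAffine Γ, g.val = F.vVal ∧ ∀ v, g.vertexDiv v = ratDiv F (Sum.inl v) := by
  have haff : ∀ e, ∃ m : ℤ, ∀ s ∈ Set.Icc 0 (Γ.len e), F.eFun e s = F.eFun e 0 + m * s :=
    fun e => (F.pl e).affine_of_bend_eq_zero fun x hx => hF ⟨e, x, hx⟩
  choose m hm using haff
  have hval : ∀ e, F.vVal (Γ.tgt e) - F.vVal (Γ.src e) = m e * Γ.len e := fun e => by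
    rw [← F.srcVal, ← F.tgtVal, hm e _ ⟨(Γ.len_pos e).le, le_rfl⟩]
    ring
  refine ⟨⟨F.vVal, m, hval⟩, rfl, fun v => ?_⟩
  rw [ratDiv_eq_sum_tangents]
  refine Finset.sum_congr rfl fun x _ => (HasSlope.outSlope_eq ?_).symm
  obtain ⟨e, b⟩ := x
  have haff : ∀ s ∈ Set.Icc 0 (Γ.len e), F.eFun e s = F.eFun e 0 + m e * (s - 0) := by
    simpa using hm e
  cases b
  · exact hasSlope_left_of_affine haff ⟨Γ.len_pos e, le_rfl⟩
  · exact hasSlope_right_of_affine haff ⟨le_rfl, Γ.len_pos e⟩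

end EdgewiseAffine

/-! ### Linear equivalence -/

namespace LinEquiv

variable {D D' D'' : Divisor Γ}

theorem refl (D : Divisor Γ) : LinEquiv Γ D D := by
  let zero : EdgewiseAffine Γ := ⟨fun _ => 0, fun _ => 0, fun _ => by simp⟩
  refine ⟨zero.toRational, fun p => ?_⟩
  rw [ratDiv_eq_sum_tangents, Finset.sum_eq_zero fun x _ => ?_, add_zero]
  rw [zero.slopeAt_toRational]
  simp [EdgewiseAffine.dartSlope, zero]

theorem symm (h : LinEquiv Γ D D') : LinEquiv Γ D' D := by
  obtain ⟨F, hF⟩ := h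
  exact ⟨F.neg, fun p => by rw [ratDiv_neg, hF]; ring⟩

theorem trans (h : LinEquiv Γ D D') (h' : LinEquiv Γ D' D'') : LinEquiv Γ D D'' := by
  obtain ⟨F, hF⟩ := h
  obtain ⟨G, hG⟩ := h'
  exact ⟨F.add G, fun p => by rw [ratDiv_add, hF, hG]; ring⟩

theorem add_right (h : LinEquiv Γ D D') (A : Divisor Γ) :
    LinEquiv Γ (fun p => D p + A p) fun p => D' p + A p := by
  obtain ⟨F, hF⟩ := h
  exact ⟨F, fun p => by simp only [hF]; ring⟩

end LinEquiv

/-! ### The degree of a principal divisor -/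

/-- The divisor supported on the vertices with the given multiplicities. -/
def vertexSupported (m : Γ.V → ℤ) : Divisor Γ
  | Sum.inl v => m v
  | Sum.inr _ => 0

theorem vertexSupported_divFinSupp (m : Γ.V → ℤ) : DivFinSupp (vertexSupported m) := by
  refine (Set.finite_range Sum.inl).subset ?_
  rintro (v | q) h
  · exact ⟨v, rfl⟩
  · exact absurd rfl h

theorem divDegree_vertexSupported (m : Γ.V → ℤ) : divDegree (vertexSupported m) = ∑ v, m v := by
  rw [divDegree, finsum_eq_sum_of_support_subset (s := Finset.univ.disjSum ∅)]
  · simp [vertexSupported]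
  · rintro (v | q) h
    · simp
    · exact absurd rfl h

theorem exists_finset_sum_ratDiv_eq_zero (F : RationalFunction Γ) :
    ∃ T : Finset Γ.Pt, Function.support (ratDiv F) ⊆ T ∧ ∑ p ∈ T, ratDiv F p = 0 := by
  choose S hS hbend hsum using fun e => (F.pl e).exists_finset_sum_bend (Γ.len_pos e)
  refine ⟨Finset.univ.disjSum (Finset.univ.sigma fun e => (S e).subtype _), ?_, ?_⟩
  · rintro (v | ⟨e, x, hx⟩) hp
    · simp
    · have hxS : x ∈ S e := not_imp_comm.1 (hbend e x hx) hp
      simpa using hxS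
  · have hinner : ∀ e, ∑ x ∈ (S e).subtype (fun t => 0 < t ∧ t < Γ.len e),
        ratDiv F (Sum.inr ⟨e, x⟩) = ∑ x ∈ S e, bend (F.eFun e) x := fun e =>
      Finset.sum_subtype_of_mem (bend (F.eFun e)) (hS e)
    have hends : ∑ v, ratDiv F (Sum.inl v) =
        ∑ e, (slopeR (F.eFun e) 0 + slopeL (F.eFun e) (Γ.len e)) := by
      simp only [ratDiv]
      rw [Finset.sum_comm]
      simp only [Finset.sum_add_distrib, Finset.sum_ite_eq, Finset.mem_univ, if_true]
    rw [Finset.sum_disjSum, Finset.sum_sigma, Finset.sum_congr rfl fun e _ => hinner e, hends,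
      ← Finset.sum_add_distrib]
    exact Finset.sum_eq_zero fun e _ => hsum e

theorem ratDiv_divFinSupp (F : RationalFunction Γ) : DivFinSupp (ratDiv F) := by
  obtain ⟨T, hT, -⟩ := exists_finset_sum_ratDiv_eq_zero F
  exact T.finite_toSet.subset hT

theorem divDegree_ratDiv (F : RationalFunction Γ) : divDegree (ratDiv F) = 0 := by
  obtain ⟨T, hT, hsum⟩ := exists_finset_sum_ratDiv_eq_zero F
  rw [divDegree, finsum_eq_sum_of_support_subset _ hT, hsum]

section Degree

variable {D D' : Divisor Γ}

theorem DivFinSupp.add (hD : DivFinSupp D) (hD' : DivFinSupp D') :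
    DivFinSupp fun p => D p + D' p :=
  (hD.union hD').subset (Function.support_add D D')

theorem DivFinSupp.sub (hD : DivFinSupp D) (hD' : DivFinSupp D') :
    DivFinSupp fun p => D p - D' p :=
  (hD.union hD').subset (Function.support_sub D D')

theorem divDegree_add (hD : DivFinSupp D) (hD' : DivFinSupp D') :
    divDegree (fun p => D p + D' p) = divDegree D + divDegree D' :=
  finsum_add_distrib hD hD'

theorem divDegree_sub (hD : DivFinSupp D) (hD' : DivFinSupp D') :
    divDegree (fun p => D p - D' p) = divDegree D - divDegree D' :=
  finsum_sub_distrib hD hD'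

theorem LinEquiv.divFinSupp (h : LinEquiv Γ D D') (hD : DivFinSupp D) : DivFinSupp D' := by
  obtain ⟨F, hF⟩ := h.symm
  rw [show D' = fun p => D p + ratDiv F p from funext hF]
  exact hD.add (ratDiv_divFinSupp F)

theorem LinEquiv.divDegree_eq (h : LinEquiv Γ D D') (hD : DivFinSupp D) :
    divDegree D' = divDegree D := by
  obtain ⟨F, hF⟩ := h.symm
  rw [show D' = fun p => D p + ratDiv F p from funext hF, divDegree_add hD (ratDiv_divFinSupp F),
    divDegree_ratDiv, add_zero]

end Degree

end MetricGraphModel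

namespace MetricGraphModel

variable {Γ : MetricGraphModel}

/-! ### Chips on an edge -/

/-- The point of the edge `e` at the parameter `s`, clamped to the ends of the edge. -/
noncomputable def pointOn (Γ : MetricGraphModel) (e : Γ.E) (s : ℝ) : Γ.Pt :=
  if h : 0 < s ∧ s < Γ.len e then Sum.inr ⟨e, s, h⟩
  else if s ≤ 0 then Sum.inl (Γ.src e) else Sum.inl (Γ.tgt e)

theorem pointOn_zero (e : Γ.E) : Γ.pointOn e 0 = Sum.inl (Γ.src e) := by simp [pointOn]

theorem pointOn_len (e : Γ.E) : Γ.pointOn e (Γ.len e) = Sum.inl (Γ.tgt e) := by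
  simp [pointOn, (Γ.len_pos e).not_ge]

theorem pointOn_of_mem {e : Γ.E} {s : ℝ} (h : 0 < s ∧ s < Γ.len e) :
    Γ.pointOn e s = Sum.inr ⟨e, s, h⟩ := dif_pos h

theorem unitDiv_self (p : Γ.Pt) : unitDiv Γ p p = 1 := if_pos rfl

theorem unitDiv_of_ne {p q : Γ.Pt} (h : q ≠ p) : unitDiv Γ p q = 0 := if_neg h

theorem unitDiv_nonneg (p : Γ.Pt) : DivEffective (unitDiv Γ p) := fun q => by
  unfold unitDiv
  split_ifs <;> decide

theorem unitDiv_divFinSupp (p : Γ.Pt) : DivFinSupp (unitDiv Γ p) :=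
  (Set.finite_singleton p).subset fun _ hq => not_imp_comm.1 unitDiv_of_ne hq

theorem divDegree_unitDiv (p : Γ.Pt) : divDegree (unitDiv Γ p) = 1 := by
  rw [divDegree, finsum_eq_single _ p fun _ hq => unitDiv_of_ne hq, unitDiv_self]

theorem unitDiv_pointOn_inl (e : Γ.E) (s : ℝ) (v : Γ.V) :
    unitDiv Γ (Γ.pointOn e s) (Sum.inl v) =
      (if Γ.src e = v then (if s ≤ 0 then 1 else 0) else 0) +
      (if Γ.tgt e = v then (if s < Γ.len e then 0 else 1) else 0) := by
  have hL := Γ.len_pos e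
  unfold unitDiv pointOn
  by_cases h0 : s ≤ 0
  · simp [h0, h0.trans_lt hL, h0.not_gt, eq_comm]
  · by_cases h1 : s < Γ.len e
    · simp [h0, h1, not_le.1 h0]
    · simp [h0, h1, eq_comm]

theorem unitDiv_pointOn_inr (e : Γ.E) (s : ℝ) (q : Σ e : Γ.E, {t : ℝ // 0 < t ∧ t < Γ.len e}) :
    unitDiv Γ (Γ.pointOn e s) (Sum.inr q) = if q.1 = e ∧ q.2.1 = s then 1 else 0 := by
  obtain ⟨e', t, ht⟩ := q
  rw [unitDiv]
  refine if_congr ?_ rfl rfl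
  by_cases hs : 0 < s ∧ s < Γ.len e
  · rw [pointOn_of_mem hs, Sum.inr.injEq]
    constructor
    · rintro ⟨⟩
      exact ⟨rfl, rfl⟩
    · rintro ⟨rfl, rfl⟩
      rfl
  · have hne : ¬(e' = e ∧ t = s) := by
      rintro ⟨rfl, rfl⟩
      exact hs ht
    rw [pointOn, dif_neg hs]
    split_ifs <;> simp_all

namespace RationalFunction

variable {e : Γ.E} {f : ℝ → ℝ}

/-- The function equal to `f` on the edge `e` and vanishing elsewhere. -/
noncomputable def ofEdge (e : Γ.E) (f : ℝ → ℝ) (hf : PLInt f (Γ.len e)) (h0 : f 0 = 0)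
    (hL : f (Γ.len e) = 0) : RationalFunction Γ where
  vVal _ := 0
  eFun e' := if e' = e then f else fun _ => 0
  pl e' := by
    split_ifs with h
    · exact h ▸ hf
    · exact plInt_of_forall_hasSlope (Γ.len_pos e').le fun _ _ => ⟨0, hasSlope_const⟩
  srcVal e' := by split_ifs <;> simp [h0]
  tgtVal e' := by split_ifs with h <;> simp [h, hL]

variable {hf : PLInt f (Γ.len e)} {h0 : f 0 = 0} {hL : f (Γ.len e) = 0}

theorem outSlope_ofEdge_of_ne {e' : Γ.E} (h : e' ≠ e) (s : ℝ) (b : Bool) :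
    outSlope ((ofEdge e f hf h0 hL).eFun e') s b = 0 := by
  simp only [ofEdge, if_neg h]
  exact hasSlope_const.outSlope_eq

theorem ratDiv_ofEdge_inl (v : Γ.V) : ratDiv (ofEdge e f hf h0 hL) (Sum.inl v) =
    (if Γ.src e = v then slopeR f 0 else 0) +
      if Γ.tgt e = v then slopeL f (Γ.len e) else 0 := by
  refine (Finset.sum_eq_single e (fun e' _ h => ?_) (by simp)).trans (by simp [ofEdge])
  have hR := outSlope_ofEdge_of_ne (hf := hf) (h0 := h0) (hL := hL) h 0 true
  have hLeft := outSlope_ofEdge_of_ne (hf := hf) (h0 := h0) (hL := hL) h (Γ.len e') false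
  simp only [outSlope, if_true, Bool.false_eq_true, if_false] at hR hLeft
  simp [hR, hLeft]

theorem ratDiv_ofEdge_inr (q : Σ e : Γ.E, {t : ℝ // 0 < t ∧ t < Γ.len e}) :
    ratDiv (ofEdge e f hf h0 hL) (Sum.inr q) = if q.1 = e then bend f q.2.1 else 0 := by
  split_ifs with h
  · simp [ratDiv, bend, ofEdge, h]
  · exact (congr_arg₂ (· + ·) (outSlope_ofEdge_of_ne h q.2.1 true)
      (outSlope_ofEdge_of_ne h q.2.1 false)).trans (add_zero 0)

end RationalFunction

theorem hasSlope_ramp_right (a x : ℝ) :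
    HasSlope (fun x => max (x - a) 0) x 1 (if a ≤ x then 1 else 0) := by
  have h : HasSlope (fun x => x - a) x 1 1 := by
    simpa [sub_eq_add_neg] using hasSlope_affine (a := 1) (b := -a) (t := x) (d := 1) (m := 1)
  rcases lt_trichotomy a x with hx | hx | hx
  · simpa [hx.le] using h.max_of_lt (sub_pos.2 hx)
  · simpa [hx] using h.max_of_eq (sub_eq_zero.2 hx.symm)
  · simpa [hx.not_ge] using h.max_of_gt (sub_neg.2 hx)

theorem hasSlope_ramp_left (a x : ℝ) :
    HasSlope (fun x => max (x - a) 0) x (-1) (if a < x then -1 else 0) := by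
  have h : HasSlope (fun x => x - a) x (-1) (-1) := by
    simpa [sub_eq_add_neg] using hasSlope_affine (a := 1) (b := -a) (t := x) (d := -1) (m := -1)
  rcases lt_trichotomy a x with hx | hx | hx
  · simpa [hx] using h.max_of_lt (sub_pos.2 hx)
  · simpa [hx] using h.max_of_eq (sub_eq_zero.2 hx.symm)
  · simpa [hx.le.not_gt] using h.max_of_gt (sub_neg.2 hx)

/-- The trapezoidal function which is `0` outside `[a, b]`, constant on `[s, t]`, and has slopes
`1` and `-1` on `[a, s]` and `[t, b]`, for `a ≤ s ≤ t ≤ b` with `s - a = b - t`. -/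
noncomputable def bump (a s t b x : ℝ) : ℝ :=
  max (x - a) 0 + -max (x - s) 0 + -max (x - t) 0 + max (x - b) 0

section Bump

variable (a s t b x : ℝ)

theorem hasSlope_bump_right : HasSlope (bump a s t b) x 1
    ((if a ≤ x then 1 else 0) + -(if s ≤ x then 1 else 0) + -(if t ≤ x then 1 else 0) +
      if b ≤ x then 1 else 0) :=
  (((hasSlope_ramp_right a x).add (hasSlope_ramp_right s x).neg).add
    (hasSlope_ramp_right t x).neg).add (hasSlope_ramp_right b x)

theorem hasSlope_bump_left : HasSlope (bump a s t b) x (-1)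
    ((if a < x then -1 else 0) + -(if s < x then -1 else 0) + -(if t < x then -1 else 0) +
      if b < x then -1 else 0) :=
  (((hasSlope_ramp_left a x).add (hasSlope_ramp_left s x).neg).add
    (hasSlope_ramp_left t x).neg).add (hasSlope_ramp_left b x)

theorem bend_bump : bend (bump a s t b) x = (if x = a then 1 else 0) + -(if x = s then 1 else 0) +
    -(if x = t then 1 else 0) + if x = b then 1 else 0 := by
  have key : ∀ c, (if x = c then (1 : ℤ) else 0) =
      (if c ≤ x then 1 else 0) + if c < x then -1 else 0 := fun c => by
    rcases lt_trichotomy c x with h | h | h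
    · simp [h, h.le, h.ne']
    · simp [h]
    · simp [h.not_ge, h.le.not_gt, h.ne]
  rw [bend, (hasSlope_bump_right a s t b x).slopeR_eq, (hasSlope_bump_left a s t b x).slopeL_eq]
  simp only [key]
  ring

end Bump

theorem linEquiv_pointOn_pair (e : Γ.E) {a s t b : ℝ} (ha : 0 ≤ a) (has : a ≤ s) (hst : s ≤ t)
    (htb : t ≤ b) (hb : b ≤ Γ.len e) (h : s - a = b - t) :
    LinEquiv Γ (fun p => unitDiv Γ (Γ.pointOn e a) p + unitDiv Γ (Γ.pointOn e b) p)
      fun p => unitDiv Γ (Γ.pointOn e s) p + unitDiv Γ (Γ.pointOn e t) p := by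
  have hpl : PLInt (bump a s t b) (Γ.len e) :=
    plInt_of_hasSlope (Γ.len_pos e).le (fun x _ => ⟨_, hasSlope_bump_right a s t b x⟩)
      fun x _ => ⟨_, hasSlope_bump_left a s t b x⟩
  have h0 : bump a s t b 0 = 0 := by
    rw [bump, max_eq_right, max_eq_right, max_eq_right, max_eq_right] <;> linarith
  have hL : bump a s t b (Γ.len e) = 0 := by
    rw [bump, max_eq_left, max_eq_left, max_eq_left, max_eq_left] <;> linarith
  refine ⟨RationalFunction.ofEdge e (bump a s t b) hpl h0 hL, fun p => ?_⟩
  rcases p with v | q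
  · rw [RationalFunction.ratDiv_ofEdge_inl, (hasSlope_bump_right a s t b 0).slopeR_eq,
      (hasSlope_bump_left a s t b (Γ.len e)).slopeL_eq]
    simp only [unitDiv_pointOn_inl]
    split_ifs <;> simp
  · rw [RationalFunction.ratDiv_ofEdge_inr]
    simp only [unitDiv_pointOn_inr, bend_bump]
    by_cases hq : q.1 = e
    · simp only [hq, true_and, if_true]
      ring
    · simp [hq]

/-! ### Divisors of rank at least one -/

/-- `D` is equivalent to effective divisors containing any given point: this is rank at least one,
phrased without subtracting points. -/
def IsMoving (D : Divisor Γ) : Prop :=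
  ∀ p, ∃ B : Divisor Γ, DivEffective B ∧ 1 ≤ B p ∧ LinEquiv Γ D B

theorem DivEffective.sub_unitDiv {D : Divisor Γ} (hD : DivEffective D) {p : Γ.Pt} (hp : 1 ≤ D p) :
    DivEffective fun q => D q - unitDiv Γ p q := fun q => by
  by_cases hq : q = p
  · subst hq
    simpa [unitDiv_self] using hp
  · simpa [unitDiv_of_ne hq] using hD q

theorem DivEffective.add {D D' : Divisor Γ} (hD : DivEffective D) (hD' : DivEffective D') :
    DivEffective fun q => D q + D' q := fun q => add_nonneg (hD q) (hD' q)

theorem DivEffective.exists_one_le {D : Divisor Γ} (hD : DivEffective D) (h : divDegree D ≠ 0) :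
    ∃ p, 1 ≤ D p := by
  by_contra! hcon
  have hzero : D = fun _ => 0 := funext fun p => le_antisymm (by linarith [hcon p]) (hD p)
  exact h (by rw [hzero, divDegree, finsum_zero])

theorem DivEffective.eq_unitDiv {D : Divisor Γ} (hD : DivEffective D) (hfin : DivFinSupp D)
    (h : divDegree D = 1) : ∃ p, D = unitDiv Γ p := by
  obtain ⟨p, hp⟩ := hD.exists_one_le (by omega)
  refine ⟨p, funext fun q => ?_⟩
  have hrest := hD.sub_unitDiv hp
  by_contra hq
  obtain ⟨r, hr⟩ : ∃ r, D r - unitDiv Γ p r ≠ 0 := ⟨q, sub_ne_zero.2 hq⟩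
  have hpos : 0 < divDegree fun q => D q - unitDiv Γ p q :=
    (lt_of_le_of_ne (hrest r) hr.symm).trans_le
      (single_le_finsum r (hfin.sub (unitDiv_divFinSupp p)) hrest)
  rw [divDegree_sub hfin (unitDiv_divFinSupp p), h, divDegree_unitDiv] at hpos
  exact hpos.ne rfl

theorem rankGE_one_iff {D : Divisor Γ} (hD : DivFinSupp D) : RankGE Γ D 1 ↔ IsMoving D := by
  constructor
  · intro h p
    obtain ⟨B, hB, -, hDB⟩ := h (unitDiv Γ p) (unitDiv_nonneg p) (unitDiv_divFinSupp p)
      (divDegree_unitDiv p)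
    refine ⟨_, hB.add (unitDiv_nonneg p), ?_, ?_⟩
    · simpa [unitDiv_self] using hB p
    · simpa using hDB.add_right (unitDiv Γ p)
  · intro h A hA hAfin hdeg
    obtain ⟨p, rfl⟩ := hA.eq_unitDiv hAfin hdeg
    obtain ⟨B, hB, hp, hDB⟩ := h p
    refine ⟨_, hB.sub_unitDiv hp, (hDB.divFinSupp hD).sub (unitDiv_divFinSupp p), ?_⟩
    simpa [sub_eq_add_neg] using hDB.add_right fun q => -unitDiv Γ p q

/-- Divisorial `d`-gonality: some divisor of degree `d` has rank at least one. -/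
def DivisoriallyGonal (Γ : MetricGraphModel) (d : ℤ) : Prop :=
  ∃ D : Divisor Γ, DivFinSupp D ∧ divDegree D = d ∧ IsMoving D

theorem divisoriallyTrigonal_iff : DivisoriallyTrigonal Γ ↔ Γ.DivisoriallyGonal 3 :=
  exists_congr fun _ => and_congr_right fun hD => and_congr_right fun _ => rankGE_one_iff hD

theorem exists_linEquiv_pointOn {B : Divisor Γ} (hB : DivEffective B) {e : Γ.E}
    (hne : Γ.src e ≠ Γ.tgt e) (hsrc : 1 ≤ B (Sum.inl (Γ.src e)))
    (htgt : 1 ≤ B (Sum.inl (Γ.tgt e))) {x : ℝ} (h0 : 0 ≤ x) (hL : x ≤ Γ.len e) :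
    ∃ B', DivEffective B' ∧ 1 ≤ B' (Γ.pointOn e x) ∧ LinEquiv Γ B B' := by
  obtain ⟨s, t, hs, hst, ht, heq, hx⟩ : ∃ s t, 0 ≤ s ∧ s ≤ t ∧ t ≤ Γ.len e ∧
      s - 0 = Γ.len e - t ∧ (s = x ∨ t = x) := by
    rcases le_total x (Γ.len e - x) with h | h
    · exact ⟨x, Γ.len e - x, h0, h, by linarith, by ring, Or.inl rfl⟩
    · exact ⟨Γ.len e - x, x, by linarith, h, hL, by ring, Or.inr rfl⟩
  let C : Divisor Γ := fun q => B q - unitDiv Γ (Sum.inl (Γ.src e)) q -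
    unitDiv Γ (Sum.inl (Γ.tgt e)) q
  have hC : DivEffective C := (hB.sub_unitDiv hsrc).sub_unitDiv <| by
    have hne' : (Sum.inl (Γ.tgt e) : Γ.Pt) ≠ Sum.inl (Γ.src e) := fun h => hne (Sum.inl.inj h).symm
    simpa [unitDiv_of_ne hne'] using htgt
  have hmove := (linEquiv_pointOn_pair e le_rfl hs hst ht le_rfl heq).add_right C
  rw [pointOn_zero, pointOn_len,
    show (fun p => _ + C p) = B from funext fun p => by simp only [C]; ring] at hmove
  refine ⟨_, ((unitDiv_nonneg _).add (unitDiv_nonneg _)).add hC, ?_, hmove⟩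
  have hCx := hC (Γ.pointOn e x)
  rcases hx with rfl | rfl
  · linarith [unitDiv_self (Γ.pointOn e s), unitDiv_nonneg (Γ.pointOn e t) (Γ.pointOn e s)]
  · linarith [unitDiv_self (Γ.pointOn e t), unitDiv_nonneg (Γ.pointOn e s) (Γ.pointOn e t)]

theorem vertexSupported_nonneg {m : Γ.V → ℤ} (h : ∀ v, 0 ≤ m v) :
    DivEffective (vertexSupported m)
  | Sum.inl v => h v
  | Sum.inr _ => le_rfl

theorem isMoving_vertexSupported (hΓ : Γ.Loopless) {m : Γ.V → ℤ} (hm : ∀ v, 1 ≤ m v) :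
    IsMoving (vertexSupported m) := by
  have hnonneg := vertexSupported_nonneg fun v => zero_le_one.trans (hm v)
  rintro (v | ⟨e, x, hx⟩)
  · exact ⟨_, hnonneg, hm v, LinEquiv.refl _⟩
  · rw [← pointOn_of_mem hx]
    exact exists_linEquiv_pointOn hnonneg (hΓ e) (hm _) (hm _) hx.1.le hx.2.le

theorem DivisoriallyGonal.of_card_le (hΓ : Γ.Loopless) [Nonempty Γ.V] {d : ℤ}
    (h : Fintype.card Γ.V ≤ d) : Γ.DivisoriallyGonal d := by
  let w : Γ.V := Classical.arbitrary _
  let m : Γ.V → ℤ := fun v => 1 + if v = w then d - Fintype.card Γ.V else 0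
  refine ⟨vertexSupported m, vertexSupported_divFinSupp m, ?_,
    isMoving_vertexSupported hΓ fun v => ?_⟩
  · simp [divDegree_vertexSupported, m, Finset.sum_add_distrib]
  · simp only [m]
    split_ifs <;> omega

end MetricGraphModel

/-! ### From morphisms to moving divisors -/

namespace MetricGraphModel

variable {Γ : MetricGraphModel}

theorem IsWalk.rel {r : Γ.V → Γ.V → Prop} (hr : Equivalence r) {L : List (Γ.E × Bool)}
    {u v : Γ.V} (h : IsWalk Γ L u v) (hL : ∀ x ∈ L, r (Γ.src x.1) (Γ.tgt x.1)) : r u v := by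
  induction L generalizing u with
  | nil => exact h ▸ hr.refl u
  | cons x L ih =>
    obtain ⟨rfl, h⟩ := h
    refine hr.trans ?_ (ih h fun y hy => hL y (List.mem_cons_of_mem _ hy))
    have hx := hL x List.mem_cons_self
    obtain ⟨e, _ | _⟩ := x
    exacts [hr.symm hx, hx]

theorem Connected.rel (hΓ : Γ.Connected) {r : Γ.V → Γ.V → Prop} (hr : Equivalence r)
    (h : ∀ e, r (Γ.src e) (Γ.tgt e)) (u v : Γ.V) : r u v := by
  obtain ⟨L, hL⟩ := hΓ.2 u v
  exact hL.rel hr fun x _ => h x.1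

/-- The simple graph underlying the subgraph with the edges satisfying `P`. -/
def edgeGraph (Γ : MetricGraphModel) (P : Γ.E → Prop) : SimpleGraph Γ.V :=
  SimpleGraph.fromRel fun u v => ∃ e, P e ∧ Γ.src e = u ∧ Γ.tgt e = v

theorem edgeGraph_reachable {P : Γ.E → Prop} {e : Γ.E} (he : P e) :
    (Γ.edgeGraph P).Reachable (Γ.src e) (Γ.tgt e) := by
  by_cases h : Γ.src e = Γ.tgt e
  · rw [h]
  · exact SimpleGraph.Adj.reachable
      ((SimpleGraph.fromRel_adj _ _ _).2 ⟨h, Or.inl ⟨e, he, rfl, rfl⟩⟩)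

theorem card_edgeSet_edgeGraph_le (P : Γ.E → Prop) :
    Nat.card (Γ.edgeGraph P).edgeSet ≤ Nat.card {e // P e} := by
  have hsub : (Γ.edgeGraph P).edgeSet ⊆ Set.range
      fun e : {e // P e} => s(Γ.src e.1, Γ.tgt e.1) := fun z => by
    induction z using Sym2.ind with
    | _ u v =>
      intro hz
      rw [SimpleGraph.mem_edgeSet] at hz
      rcases ((SimpleGraph.fromRel_adj _ _ _).1 hz).2 with ⟨e, he, rfl, rfl⟩ | ⟨e, he, rfl, rfl⟩
      exacts [⟨⟨e, he⟩, rfl⟩, ⟨⟨e, he⟩, Sym2.eq_swap⟩]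
  exact (Nat.card_mono (Set.finite_range _) hsub).trans (Finite.card_range_le _)

theorem IsTreeModel.not_reachable (hΓ : Γ.IsTreeModel) (e : Γ.E) :
    ¬(Γ.edgeGraph (· ≠ e)).Reachable (Γ.src e) (Γ.tgt e) := fun hcon => by
  have := hΓ.1.1
  have hconn : (Γ.edgeGraph (· ≠ e)).Connected := ⟨hΓ.1.rel
    (SimpleGraph.reachable_is_equivalence _) fun e' => by
      by_cases he : e' = e
      exacts [he ▸ hcon, edgeGraph_reachable he]⟩
  have hle := hconn.card_vert_le_card_edgeSet_add_one.trans
    (Nat.succ_le_succ (card_edgeSet_edgeGraph_le _))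
  have hcard : Nat.card {e' // e' ≠ e} = Fintype.card Γ.E - 1 := by
    rw [Nat.card_eq_fintype_card, Fintype.card_subtype_compl, Fintype.card_subtype_eq]
  have hpos : 0 < Fintype.card Γ.E := Fintype.card_pos_iff.2 ⟨e⟩
  rw [Nat.card_eq_fintype_card] at hle
  have := hΓ.2
  omega

/-- The set `S` of vertices is separated from its complement by the edge `e` alone. -/
structure IsEdgeCut (S : Set Γ.V) (e : Γ.E) : Prop where
  src_mem : Γ.src e ∈ S
  tgt_notMem : Γ.tgt e ∉ S
  mem_iff : ∀ e', e' ≠ e → (Γ.src e' ∈ S ↔ Γ.tgt e' ∈ S)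

theorem IsTreeModel.exists_isEdgeCut (hΓ : Γ.IsTreeModel) (e : Γ.E) : ∃ S, IsEdgeCut S e :=
  ⟨{v | (Γ.edgeGraph (· ≠ e)).Reachable (Γ.src e) v}, .refl _, hΓ.not_reachable e, fun _ he =>
    ⟨fun h => h.trans (edgeGraph_reachable (P := (· ≠ e)) he),
      fun h => h.trans (edgeGraph_reachable (P := (· ≠ e)) he).symm⟩⟩

end MetricGraphModel

namespace MGMorphism

variable {Γ Δ : MetricGraphModel} {φ : MGMorphism Γ Δ}

theorem vMap_src_ne_iff {e : Γ.E} {e' : Δ.E} (h : φ.eMap e = Sum.inl e')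
    (h' : Δ.src e' ≠ Δ.tgt e') :
    φ.vMap (Γ.src e) ≠ Δ.src e' ↔ φ.vMap (Γ.tgt e) = Δ.src e' := by
  rcases φ.edge_ok e e' h with ⟨hs, ht⟩ | ⟨hs, ht⟩ <;> simp [hs, ht, h'.symm]

theorem incident_of_mem_darts {v : Γ.V} {x : Γ.E × Bool} (hx : x ∈ Γ.darts v) {e' : Δ.E}
    (h : φ.eMap x.1 = Sum.inl e') : Δ.Incident e' (φ.vMap v) := by
  obtain ⟨e, b⟩ := x
  have hx : Γ.dSrc (e, b) = v := mem_darts.1 hx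
  subst hx
  rcases φ.edge_ok e e' h with ⟨hs, ht⟩ | ⟨hs, ht⟩ <;> cases b <;> simp [dSrc, Incident, hs, ht]

theorem locDeg_eq_sum_darts (φ : MGMorphism Γ Δ) (v : Γ.V) (e' : Δ.E) :
    φ.locDeg v e' = ∑ x ∈ Γ.darts v, if φ.eMap x.1 = Sum.inl e' then φ.mu x.1 else 0 := by
  rw [sum_darts, locDeg]
  refine Finset.sum_congr rfl fun e _ => ?_
  simp only [incid, mul_add, mul_ite, mul_one, mul_zero]
  split_ifs <;> rfl

theorem locDeg_of_not_incident {v : Γ.V} {e' : Δ.E} (h : ¬Δ.Incident e' (φ.vMap v)) :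
    φ.locDeg v e' = 0 := by
  rw [locDeg_eq_sum_darts]
  exact Finset.sum_eq_zero fun x hx => if_neg fun hxe => h (incident_of_mem_darts hx hxe)

theorem Harmonic.locDeg_eq_mVal (hφ : φ.Harmonic) {v : Γ.V} {e' : Δ.E}
    (h : Δ.Incident e' (φ.vMap v)) : φ.locDeg v e' = φ.mVal v :=
  le_antisymm (Finset.le_sup (by simpa using h)) <| Finset.sup_le fun e he =>
    (hφ v e e' (by simpa using he) h).le

theorem Nondegenerate.one_le_mVal (hφ : φ.Nondegenerate) (v : Γ.V) : 1 ≤ φ.mVal v := by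
  obtain ⟨e', he', h⟩ := hφ v
  exact h.trans (Finset.le_sup (f := φ.locDeg v) (by simpa using he'))

theorem mu_ne_zero {e : Γ.E} {e' : Δ.E} (h : φ.eMap e = Sum.inl e') : φ.mu e ≠ 0 := fun h0 => by
  obtain ⟨v, hv⟩ := (φ.mu_zero e).1 h0
  simp [h] at hv

theorem pullbackDiv_inl (φ : MGMorphism Γ Δ) (t : Δ.V) : pullbackDiv φ (Sum.inl t) =
    vertexSupported fun v => if φ.vMap v = t then (φ.mVal v : ℤ) else 0 := by
  funext p
  rcases p with v | q
  · simp only [pullbackDiv, MapsToPt, hmult, vertexSupported]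
    congr
  · simp only [pullbackDiv, MapsToPt, hmult, vertexSupported]
    split_ifs with h
    exacts [by simp [(φ.mu_zero _).2 ⟨t, h⟩], if_neg h]

theorem pullbackDiv_nonneg (φ : MGMorphism Γ Δ) (t : Δ.Pt) : DivEffective (pullbackDiv φ t) :=
  fun p => by
    unfold pullbackDiv
    split_ifs
    exacts [Int.natCast_nonneg _, le_rfl]

section CutFunction

variable {S : Set Δ.V} {e' : Δ.E}

theorem vMap_src_mem_iff (hS : IsEdgeCut S e') {e : Γ.E} (he : φ.eMap e ≠ Sum.inl e') :
    φ.vMap (Γ.src e) ∈ S ↔ φ.vMap (Γ.tgt e) ∈ S := by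
  rcases h : φ.eMap e with e'' | v'
  · have hne : e'' ≠ e' := fun heq => he (heq ▸ h)
    rcases φ.edge_ok e e'' h with ⟨hs, ht⟩ | ⟨hs, ht⟩ <;> rw [hs, ht]
    exacts [hS.mem_iff e'' hne, (hS.mem_iff e'' hne).symm]
  · obtain ⟨hs, ht⟩ := φ.contract_ok e v' h
    rw [hs, ht]

theorem vMap_src_mem_iff_not (hS : IsEdgeCut S e') {e : Γ.E} (he : φ.eMap e = Sum.inl e') :
    φ.vMap (Γ.src e) ∈ S ↔ φ.vMap (Γ.tgt e) ∉ S := by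
  rcases φ.edge_ok e e' he with ⟨hs, ht⟩ | ⟨hs, ht⟩ <;> simp [hs, ht, hS.src_mem, hS.tgt_notMem]

/-- The pullback of the function which is constant on both sides of a cut and grows with slope `1`
along the cut edge. -/
noncomputable def cutFunction (φ : MGMorphism Γ Δ) (hS : IsEdgeCut S e') : EdgewiseAffine Γ where
  val v := if φ.vMap v ∈ S then 0 else Δ.len e'
  slope e := if φ.eMap e = Sum.inl e' then
    (if φ.vMap (Γ.src e) ∈ S then (φ.mu e : ℤ) else -(φ.mu e : ℤ)) else 0
  val_sub_val e := by
    by_cases he : φ.eMap e = Sum.inl e'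
    · have hlen := φ.len_ok e e' he
      have hiff := vMap_src_mem_iff_not hS he
      by_cases hs : φ.vMap (Γ.src e) ∈ S
      · simp [he, hs, hiff.1 hs, hlen]
      · simp [he, hs, not_not.1 (mt hiff.2 hs), hlen]
    · simp [he, vMap_src_mem_iff hS he]

theorem dartSlope_cutFunction (hS : IsEdgeCut S e') {v : Γ.V} {x : Γ.E × Bool}
    (hx : x ∈ Γ.darts v) : (φ.cutFunction hS).dartSlope x =
      (if φ.vMap v ∈ S then 1 else -1) * if φ.eMap x.1 = Sum.inl e' then (φ.mu x.1 : ℤ) else 0 := by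
  obtain ⟨e, b⟩ := x
  have hx : Γ.dSrc (e, b) = v := mem_darts.1 hx
  subst hx
  by_cases he : φ.eMap e = Sum.inl e'
  · have hiff := vMap_src_mem_iff_not hS he
    cases b <;> by_cases ht : φ.vMap (Γ.tgt e) ∈ S <;>
      simp [EdgewiseAffine.dartSlope, cutFunction, dSrc, he, hiff, ht]
  · simp [EdgewiseAffine.dartSlope, cutFunction, he]

theorem vertexDiv_cutFunction (hS : IsEdgeCut S e') (v : Γ.V) :
    (φ.cutFunction hS).vertexDiv v = (if φ.vMap v ∈ S then 1 else -1) * (φ.locDeg v e' : ℤ) := by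
  rw [EdgewiseAffine.vertexDiv, Finset.sum_congr rfl fun x hx => dartSlope_cutFunction hS hx,
    ← Finset.mul_sum, locDeg_eq_sum_darts]
  push_cast
  rfl

theorem pullbackDiv_src_eq (hφ : φ.Harmonic) (hS : IsEdgeCut S e') (p : Γ.Pt) :
    pullbackDiv φ (Sum.inl (Δ.src e')) p =
      pullbackDiv φ (Sum.inl (Δ.tgt e')) p + ratDiv (φ.cutFunction hS).toRational p := by
  rw [pullbackDiv_inl, pullbackDiv_inl]
  rcases p with v | q
  · rw [EdgewiseAffine.ratDiv_toRational_inl, vertexDiv_cutFunction]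
    simp only [vertexSupported]
    have hsrc := hS.src_mem
    have htgt := hS.tgt_notMem
    have hne : Δ.src e' ≠ Δ.tgt e' := fun h => htgt (h ▸ hsrc)
    by_cases hs : φ.vMap v = Δ.src e'
    · simp [hs, hsrc, hne, hφ.locDeg_eq_mVal (Or.inl hs.symm)]
    · by_cases ht : φ.vMap v = Δ.tgt e'
      · simp [ht, htgt, hne.symm, hφ.locDeg_eq_mVal (Or.inr ht.symm)]
      · simp [hs, ht, locDeg_of_not_incident
          (fun h => h.elim (hs ∘ Eq.symm) (ht ∘ Eq.symm) : ¬Δ.Incident e' (φ.vMap v))]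
  · rw [EdgewiseAffine.ratDiv_toRational_inr]
    rfl

end CutFunction

theorem sum_locDeg_src (φ : MGMorphism Γ Δ) {e' : Δ.E} (he' : Δ.src e' ≠ Δ.tgt e') :
    ∑ v, (if φ.vMap v = Δ.src e' then φ.locDeg v e' else 0) =
      ∑ e, if φ.eMap e = Sum.inl e' then φ.mu e else 0 := by
  simp only [locDeg, ← Finset.sum_filter (fun v => φ.vMap v = Δ.src e')]
  rw [Finset.sum_comm]
  refine Finset.sum_congr rfl fun e _ => ?_
  by_cases he : φ.eMap e = Sum.inl e'
  · have hiff := vMap_src_ne_iff he he'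
    by_cases hs : φ.vMap (Γ.src e) = Δ.src e'
    · simp [incid, mul_add, Finset.sum_add_distrib, he, hs, mt hiff.2 (not_not.2 hs)]
    · simp [incid, mul_add, Finset.sum_add_distrib, he, hs, hiff.1 hs]
  · simp [he]

theorem divDegree_pullbackDiv_src (hφ : φ.Harmonic) {d : ℕ} (hd : φ.HasDegree d) {e' : Δ.E}
    (he' : Δ.src e' ≠ Δ.tgt e') : divDegree (pullbackDiv φ (Sum.inl (Δ.src e'))) = d := by
  rw [pullbackDiv_inl, divDegree_vertexSupported, ← hd e', ← sum_locDeg_src φ he']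
  push_cast
  refine Finset.sum_congr rfl fun v _ => ?_
  split_ifs with hv
  exacts [congrArg Nat.cast (hφ.locDeg_eq_mVal (Or.inl hv.symm)).symm, rfl]

theorem linEquiv_pullbackDiv (hΔ : Δ.IsTreeModel) (hφ : φ.Harmonic) (s t : Δ.V) :
    LinEquiv Γ (pullbackDiv φ (Sum.inl s)) (pullbackDiv φ (Sum.inl t)) := by
  refine hΔ.1.rel (r := fun s t => LinEquiv Γ (pullbackDiv φ (Sum.inl s))
    (pullbackDiv φ (Sum.inl t))) ⟨fun _ => .refl _, fun h => h.symm, fun h h' => h.trans h'⟩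
    (fun e => ?_) s t
  obtain ⟨S, hS⟩ := hΔ.exists_isEdgeCut e
  exact ⟨_, pullbackDiv_src_eq hφ hS⟩

theorem exists_linEquiv_of_eMap_eq_inl (hΔ : Δ.IsTreeModel) (hφ : φ.Harmonic) {e : Γ.E} {e' : Δ.E}
    (he : φ.eMap e = Sum.inl e') (x : {s : ℝ // 0 < s ∧ s < Γ.len e}) :
    ∃ B, DivEffective B ∧ 1 ≤ B (Sum.inr ⟨e, x⟩) ∧
      LinEquiv Γ (pullbackDiv φ (Sum.inl (Δ.tgt e'))) B := by
  obtain ⟨S, hS⟩ := hΔ.exists_isEdgeCut e'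
  let g := φ.cutFunction hS
  let p : Γ.Pt := Sum.inr ⟨e, x⟩
  let F := g.toRational.truncate (ratEval g.toRational p)
  refine ⟨fun q => pullbackDiv φ (Sum.inl (Δ.tgt e')) q + ratDiv F q, fun q => ?_, ?_,
    LinEquiv.symm ⟨F, fun _ => rfl⟩⟩
  · rcases lt_or_ge (ratEval g.toRational p) (ratEval g.toRational q) with h | h
    · dsimp only [F]
      rw [ratDiv_truncate_of_lt h, ← pullbackDiv_src_eq hφ hS]
      exact pullbackDiv_nonneg φ _ q
    · exact add_nonneg (pullbackDiv_nonneg φ _ q) (ratDiv_truncate_nonneg h)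
  · have hmu : (0 : ℤ) < φ.mu e := by exact_mod_cast Nat.pos_of_ne_zero (mu_ne_zero he)
    obtain ⟨b, hb⟩ : ∃ b, 0 < g.toRational.slopeAt p (e, b) := by
      simp only [EdgewiseAffine.slopeAt_toRational]
      by_cases hs : φ.vMap (Γ.src e) ∈ S
      · exact ⟨true, by simpa [g, EdgewiseAffine.dartSlope, cutFunction, he, hs] using hmu⟩
      · exact ⟨false, by simpa [g, EdgewiseAffine.dartSlope, cutFunction, he, hs] using hmu⟩
    have hpos : 0 < ratDiv F p := ratDiv_truncate_pos (by cases b <;> simp [p, tangents]) hb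
    have hnonneg := pullbackDiv_nonneg φ (Sum.inl (Δ.tgt e')) p
    dsimp only [p] at hpos hnonneg ⊢
    omega

/-- The fibres of a harmonic morphism to a tree are equivalent and meet every point. -/
theorem divisoriallyGonal (hΓ : Γ.Loopless) [Nonempty Γ.V] (hΔ : Δ.IsTreeModel)
    (hφ : φ.Harmonic) (hφ' : φ.Nondegenerate) {d : ℕ} (hd : φ.HasDegree d) :
    Γ.DivisoriallyGonal d := by
  obtain ⟨e₀, -⟩ := hφ' (Classical.arbitrary _)
  obtain ⟨S, hS⟩ := hΔ.exists_isEdgeCut e₀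
  have hfiber : ∀ v, 1 ≤ pullbackDiv φ (Sum.inl (φ.vMap v)) (Sum.inl v) := fun v => by
    rw [pullbackDiv_inl]
    simpa [vertexSupported] using hφ'.one_le_mVal v
  refine ⟨pullbackDiv φ (Sum.inl (Δ.src e₀)), ?_,
    divDegree_pullbackDiv_src hφ hd fun h => hS.tgt_notMem (h ▸ hS.src_mem), ?_⟩
  · rw [pullbackDiv_inl]
    exact vertexSupported_divFinSupp _
  suffices ∀ p, ∃ t B, DivEffective B ∧ 1 ≤ B p ∧ LinEquiv Γ (pullbackDiv φ (Sum.inl t)) B by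
    intro p
    obtain ⟨t, B, hB, hp, hequiv⟩ := this p
    exact ⟨B, hB, hp, (linEquiv_pullbackDiv hΔ hφ _ t).trans hequiv⟩
  rintro (v | ⟨e, x⟩)
  · exact ⟨_, _, pullbackDiv_nonneg φ _, hfiber v, .refl _⟩
  · rcases he : φ.eMap e with e' | t
    · exact ⟨_, exists_linEquiv_of_eMap_eq_inl hΔ hφ he x⟩
    · obtain ⟨hs, ht⟩ := φ.contract_ok e t he
      rw [← pointOn_of_mem x.2]
      exact ⟨t, exists_linEquiv_pointOn (pullbackDiv_nonneg φ _) (hΓ e)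
        (by simpa only [hs] using hfiber (Γ.src e)) (by simpa only [ht] using hfiber (Γ.tgt e))
        x.2.1.le x.2.2.le⟩

end MGMorphism

/-! ### Pulling back along maps of models -/

namespace MetricGraphModel

variable {Γ Δ : MetricGraphModel}

/-- The oriented edge `x` gives a tangent direction at its point of parameter `s`. -/
def HasTangent (Γ : MetricGraphModel) (x : Γ.E × Bool) (s : ℝ) : Prop :=
  s ∈ Set.Icc 0 (Γ.len x.1) ∧ ∃ u > 0, s + dirSign x.2 * u ∈ Set.Icc 0 (Γ.len x.1)

theorem hasTangent_tangentParam {p : Γ.Pt} {x : Γ.E × Bool} (hx : x ∈ tangents p) :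
    Γ.HasTangent x (tangentParam p x) := by
  obtain ⟨e, b⟩ := x
  rcases p with v | ⟨e', s, h0, hL⟩
  · have hlen := Γ.len_pos e
    cases b
    · exact ⟨⟨hlen.le, le_rfl⟩, _, hlen, by simp [tangentParam, hlen.le]⟩
    · exact ⟨⟨le_rfl, hlen.le⟩, _, hlen, by simp [tangentParam, hlen.le]⟩
  · obtain rfl : e = e' := by
      rcases (by simpa [tangents] using hx : _ ∨ _) with h | h <;> exact h.1
    refine ⟨⟨h0.le, hL.le⟩, ?_⟩
    cases b
    · exact ⟨s, h0, by simp [tangentParam, h0.le.trans hL.le]⟩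
    · exact ⟨Γ.len e - s, sub_pos.2 hL, by simp [tangentParam, h0.le.trans hL.le]⟩

theorem pointOn_tangentParam {p : Γ.Pt} {x : Γ.E × Bool} (hx : x ∈ tangents p) :
    Γ.pointOn x.1 (tangentParam p x) = p := by
  obtain ⟨e, b⟩ := x
  rcases p with v | ⟨e', s, hs⟩
  · have hx : Γ.dSrc (e, b) = v := mem_darts.1 hx
    subst hx
    cases b
    exacts [pointOn_len e, pointOn_zero e]
  · obtain rfl : e = e' := by
      rcases (by simpa [tangents] using hx : _ ∨ _) with h | h <;> exact h.1
    exact pointOn_of_mem hs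

theorem HasTangent.cases {x : Γ.E × Bool} {s : ℝ} (h : Γ.HasTangent x s) :
    (0 < s ∧ s < Γ.len x.1) ∨ x.2 = true ∧ s = 0 ∨ x.2 = false ∧ s = Γ.len x.1 := by
  obtain ⟨e, b⟩ := x
  obtain ⟨⟨h0, hL⟩, u, hu, h0', hL'⟩ := h
  dsimp only at h0 hL h0' hL' ⊢
  rcases h0.lt_or_eq with h0 | rfl
  · rcases hL.lt_or_eq with hL | rfl
    · exact Or.inl ⟨h0, hL⟩
    · cases b
      · exact Or.inr (Or.inr ⟨rfl, rfl⟩)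
      · rw [dirSign_true] at hL'
        linarith
  · cases b
    · rw [dirSign_false] at h0'
      linarith
    · exact Or.inr (Or.inl ⟨rfl, rfl⟩)

theorem HasTangent.mem_tangents {x : Γ.E × Bool} {s : ℝ} (h : Γ.HasTangent x s) :
    x ∈ tangents (Γ.pointOn x.1 s) := by
  obtain ⟨e, b⟩ := x
  rcases h.cases with h | ⟨rfl, rfl⟩ | ⟨rfl, rfl⟩
  · rw [pointOn_of_mem h]
    cases b <;> simp [tangents]
  · simp [pointOn_zero, tangents, mem_darts, dSrc]
  · simp [pointOn_len, tangents, mem_darts, dSrc]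

theorem HasTangent.tangentParam_eq {x : Γ.E × Bool} {s : ℝ} (h : Γ.HasTangent x s) :
    tangentParam (Γ.pointOn x.1 s) x = s := by
  obtain ⟨e, b⟩ := x
  rcases h.cases with h | ⟨rfl, rfl⟩ | ⟨rfl, rfl⟩
  · rw [pointOn_of_mem h, tangentParam]
  · simp [pointOn_zero, tangentParam]
  · simp [pointOn_len, tangentParam]

theorem RationalFunction.ratEval_pointOn (F : RationalFunction Γ) {e : Γ.E} {s : ℝ}
    (hs : s ∈ Set.Icc 0 (Γ.len e)) : ratEval F (Γ.pointOn e s) = F.eFun e s := by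
  rcases hs.1.lt_or_eq with h0 | rfl
  · rcases hs.2.lt_or_eq with hL | rfl
    · rw [pointOn_of_mem ⟨h0, hL⟩, ratEval]
    · rw [pointOn_len, ratEval, F.tgtVal]
  · rw [pointOn_zero, ratEval, F.srcVal]

theorem HasTangent.eventually_mem {x : Γ.E × Bool} {s : ℝ} (h : Γ.HasTangent x s) :
    ∀ᶠ u in 𝓝[>] (0 : ℝ), s + dirSign x.2 * u ∈ Set.Icc 0 (Γ.len x.1) := by
  obtain ⟨hs, u, hu, hsu⟩ := h
  filter_upwards [Ioo_mem_nhdsGT hu] with r hr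
  have hconv := convex_Icc (0 : ℝ) (Γ.len x.1) |>.add_smul_mem hs hsu
    ⟨div_nonneg hr.1.le hu.le, (div_le_one hu).2 hr.2.le⟩
  rwa [smul_eq_mul, mul_left_comm, div_mul_cancel₀ _ hu.ne'] at hconv

theorem ratDiv_congr {F G : RationalFunction Γ}
    (h : ∀ e, Set.EqOn (F.eFun e) (G.eFun e) (Set.Icc 0 (Γ.len e))) (p : Γ.Pt) :
    ratDiv F p = ratDiv G p := by
  simp only [ratDiv_eq_sum_tangents]
  refine Finset.sum_congr rfl fun x hx => ((F.hasSlope_slopeAt hx).congr ?_ ?_).outSlope_eq.symm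
  · exact (hasTangent_tangentParam hx).eventually_mem.mono fun u hu => h x.1 hu
  · exact h x.1 (hasTangent_tangentParam hx).1

theorem plInt_of_hasTangent {e : Γ.E} {f : ℝ → ℝ}
    (h : ∀ s b, Γ.HasTangent (e, b) s → ∃ m, HasSlope f s (dirSign b) m) : PLInt f (Γ.len e) := by
  refine plInt_of_hasSlope (Γ.len_pos e).le (fun s hs => h s true ?_) fun s hs => h s false ?_
  · exact ⟨⟨hs.1, hs.2.le⟩, _, sub_pos.2 hs.2, by simp [hs.1.trans hs.2.le]⟩
  · exact ⟨⟨hs.1.le, hs.2⟩, s, hs.1, by simp [hs.1.le.trans hs.2]⟩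

/-- A map of metric graphs that sends every edge isometrically onto a segment of an edge. -/
structure SegmentMap (Γ Δ : MetricGraphModel) where
  vMap : Γ.V → Δ.Pt
  edge : Γ.E → Δ.E
  start : Γ.E → ℝ
  straight : Γ.E → Bool
  mem_Icc : ∀ e, ∀ s ∈ Set.Icc 0 (Γ.len e),
    start e + dirSign (straight e) * s ∈ Set.Icc 0 (Δ.len (edge e))
  src_eq : ∀ e, Δ.pointOn (edge e) (start e) = vMap (Γ.src e)
  tgt_eq : ∀ e, Δ.pointOn (edge e) (start e + dirSign (straight e) * Γ.len e) = vMap (Γ.tgt e)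

namespace SegmentMap

variable (σ : SegmentMap Γ Δ)

/-- The parameter of the image of a point on an edge. -/
def param (e : Γ.E) (s : ℝ) : ℝ := σ.start e + dirSign (σ.straight e) * s

theorem param_mem_Icc {e : Γ.E} {s : ℝ} (hs : s ∈ Set.Icc 0 (Γ.len e)) :
    σ.param e s ∈ Set.Icc 0 (Δ.len (σ.edge e)) := σ.mem_Icc e s hs

theorem param_zero (e : Γ.E) : σ.param e 0 = σ.start e := by simp [param]

/-- The induced map on points. -/
noncomputable def ptMap : Γ.Pt → Δ.Pt
  | Sum.inl v => σ.vMap v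
  | Sum.inr ⟨e, s⟩ => Δ.pointOn (σ.edge e) (σ.param e s.1)

/-- The induced map on oriented edges. -/
def tangentMap (x : Γ.E × Bool) : Δ.E × Bool := (σ.edge x.1, x.2 == σ.straight x.1)

theorem dirSign_tangentMap (x : Γ.E × Bool) :
    dirSign (σ.tangentMap x).2 = dirSign (σ.straight x.1) * dirSign x.2 := by
  obtain ⟨e, b⟩ := x
  dsimp only [tangentMap]
  cases b <;> cases σ.straight e <;> simp

theorem ptMap_pointOn {e : Γ.E} {s : ℝ} (hs : s ∈ Set.Icc 0 (Γ.len e)) :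
    σ.ptMap (Γ.pointOn e s) = Δ.pointOn (σ.edge e) (σ.param e s) := by
  rcases hs.1.lt_or_eq with h0 | rfl
  · rcases hs.2.lt_or_eq with hL | rfl
    · rw [pointOn_of_mem ⟨h0, hL⟩, ptMap]
    · rw [pointOn_len, ptMap, param, σ.tgt_eq]
  · rw [pointOn_zero, ptMap, param_zero, σ.src_eq]

variable {p : Γ.Pt} {x : Γ.E × Bool}

theorem pointOn_tangentMap (hx : x ∈ tangents p) :
    Δ.pointOn (σ.tangentMap x).1 (σ.param x.1 (tangentParam p x)) = σ.ptMap p := by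
  rw [← congrArg σ.ptMap (pointOn_tangentParam hx), σ.ptMap_pointOn (hasTangent_tangentParam hx).1,
    tangentMap]

theorem hasTangent_tangentMap {s : ℝ} (h : Γ.HasTangent x s) :
    Δ.HasTangent (σ.tangentMap x) (σ.param x.1 s) := by
  obtain ⟨hs, u, hu, hsu⟩ := h
  refine ⟨σ.param_mem_Icc hs, u, hu, ?_⟩
  have hparam : σ.param x.1 s + dirSign (σ.tangentMap x).2 * u =
      σ.param x.1 (s + dirSign x.2 * u) := by
    rw [σ.dirSign_tangentMap, param, param]
    ring
  exact hparam ▸ σ.param_mem_Icc hsu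

theorem tangentMap_mem_tangents (hx : x ∈ tangents p) : σ.tangentMap x ∈ tangents (σ.ptMap p) := by
  rw [← σ.pointOn_tangentMap hx]
  exact (σ.hasTangent_tangentMap (hasTangent_tangentParam hx)).mem_tangents

theorem tangentParam_tangentMap (hx : x ∈ tangents p) :
    tangentParam (σ.ptMap p) (σ.tangentMap x) = σ.param x.1 (tangentParam p x) := by
  rw [← σ.pointOn_tangentMap hx]
  exact (σ.hasTangent_tangentMap (hasTangent_tangentParam hx)).tangentParam_eq

theorem hasSlope_comp_param (F : RationalFunction Δ) (hx : x ∈ tangents p) :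
    HasSlope (fun s => F.eFun (σ.edge x.1) (σ.param x.1 s)) (tangentParam p x) (dirSign x.2)
      (F.slopeAt (σ.ptMap p) (σ.tangentMap x)) := by
  have h := F.hasSlope_slopeAt (σ.tangentMap_mem_tangents hx)
  rw [σ.tangentParam_tangentMap hx, σ.dirSign_tangentMap] at h
  exact hasSlope_comp_affine.2 h

/-- The pullback of a rational function. -/
noncomputable def pullback (F : RationalFunction Δ) : RationalFunction Γ where
  vVal v := ratEval F (σ.vMap v)
  eFun e s := F.eFun (σ.edge e) (σ.param e s)
  pl _ := plInt_of_hasTangent fun _ _ h =>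
    ⟨_, h.tangentParam_eq ▸ σ.hasSlope_comp_param F h.mem_tangents⟩
  srcVal e := by
    have h0 : (0 : ℝ) ∈ Set.Icc 0 (Γ.len e) := ⟨le_rfl, (Γ.len_pos e).le⟩
    rw [← F.ratEval_pointOn (σ.param_mem_Icc h0), ← σ.src_eq, param_zero]
  tgtVal e := by
    have hL : Γ.len e ∈ Set.Icc 0 (Γ.len e) := ⟨(Γ.len_pos e).le, le_rfl⟩
    rw [← F.ratEval_pointOn (σ.param_mem_Icc hL), ← σ.tgt_eq, param]

/-- The map is a local isometry at `p`: it matches the tangent directions at `p` with those at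
the image of `p`. -/
def LocalIsoAt (p : Γ.Pt) : Prop :=
  Set.BijOn σ.tangentMap (tangents p : Finset _) (tangents (σ.ptMap p) : Finset _)

variable {σ}

theorem LocalIsoAt.ratDiv_pullback (h : σ.LocalIsoAt p) (F : RationalFunction Δ) :
    ratDiv (σ.pullback F) p = ratDiv F (σ.ptMap p) := by
  rw [ratDiv_eq_sum_tangents, ratDiv_eq_sum_tangents]
  exact Finset.sum_nbij σ.tangentMap h.mapsTo h.injOn h.surjOn
    fun x hx => (σ.hasSlope_comp_param F hx).outSlope_eq

theorem ptMap_inr_eq (q : Σ e : Γ.E, {s : ℝ // 0 < s ∧ s < Γ.len e}) :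
    ∃ h, σ.ptMap (Sum.inr q) = Sum.inr ⟨σ.edge q.1, σ.param q.1 q.2.1, h⟩ := by
  obtain ⟨e, s, h0, hL⟩ := q
  have hzero := σ.mem_Icc e 0 ⟨le_rfl, (Γ.len_pos e).le⟩
  have hlen := σ.mem_Icc e _ ⟨(Γ.len_pos e).le, le_rfl⟩
  have h : 0 < σ.param e s ∧ σ.param e s < Δ.len (σ.edge e) := by
    unfold param
    cases hb : σ.straight e <;> simp only [hb, dirSign_true, dirSign_false] at hzero hlen ⊢ <;>
      constructor <;> linarith [hzero.1, hzero.2, hlen.1, hlen.2]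
  exact ⟨h, pointOn_of_mem h⟩

theorem localIsoAt_inr (q : Σ e : Γ.E, {s : ℝ // 0 < s ∧ s < Γ.len e}) :
    σ.LocalIsoAt (Sum.inr q) := by
  obtain ⟨h, hq⟩ := σ.ptMap_inr_eq q
  have hinj : Set.InjOn σ.tangentMap (tangents (Sum.inr q : Γ.Pt) : Finset _) := by
    rintro ⟨e, b⟩ hx ⟨e', b'⟩ hx' heq
    cases b <;> cases b' <;> simp_all [tangents, tangentMap]
  refine ⟨fun x => σ.tangentMap_mem_tangents, hinj, Finset.surjOn_of_injOn_of_card_le _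
    (fun x => σ.tangentMap_mem_tangents) hinj ?_⟩
  simp [hq, tangents]

theorem linEquiv_comp (hσ : ∀ p, σ.LocalIsoAt p) {D B : Divisor Δ} (h : LinEquiv Δ D B) :
    LinEquiv Γ (fun p => D (σ.ptMap p)) fun p => B (σ.ptMap p) := by
  obtain ⟨F, hF⟩ := h
  exact ⟨σ.pullback F, fun p => by rw [(hσ p).ratDiv_pullback]; exact hF _⟩

theorem exists_pullback_eqOn (hbij : Function.Bijective σ.ptMap) (hσ : ∀ p, σ.LocalIsoAt p)
    (G : RationalFunction Γ) : ∃ F : RationalFunction Δ,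
      ∀ e, Set.EqOn ((σ.pullback F).eFun e) (G.eFun e) (Set.Icc 0 (Γ.len e)) := by
  let τ := (Equiv.ofBijective σ.ptMap hbij).symm
  have hτ : ∀ p, τ (σ.ptMap p) = p := (Equiv.ofBijective σ.ptMap hbij).symm_apply_apply
  let f : Δ.E → ℝ → ℝ := fun e' s => ratEval G (τ (Δ.pointOn e' s))
  have hf : ∀ e, ∀ s ∈ Set.Icc 0 (Γ.len e), f (σ.edge e) (σ.param e s) = G.eFun e s :=
    fun e s hs => by
      simp only [f]
      rw [← σ.ptMap_pointOn hs, hτ, G.ratEval_pointOn hs]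
  have hslope : ∀ (y : Δ.E × Bool) (s : ℝ), Δ.HasTangent y s →
      ∃ m, HasSlope (f y.1) s (dirSign y.2) m := fun y s hy => by
    obtain ⟨p, hp⟩ := hbij.2 (Δ.pointOn y.1 s)
    obtain ⟨x, hx, rfl⟩ := (hσ p).surjOn (hp ▸ hy.mem_tangents)
    have htan := hasTangent_tangentParam hx
    have hs : σ.param x.1 (tangentParam p x) = s := by
      rw [← σ.tangentParam_tangentMap hx, hp, hy.tangentParam_eq]
    rw [σ.dirSign_tangentMap, ← hs]
    exact ⟨_, hasSlope_comp_affine.1 ((G.hasSlope_slopeAt hx).congr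
      (htan.eventually_mem.mono fun u hu => (hf _ _ hu).symm) (hf _ _ htan.1).symm)⟩
  refine ⟨⟨fun v => ratEval G (τ (Sum.inl v)), f,
    fun e => plInt_of_hasTangent fun s b => hslope (e, b) s, fun e => ?_, fun e => ?_⟩, hf⟩
  · simp only [f, pointOn_zero]
  · simp only [f, pointOn_len]

theorem linEquiv_of_comp (hbij : Function.Bijective σ.ptMap) (hσ : ∀ p, σ.LocalIsoAt p)
    {D B : Divisor Δ} (h : LinEquiv Γ (fun p => D (σ.ptMap p)) fun p => B (σ.ptMap p)) :
    LinEquiv Δ D B := by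
  obtain ⟨G, hG⟩ := h
  obtain ⟨F, hF⟩ := exists_pullback_eqOn hbij hσ G
  refine ⟨F, fun q => ?_⟩
  obtain ⟨p, rfl⟩ := hbij.2 q
  rw [← (hσ p).ratDiv_pullback, ratDiv_congr hF]
  exact hG p

theorem divisoriallyGonal_of_bijective (hbij : Function.Bijective σ.ptMap)
    (hσ : ∀ p, σ.LocalIsoAt p) {d : ℤ} (h : Γ.DivisoriallyGonal d) : Δ.DivisoriallyGonal d := by
  obtain ⟨D, hfin, hdeg, hmov⟩ := h
  let τ := (Equiv.ofBijective σ.ptMap hbij).symm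
  have hτ : ∀ p, τ (σ.ptMap p) = p := (Equiv.ofBijective σ.ptMap hbij).symm_apply_apply
  refine ⟨fun q => D (τ q), hfin.preimage τ.injective.injOn,
    (finsum_eq_of_bijective τ τ.bijective fun _ => rfl).trans hdeg, fun q => ?_⟩
  obtain ⟨B, hB, hq, hDB⟩ := hmov (τ q)
  exact ⟨fun q => B (τ q), fun q => hB _, hq, linEquiv_of_comp hbij hσ (by simpa only [hτ])⟩

end SegmentMap

end MetricGraphModel

/-! ### Gonality along embeddings and subdivisions -/

namespace MetricGraphModel

variable {Γ Δ : MetricGraphModel}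

theorem divDegree_comp_le {D : Divisor Δ} (hD : DivEffective D) (hfin : DivFinSupp D)
    {ι : Γ.Pt → Δ.Pt} (hι : Function.Injective ι) :
    divDegree (fun p => D (ι p)) ≤ divDegree D := by
  have hfin' : DivFinSupp fun p => D (ι p) := hfin.preimage hι.injOn
  rw [divDegree, divDegree, finsum_eq_sum _ hfin', finsum_eq_sum _ hfin]
  refine (Finset.sum_map _ ⟨ι, hι⟩ D).symm.trans_le
    (Finset.sum_le_sum_of_subset_of_nonneg (fun p hp => ?_) fun p _ _ => hD p)
  obtain ⟨q, hq, rfl⟩ := Finset.mem_map.1 hp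
  exact hfin.mem_toFinset.2 (hfin'.mem_toFinset.1 hq)

namespace SegmentMap

variable (σ : SegmentMap Γ Δ)

/-- The restriction of a divisor along an injective map, with the chips outside the image moved to
the point `a`. -/
noncomputable def restrictDiv (a : Γ.Pt) (D : Divisor Δ) : Divisor Γ := fun q =>
  D (σ.ptMap q) + (divDegree D - divDegree fun q => D (σ.ptMap q)) * unitDiv Γ a q

variable {σ} (hσ : Function.Injective σ.ptMap) {D B : Divisor Δ} {a : Γ.Pt}
include hσ

theorem restrictDiv_divFinSupp (hD : DivFinSupp D) : DivFinSupp (σ.restrictDiv a D) :=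
  DivFinSupp.add (hD.preimage hσ.injOn)
    ((unitDiv_divFinSupp a).subset (Function.support_mul_subset_right _ _))

theorem divDegree_restrictDiv (hD : DivFinSupp D) :
    divDegree (σ.restrictDiv a D) = divDegree D := by
  unfold restrictDiv
  rw [divDegree_add (hD.preimage hσ.injOn)
    ((unitDiv_divFinSupp a).subset (Function.support_mul_subset_right _ _))]
  have hmul : ∀ c, divDegree (fun q => c * unitDiv Γ a q) = c := fun c => by
    rw [divDegree, ← mul_finsum, ← divDegree, divDegree_unitDiv, mul_one]
  rw [hmul]
  ring

theorem le_restrictDiv (hD : DivEffective D) (hfin : DivFinSupp D) (q : Γ.Pt) :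
    D (σ.ptMap q) ≤ σ.restrictDiv a D q :=
  le_add_of_nonneg_right
    (mul_nonneg (sub_nonneg.2 (divDegree_comp_le hD hfin hσ)) (unitDiv_nonneg a q))

/-- The two restrictions agree up to a principal divisor away from `a`, and at `a` because their
degrees are equal. -/
theorem linEquiv_restrictDiv (ha : ∀ p ≠ a, σ.LocalIsoAt p) (hD : DivFinSupp D)
    (h : LinEquiv Δ D B) : LinEquiv Γ (σ.restrictDiv a D) (σ.restrictDiv a B) := by
  have hB := h.divFinSupp hD
  have hdeg := h.divDegree_eq hD
  obtain ⟨F, hF⟩ := h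
  have hoff : ∀ q ≠ a, σ.restrictDiv a D q =
      σ.restrictDiv a B q + ratDiv (σ.pullback F) q := fun q hq => by
    simp only [restrictDiv, unitDiv_of_ne hq, mul_zero, add_zero]
    rw [hF, (ha q hq).ratDiv_pullback]
  refine ⟨σ.pullback F, fun q => ?_⟩
  by_cases hq : q = a
  · subst hq
    have hDσ := restrictDiv_divFinSupp (a := q) hσ hD
    have hBσ := restrictDiv_divFinSupp (a := q) hσ hB
    have hzero : divDegree (fun p => σ.restrictDiv q D p -
        (σ.restrictDiv q B p + ratDiv (σ.pullback F) p)) = 0 := by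
      rw [divDegree_sub hDσ (hBσ.add (ratDiv_divFinSupp _)),
        divDegree_add hBσ (ratDiv_divFinSupp _), divDegree_restrictDiv hσ hD,
        divDegree_restrictDiv hσ hB, divDegree_ratDiv, hdeg]
      ring
    rwa [divDegree, finsum_eq_single _ q fun p hp => by rw [hoff p hp, sub_self],
      sub_eq_zero] at hzero
  · exact hoff q hq

theorem divisoriallyGonal_of_injective (ha : ∀ p ≠ a, σ.LocalIsoAt p) {d : ℤ}
    (h : Δ.DivisoriallyGonal d) : Γ.DivisoriallyGonal d := by
  obtain ⟨D, hfin, hdeg, hmov⟩ := h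
  refine ⟨σ.restrictDiv a D, restrictDiv_divFinSupp hσ hfin,
    (divDegree_restrictDiv hσ hfin).trans hdeg, fun q => ?_⟩
  obtain ⟨B, hB, hq, hDB⟩ := hmov (σ.ptMap q)
  have hle := le_restrictDiv (a := a) hσ hB (hDB.divFinSupp hfin)
  exact ⟨σ.restrictDiv a B, fun p => (hB _).trans (hle p), hq.trans (hle q),
    linEquiv_restrictDiv hσ ha hfin hDB⟩

end SegmentMap

theorem sameEndsMap.loopless {f : Γ.V → Δ.V} {e : Γ.E} {e' : Δ.E} (h : sameEndsMap Γ Δ f e e')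
    (hf : Function.Injective f) (he : Γ.src e ≠ Γ.tgt e) : Δ.src e' ≠ Δ.tgt e' := fun heq =>
  he (hf (by rcases h with ⟨h1, h2⟩ | ⟨h1, h2⟩ <;> rw [h1, h2, heq]))

/-- An embedding of models which is injective on vertices and on edges. -/
structure ModelEmbedding (Γ Δ : MetricGraphModel) where
  vMap : Γ.V → Δ.V
  eMap : Γ.E → Δ.E
  vMap_injective : Function.Injective vMap
  eMap_injective : Function.Injective eMap
  ends : ∀ e, sameEndsMap Γ Δ vMap e (eMap e)
  len_eq : ∀ e, Δ.len (eMap e) = Γ.len e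

namespace ModelEmbedding

variable (ι : ModelEmbedding Γ Δ)

theorem ends_of_not_straight {e : Γ.E} (h : ι.vMap (Γ.src e) ≠ Δ.src (ι.eMap e)) :
    ι.vMap (Γ.src e) = Δ.tgt (ι.eMap e) ∧ ι.vMap (Γ.tgt e) = Δ.src (ι.eMap e) :=
  (ι.ends e).resolve_left fun hs => h hs.1

theorem vMap_tgt_of_straight {e : Γ.E} (h : ι.vMap (Γ.src e) = Δ.src (ι.eMap e)) :
    ι.vMap (Γ.tgt e) = Δ.tgt (ι.eMap e) := by
  rcases ι.ends e with hs | hs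
  exacts [hs.2, by rw [hs.2, ← h, hs.1]]

/-- The embedding as a map of metric graphs. -/
noncomputable def toSegmentMap : SegmentMap Γ Δ where
  vMap v := Sum.inl (ι.vMap v)
  edge := ι.eMap
  start e := if ι.vMap (Γ.src e) = Δ.src (ι.eMap e) then 0 else Γ.len e
  straight e := decide (ι.vMap (Γ.src e) = Δ.src (ι.eMap e))
  mem_Icc e s hs := by
    rw [ι.len_eq]
    by_cases h : ι.vMap (Γ.src e) = Δ.src (ι.eMap e)
    · simpa [h] using hs
    · simpa [h, and_comm] using hs
  src_eq e := by
    by_cases h : ι.vMap (Γ.src e) = Δ.src (ι.eMap e)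
    · simp [h, pointOn_zero]
    · rw [if_neg h, ← ι.len_eq, pointOn_len, (ι.ends_of_not_straight h).1]
  tgt_eq e := by
    by_cases h : ι.vMap (Γ.src e) = Δ.src (ι.eMap e)
    · simp [h, ι.vMap_tgt_of_straight h, ← ι.len_eq, pointOn_len]
    · simp [h, (ι.ends_of_not_straight h).2, pointOn_zero]

theorem ptMap_injective : Function.Injective ι.toSegmentMap.ptMap := by
  rintro (v | q) (v' | q') h
  · exact congrArg Sum.inl (ι.vMap_injective (Sum.inl.inj h))
  · obtain ⟨_, hq⟩ := ι.toSegmentMap.ptMap_inr_eq q'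
    cases h.trans hq
  · obtain ⟨_, hq⟩ := ι.toSegmentMap.ptMap_inr_eq q
    cases h.symm.trans hq
  · obtain ⟨_, hq⟩ := ι.toSegmentMap.ptMap_inr_eq q
    obtain ⟨_, hq'⟩ := ι.toSegmentMap.ptMap_inr_eq q'
    obtain ⟨e, s, hs⟩ := q
    obtain ⟨e', s', hs'⟩ := q'
    rw [hq, hq', Sum.inr.injEq, Sigma.mk.injEq] at h
    obtain rfl : e = e' := ι.eMap_injective h.1
    have hparam : s = s' := by
      have := congrArg Subtype.val (eq_of_heq h.2)
      cases hb : ι.toSegmentMap.straight e <;> simpa [SegmentMap.param, hb] using this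
    subst hparam
    rfl

theorem dSrc_tangentMap (x : Γ.E × Bool) :
    Δ.dSrc (ι.toSegmentMap.tangentMap x) = ι.vMap (Γ.dSrc x) := by
  obtain ⟨e, b⟩ := x
  by_cases h : ι.vMap (Γ.src e) = Δ.src (ι.eMap e)
  · cases b <;>
      simp [dSrc, SegmentMap.tangentMap, toSegmentMap, h, ι.vMap_tgt_of_straight h]
  · obtain ⟨hsrc, htgt⟩ := ι.ends_of_not_straight h
    have hstraight : ι.toSegmentMap.straight e = false := decide_eq_false h
    cases b <;> simp [dSrc, SegmentMap.tangentMap, hstraight, htgt, hsrc] <;> rfl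

theorem localIsoAt_inl {v : Γ.V} (hv : ∀ e, Δ.Incident e (ι.vMap v) → e ∈ Set.range ι.eMap) :
    ι.toSegmentMap.LocalIsoAt (Sum.inl v) := by
  refine ⟨fun x => ι.toSegmentMap.tangentMap_mem_tangents, fun x _ y _ h => ?_, fun y hy => ?_⟩
  · have he : x.1 = y.1 := ι.eMap_injective (congrArg Prod.fst h)
    have hb := congrArg Prod.snd h
    simp only [SegmentMap.tangentMap, he] at hb
    refine Prod.ext he ?_
    cases hs : ι.toSegmentMap.straight y.1 <;> simpa [hs] using hb
  · replace hy : Δ.dSrc y = ι.vMap v := mem_darts.1 hy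
    obtain ⟨e, he⟩ := hv y.1 (by
      unfold dSrc at hy
      split_ifs at hy
      exacts [Or.inl hy, Or.inr hy])
    have hxy : ι.toSegmentMap.tangentMap (e, y.2 == ι.toSegmentMap.straight e) = y :=
      Prod.ext he (by simp [SegmentMap.tangentMap])
    refine ⟨_, mem_darts.2 (ι.vMap_injective ?_), hxy⟩
    rw [← ι.dSrc_tangentMap, hxy, hy]

theorem divisoriallyGonal (a : Γ.V)
    (ha : ∀ v ≠ a, ∀ e, Δ.Incident e (ι.vMap v) → e ∈ Set.range ι.eMap) {d : ℤ}
    (h : Δ.DivisoriallyGonal d) : Γ.DivisoriallyGonal d := by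
  refine SegmentMap.divisoriallyGonal_of_injective ι.ptMap_injective (a := Sum.inl a) ?_ h
  rintro (v | q) hp
  · exact ι.localIsoAt_inl (ha v fun hv => hp (congrArg Sum.inl hv))
  · exact SegmentMap.localIsoAt_inr q

end ModelEmbedding

end MetricGraphModel

/-! ### Subdivision of an edge -/

namespace MetricGraphModel

variable {Γ Δ Δ' : MetricGraphModel}

/-- The model obtained by inserting the vertex `none` at the parameter `t` of the edge `e₀`.  The
half of `e₀` before the new vertex is `some e₀`, and the half after it is `none`. -/
noncomputable abbrev subdivision (Γ : MetricGraphModel) (e₀ : Γ.E) (t : ℝ)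
    (ht : 0 < t ∧ t < Γ.len e₀) : MetricGraphModel where
  V := Option Γ.V
  E := Option Γ.E
  fV := inferInstance
  fE := inferInstance
  dV := inferInstance
  dE := inferInstance
  src e := e.map Γ.src
  tgt e := e.elim (some (Γ.tgt e₀)) fun e => if e = e₀ then none else some (Γ.tgt e)
  len e := e.elim (Γ.len e₀ - t) fun e => if e = e₀ then t else Γ.len e
  len_pos := by
    rintro (_ | e)
    · exact sub_pos.2 ht.2
    · rw [Option.elim_some]
      split_ifs
      exacts [ht.1, Γ.len_pos e]

section Subdivision

variable {e₀ : Γ.E} {t : ℝ} {ht : 0 < t ∧ t < Γ.len e₀}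

/-- The identification of a subdivided metric graph with the original one. -/
noncomputable def subdivisionMap (e₀ : Γ.E) (t : ℝ) (ht : 0 < t ∧ t < Γ.len e₀) :
    SegmentMap (subdivision Γ e₀ t ht) Γ where
  vMap v := v.elim (Γ.pointOn e₀ t) Sum.inl
  edge e := e.getD e₀
  start e := e.elim t 0
  straight _ := true
  mem_Icc := by
    rintro (_ | e) s ⟨h0, hL⟩
    · constructor <;> simp at h0 hL ⊢ <;> linarith [ht.1]
    · simp only [Option.elim_some] at hL
      split_ifs at hL with h
      · subst h
        simpa using ⟨h0, hL.trans ht.2.le⟩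
      · simpa using ⟨h0, hL⟩
  src_eq := by
    rintro (_ | e)
    exacts [rfl, pointOn_zero e]
  tgt_eq := by
    rintro (_ | e)
    · simp [pointOn_len]
    · by_cases h : e = e₀
      · simp [h]
      · simp [h, pointOn_len]

/-- The inverse of the identification `subdivisionMap` on points. -/
noncomputable def subdivisionPt (e₀ : Γ.E) (t : ℝ) (ht : 0 < t ∧ t < Γ.len e₀) :
    Γ.Pt → (subdivision Γ e₀ t ht).Pt
  | Sum.inl v => Sum.inl (some v)
  | Sum.inr ⟨e, s⟩ =>
      if e = e₀ ∧ t < s then (subdivision Γ e₀ t ht).pointOn none (s - t)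
      else (subdivision Γ e₀ t ht).pointOn (some e) s

theorem subdivisionPt_ptMap (p : (subdivision Γ e₀ t ht).Pt) :
    subdivisionPt e₀ t ht ((subdivisionMap e₀ t ht).ptMap p) = p := by
  rcases p with (_ | v) | ⟨e, s, hs⟩
  · have hself : (subdivision Γ e₀ t ht).pointOn (some e₀) t = Sum.inl none := by
      simp [pointOn, ht.1]
    simpa [SegmentMap.ptMap, subdivisionMap, pointOn_of_mem ht, subdivisionPt] using hself
  · rfl
  · obtain ⟨_, hq⟩ := (subdivisionMap e₀ t ht).ptMap_inr_eq ⟨e, s, hs⟩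
    rw [hq]
    rcases e with _ | e
    · simp [subdivisionPt, subdivisionMap, SegmentMap.param, hs.1, pointOn_of_mem hs]
    · have hle : e = e₀ → s ≤ t := by
        rintro rfl
        simpa using hs.2.le
      have hnot : ¬(e = e₀ ∧ t < s) := fun h => (hle h.1).not_gt h.2
      simpa [subdivisionPt, subdivisionMap, SegmentMap.param, hnot] using pointOn_of_mem hs

theorem ptMap_subdivisionPt (p : Γ.Pt) :
    (subdivisionMap e₀ t ht).ptMap (subdivisionPt e₀ t ht p) = p := by
  rcases p with v | ⟨e, s, hs⟩
  · rfl
  simp only [subdivisionPt]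
  split_ifs with h
  · obtain ⟨rfl, hts⟩ := h
    rw [SegmentMap.ptMap_pointOn _ ⟨sub_nonneg.2 hts.le, sub_le_sub_right hs.2.le t⟩]
    simp [subdivisionMap, SegmentMap.param, pointOn_of_mem hs]
  · rw [SegmentMap.ptMap_pointOn _ ⟨hs.1.le, ?_⟩]
    · simp [subdivisionMap, SegmentMap.param, pointOn_of_mem hs]
    · simp only [Option.elim_some]
      split_ifs with he
      exacts [not_lt.1 fun hts => h ⟨he, hts⟩, hs.2.le]

theorem subdivisionMap_bijective : Function.Bijective (subdivisionMap e₀ t ht).ptMap :=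
  Function.bijective_iff_has_inverse.2 ⟨_, subdivisionPt_ptMap, ptMap_subdivisionPt⟩

theorem localIsoAt_subdivisionMap (p : (subdivision Γ e₀ t ht).Pt) :
    (subdivisionMap e₀ t ht).LocalIsoAt p := by
  rcases p with v | q
  swap
  · exact SegmentMap.localIsoAt_inr q
  refine ⟨fun x => SegmentMap.tangentMap_mem_tangents _, ?_, ?_⟩
  · rintro ⟨_ | e, b⟩ hx ⟨_ | e', b'⟩ hy h <;>
      replace hx := (mem_darts.1 hx).trans (mem_darts.1 hy).symm <;>
      cases b <;> cases b' <;> simp_all [dSrc, SegmentMap.tangentMap, subdivisionMap]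
  · rintro ⟨e, b⟩ hy
    rcases v with _ | v
    · have hmid : (subdivisionMap e₀ t ht).ptMap (Sum.inl none) = Sum.inr ⟨e₀, t, ht⟩ :=
        pointOn_of_mem ht
      obtain rfl : e = e₀ := by
        rw [hmid] at hy
        rcases (by simpa [tangents] using hy : _ ∨ _) with h | h <;> exact h.1
      refine ⟨(if b then none else some e, b), mem_darts.2 ?_, ?_⟩
      · cases b <;> simp [dSrc]
      · cases b <;> rfl
    · replace hy : Γ.dSrc (e, b) = v := mem_darts.1 hy
      by_cases h : e = e₀ ∧ b = false
      · obtain ⟨rfl, rfl⟩ := h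
        exact ⟨(none, false), mem_darts.2 (congrArg some hy), rfl⟩
      · refine ⟨(some e, b), mem_darts.2 ?_, by simp [SegmentMap.tangentMap, subdivisionMap]⟩
        cases b <;> simp_all [dSrc]

theorem seriesReduction_subdivision : SeriesReduction (subdivision Γ e₀ t ht) Γ := by
  refine ⟨none, some e₀, none, some (Γ.src e₀), some (Γ.tgt e₀), Option.some_ne_none _, ?_,
    Option.some_ne_none _, Option.some_ne_none _, ?_, rfl,
    ⟨fun v => ⟨some v, Option.some_ne_none _⟩, fun v => v.1.get (Option.isSome_iff_ne_none.2 v.2),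
      fun v => rfl, fun v => by simp⟩, e₀,
    ⟨fun e => ⟨some e.1, fun h => e.2 (Option.some.inj h), Option.some_ne_none _⟩,
      fun e => ⟨e.1.get (Option.isSome_iff_ne_none.2 e.2.2), fun h => e.2.1 (by simp [← h])⟩,
      fun e => rfl, fun e => by simp⟩, ?_, rfl, fun e => Or.inl ⟨rfl, ?_⟩, fun e => if_neg e.2⟩
  · have hother : ∀ e ≠ e₀, (subdivision Γ e₀ t ht).incid (some e) none = 0 := fun e he => by
      simp [incid, he]
    rw [valence, Fintype.sum_option, Finset.sum_eq_single e₀ (fun e _ => hother e) (by simp)]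
    simp [incid]
  · simp [Set.pair_comm]
  · simp
  · exact (if_neg e.2).symm

end Subdivision

end MetricGraphModel

/-! ### Invariance of gonality under reductions -/

namespace MetricGraphModel

variable {Γ Δ Δ' : MetricGraphModel}

/-- The inverse of an isomorphism, as an embedding. -/
def ModelEmbedding.ofIso (ι : MGMIso Δ Δ') : ModelEmbedding Δ' Δ where
  vMap := ι.vEquiv.symm
  eMap := ι.eEquiv.symm
  vMap_injective := ι.vEquiv.symm.injective
  eMap_injective := ι.eEquiv.symm.injective
  ends e := by
    have h := ι.ends (ι.eEquiv.symm e)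
    simp only [sameEndsMap, Equiv.apply_symm_apply, Equiv.symm_apply_eq] at h ⊢
    exact h.imp (And.imp Eq.symm Eq.symm) fun h => ⟨h.2.symm, h.1.symm⟩
  len_eq e := by rw [← ι.len_eq, Equiv.apply_symm_apply]

theorem src_ne_tgt_of_valence_eq_one {v : Γ.V} {e : Γ.E} (hv : Γ.valence v = 1)
    (he : Γ.Incident e v) : Γ.src e ≠ Γ.tgt e := fun hloop => by
  have hle : Γ.incid e v ≤ Γ.valence v :=
    Finset.single_le_sum (f := fun e => Γ.incid e v) (fun _ _ => Nat.zero_le _) (Finset.mem_univ e)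
  have hsrc : Γ.src e = v := he.elim id hloop.trans
  rw [incid, if_pos hsrc, if_pos (hloop ▸ hsrc), hv] at hle
  omega

theorem src_ne_tgt_of_pair_eq {v u : Γ.V} {e : Γ.E}
    (h : ({Γ.src e, Γ.tgt e} : Set Γ.V) = {v, u}) (hu : u ≠ v) : Γ.src e ≠ Γ.tgt e := by
  intro hloop
  rcases Set.pair_eq_pair_iff.1 h with ⟨hs, ht⟩ | ⟨hs, ht⟩
  exacts [hu (by rw [← hs, ← ht, hloop]), hu (by rw [← hs, ← ht, hloop])]

theorem exists_other_end {v : Γ.V} {e : Γ.E} (hv : Γ.Incident e v) (he : Γ.src e ≠ Γ.tgt e) :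
    ∃ w ≠ v, ∀ u, Γ.Incident e u → u = v ∨ u = w := by
  rcases hv with rfl | rfl
  · exact ⟨_, he.symm, fun u hu => hu.imp Eq.symm Eq.symm⟩
  · exact ⟨_, he, fun u hu => hu.symm.imp Eq.symm Eq.symm⟩

theorem LeafDeletion.divisoriallyGonal (hΔ : LeafDeletion Δ Δ') {d : ℤ}
    (h : Δ.DivisoriallyGonal d) : Δ'.DivisoriallyGonal d := by
  obtain ⟨v₀, e₀, hval, hinc, fv, fe, hends, hlen⟩ := hΔ
  obtain ⟨w, hw, hother⟩ := exists_other_end hinc (src_ne_tgt_of_valence_eq_one hval hinc)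
  let ι : ModelEmbedding Δ' Δ := ⟨fun v => (fv v).1, fun e => (fe e).1,
    Subtype.val_injective.comp fv.injective, Subtype.val_injective.comp fe.injective, hends, hlen⟩
  refine ι.divisoriallyGonal (fv.symm ⟨w, hw⟩) (fun v hv e he => ?_) h
  have hne : e ≠ e₀ := by
    rintro rfl
    rcases hother _ he with hv₀ | hvw
    · exact (fv v).2 hv₀
    · exact hv (fv.eq_symm_apply.2 (Subtype.ext hvw))
  exact ⟨fe.symm ⟨e, hne⟩, by simp [ι]⟩

section Series

variable {v₀ u₁ u₂ : Δ.V} {e₁ e₂ : Δ.E} {ebar : Δ'.E}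

/-- The edges of a subdivided model, matched with those of a model in which the two halves of
`ebar` are `e₁` and `e₂`. -/
def seriesEdge (e₁ e₂ : Δ.E) (fe : {e : Δ'.E // e ≠ ebar} ≃ {e : Δ.E // e ≠ e₁ ∧ e ≠ e₂})
    (e : Option Δ'.E) : Δ.E :=
  e.elim e₂ fun e => if h : e = ebar then e₁ else (fe ⟨e, h⟩).1

theorem seriesEdge_injective (hne : e₁ ≠ e₂)
    (fe : {e : Δ'.E // e ≠ ebar} ≃ {e : Δ.E // e ≠ e₁ ∧ e ≠ e₂}) :
    Function.Injective (seriesEdge e₁ e₂ fe) := by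
  have _ (e) : (fe e).1 ≠ e₁ ∧ (fe e).1 ≠ e₂ := (fe e).2
  have hinj (e e') (h : (fe e).1 = (fe e').1) : e.1 = e'.1 :=
    congrArg Subtype.val (fe.injective (Subtype.ext h))
  rintro (_ | e) (_ | e') h <;> simp only [seriesEdge, Option.elim] at h <;> grind

theorem seriesEdge_surjective (fe : {e : Δ'.E // e ≠ ebar} ≃ {e : Δ.E // e ≠ e₁ ∧ e ≠ e₂}) :
    Function.Surjective (seriesEdge e₁ e₂ fe) := fun e => by
  by_cases h₁ : e = e₁
  · exact ⟨some ebar, by simp [seriesEdge, h₁]⟩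
  by_cases h₂ : e = e₂
  · exact ⟨none, h₂.symm⟩
  · refine ⟨some (fe.symm ⟨e, h₁, h₂⟩).1, ?_⟩
    simp [seriesEdge, (fe.symm ⟨e, h₁, h₂⟩).2]

/-- The embedding of a subdivided model onto a model that reduces to the original one. -/
noncomputable def ModelEmbedding.ofSeries (hne : e₁ ≠ e₂)
    (h₁ : ({Δ.src e₁, Δ.tgt e₁} : Set Δ.V) = {v₀, u₁})
    (h₂ : ({Δ.src e₂, Δ.tgt e₂} : Set Δ.V) = {v₀, u₂})
    (fv : Δ'.V ≃ {v : Δ.V // v ≠ v₀})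
    (fe : {e : Δ'.E // e ≠ ebar} ≃ {e : Δ.E // e ≠ e₁ ∧ e ≠ e₂})
    (ht : 0 < Δ.len e₁ ∧ Δ.len e₁ < Δ'.len ebar) (hlen : Δ'.len ebar = Δ.len e₁ + Δ.len e₂)
    (hsrc : (fv (Δ'.src ebar)).1 = u₁) (htgt : (fv (Δ'.tgt ebar)).1 = u₂)
    (hends : ∀ e : {e : Δ'.E // e ≠ ebar}, sameEndsMap Δ' Δ (fun v => (fv v).1) e.1 (fe e).1)
    (hlens : ∀ e : {e : Δ'.E // e ≠ ebar}, Δ.len (fe e).1 = Δ'.len e.1) :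
    ModelEmbedding (subdivision Δ' ebar (Δ.len e₁) ht) Δ where
  vMap v := Equiv.optionSubtypeNe v₀ (v.map fv)
  eMap := seriesEdge e₁ e₂ fe
  vMap_injective := (Equiv.optionSubtypeNe v₀).injective.comp (Option.map_injective fv.injective)
  eMap_injective := seriesEdge_injective hne fe
  ends := by
    rintro (_ | e)
    · rcases Set.pair_eq_pair_iff.1 h₂ with h | h <;>
        simp [sameEndsMap, seriesEdge, htgt, h]
    · by_cases h : e = ebar
      · subst h
        rcases Set.pair_eq_pair_iff.1 h₁ with h | h <;>
          simp [sameEndsMap, seriesEdge, hsrc, h]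
      · simpa [sameEndsMap, seriesEdge, h] using hends ⟨e, h⟩
  len_eq := by
    rintro (_ | e)
    · simp [seriesEdge, hlen]
    · by_cases h : e = ebar
      · simp [seriesEdge, h]
      · simpa [seriesEdge, h] using hlens ⟨e, h⟩

end Series

theorem SeriesReduction.divisoriallyGonal (hΔ : SeriesReduction Δ Δ') {d : ℤ}
    (h : Δ.DivisoriallyGonal d) : Δ'.DivisoriallyGonal d := by
  obtain ⟨v₀, e₁, e₂, u₁, u₂, hne, -, -, -, h₁, h₂, fv, ebar, fe, hlen, hbar, hends, hlens⟩ := hΔ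
  have hpos₁ := Δ.len_pos e₁
  have hpos₂ := Δ.len_pos e₂
  rcases Set.pair_eq_pair_iff.1 hbar with ⟨hsrc, htgt⟩ | ⟨hsrc, htgt⟩
  · exact SegmentMap.divisoriallyGonal_of_bijective subdivisionMap_bijective
      localIsoAt_subdivisionMap ((ModelEmbedding.ofSeries hne h₁ h₂ fv fe
        ⟨hpos₁, by linarith⟩ hlen hsrc htgt hends hlens).divisoriallyGonal none
        (fun _ _ e _ => seriesEdge_surjective fe e) h)
  · let fe' := fe.trans (Equiv.subtypeEquivRight fun e => and_comm)
    exact SegmentMap.divisoriallyGonal_of_bijective subdivisionMap_bijective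
      localIsoAt_subdivisionMap ((ModelEmbedding.ofSeries hne.symm h₂ h₁ fv fe'
        ⟨hpos₂, by linarith⟩ (by linarith) hsrc htgt hends hlens).divisoriallyGonal none
        (fun _ _ e _ => seriesEdge_surjective fe' e) h)

theorem ReductionStep.divisoriallyGonal (hΔ : ReductionStep Δ Δ') [Nonempty Δ'.V] {d : ℤ}
    (h : Δ.DivisoriallyGonal d) : Δ'.DivisoriallyGonal d := by
  rcases hΔ with hΔ | hΔ | ⟨⟨ι⟩⟩
  · exact LeafDeletion.divisoriallyGonal hΔ h
  · exact SeriesReduction.divisoriallyGonal hΔ h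
  · exact (ModelEmbedding.ofIso ι).divisoriallyGonal (Classical.arbitrary _)
      (fun _ _ e _ => ι.eEquiv.symm.surjective e) h

theorem ReductionStep.loopless (hΔ : ReductionStep Δ Δ') (h : Δ'.Loopless) : Δ.Loopless := by
  intro e
  rcases hΔ with ⟨v₀, e₀, hval, hinc, fv, fe, hends, -⟩ | hΔ | ⟨⟨ι⟩⟩
  · by_cases he : e = e₀
    · exact he ▸ src_ne_tgt_of_valence_eq_one hval hinc
    · have := (hends (fe.symm ⟨e, he⟩)).loopless
        (Subtype.val_injective.comp fv.injective) (h _)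
      simpa using this
  · obtain ⟨v₀, e₁, e₂, u₁, u₂, -, -, hu₁, hu₂, h₁, h₂, fv, ebar, fe, -, -, hends, -⟩ := hΔ
    by_cases he₁ : e = e₁
    · exact he₁ ▸ src_ne_tgt_of_pair_eq h₁ hu₁
    by_cases he₂ : e = e₂
    · exact he₂ ▸ src_ne_tgt_of_pair_eq h₂ hu₂
    · have := (hends (fe.symm ⟨e, he₁, he₂⟩)).loopless
        (Subtype.val_injective.comp fv.injective) (h _)
      simpa using this
  · have := ((ModelEmbedding.ofIso ι).ends (ι.eEquiv e)).loopless ι.vEquiv.symm.injective (h _)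
    simpa [ModelEmbedding.ofIso] using this

theorem ReductionStep.nonempty (hΔ : ReductionStep Δ Δ') (h : Nonempty Δ'.V) : Nonempty Δ.V := by
  rcases hΔ with ⟨v₀, -⟩ | ⟨v₀, -⟩ | ⟨⟨ι⟩⟩
  · exact ⟨v₀⟩
  · exact ⟨v₀⟩
  · exact h.map ι.vEquiv.symm

theorem Reduces.divisoriallyGonal (hΔ : Reduces Δ Γ) (hl : Γ.Loopless) (hne : Nonempty Γ.V) {d : ℤ}
    (h : Δ.Loopless → Nonempty Δ.V → Δ.DivisoriallyGonal d) : Γ.DivisoriallyGonal d := by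
  induction hΔ using Relation.ReflTransGen.head_induction_on with
  | refl => exact h hl hne
  | head hstep _ ih =>
    exact ih fun hl' hne' => ReductionStep.divisoriallyGonal hstep
      (h (ReductionStep.loopless hstep hl') (ReductionStep.nonempty hstep hne'))

theorem Trigonal.divisoriallyGonal (hΓ : Trigonal Γ) (hl : Γ.Loopless) (hne : Nonempty Γ.V) :
    Γ.DivisoriallyGonal 3 := by
  obtain ⟨Δ, T, hΔ, hT, φ, hφ, hφ', hd⟩ := hΓ
  exact Reduces.divisoriallyGonal hΔ hl hne fun hl' _ => φ.divisoriallyGonal hl' hT hφ hφ' hd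

end MetricGraphModel

/-! ### Cuts and admissible divisors -/

namespace MetricGraphModel

variable {Δ : MetricGraphModel}

/-- The oriented edges leaving a set of vertices. -/
noncomputable def cut (Δ : MetricGraphModel) (U : Finset Δ.V) : Finset (Δ.E × Bool) :=
  {x | Δ.dSrc x ∈ U ∧ Δ.dTgt x ∉ U}

theorem mem_cut {U : Finset Δ.V} {x : Δ.E × Bool} :
    x ∈ Δ.cut U ↔ Δ.dSrc x ∈ U ∧ Δ.dTgt x ∉ U := by
  simp [cut]

theorem dSrc_not (e : Δ.E) (b : Bool) : Δ.dSrc (e, !b) = Δ.dTgt (e, b) := by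
  cases b <;> rfl

theorem dTgt_not (e : Δ.E) (b : Bool) : Δ.dTgt (e, !b) = Δ.dSrc (e, b) := by
  cases b <;> rfl

theorem incident_dSrc (x : Δ.E × Bool) : Δ.Incident x.1 (Δ.dSrc x) := by
  obtain ⟨e, _ | _⟩ := x
  exacts [Or.inr rfl, Or.inl rfl]

theorem incident_dTgt (x : Δ.E × Bool) : Δ.Incident x.1 (Δ.dTgt x) := by
  obtain ⟨e, _ | _⟩ := x
  exacts [Or.inl rfl, Or.inr rfl]

namespace EdgewiseAffine

variable (g h : EdgewiseAffine Δ)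

theorem dartSlope_not (e : Δ.E) (b : Bool) : g.dartSlope (e, !b) = -g.dartSlope (e, b) := by
  cases b <;> simp [dartSlope]

theorem dartSlope_neg_iff {x : Δ.E × Bool} :
    g.dartSlope x < 0 ↔ g.val (Δ.dTgt x) < g.val (Δ.dSrc x) := by
  rw [← sub_neg (a := g.val (Δ.dTgt x)), val_dTgt_sub_val_dSrc,
    ← not_iff_not, not_lt, not_lt, mul_nonneg_iff_of_pos_right (Δ.len_pos _), Int.cast_nonneg_iff]

theorem dartSlope_eq_zero_iff {x : Δ.E × Bool} :
    g.dartSlope x = 0 ↔ g.val (Δ.dTgt x) = g.val (Δ.dSrc x) := by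
  rw [← sub_eq_zero (a := g.val (Δ.dTgt x)), val_dTgt_sub_val_dSrc, mul_eq_zero,
    or_iff_left (Δ.len_pos _).ne', Int.cast_eq_zero]

theorem sum_vertexDiv (U : Finset Δ.V) :
    ∑ v ∈ U, g.vertexDiv v = ∑ x ∈ Δ.cut U, g.dartSlope x := by
  have hstart : ∑ v ∈ U, g.vertexDiv v = ∑ x with Δ.dSrc x ∈ U, g.dartSlope x := by
    rw [← Finset.sum_fiberwise_of_maps_to (t := U) (g := Δ.dSrc) (by simp)]
    refine Finset.sum_congr rfl fun v hv => Finset.sum_congr ?_ fun _ _ => rfl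
    ext x
    rw [mem_darts]
    simp only [Finset.mem_filter, Finset.mem_univ, true_and]
    exact ⟨fun h => ⟨h ▸ hv, h⟩, And.right⟩
  have hinner : ∑ x with Δ.dSrc x ∈ U ∧ Δ.dTgt x ∈ U, g.dartSlope x = 0 := by
    refine Finset.sum_involution (fun x _ => (x.1, !x.2)) (fun x _ => ?_) (fun x _ _ hx => ?_)
      (fun x hx => ?_) fun x _ => by simp
    · rw [dartSlope_not, add_neg_cancel]
    · simpa using congrArg Prod.snd hx
    · simpa [dSrc_not, dTgt_not, and_comm] using hx
  rw [hstart, ← Finset.sum_filter_add_sum_filter_not _ (fun x => Δ.dTgt x ∈ U),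
    Finset.filter_filter, Finset.filter_filter, hinner, zero_add]
  rfl

section

variable {g} {U : Finset Δ.V} {x : Δ.E × Bool}

theorem sum_vertexDiv_le (hU : ∀ x ∈ Δ.cut U, g.dartSlope x < 0) :
    ∑ v ∈ U, g.vertexDiv v ≤ -(Δ.cut U).card := by
  rw [sum_vertexDiv]
  simpa using Finset.sum_le_card_nsmul (Δ.cut U) g.dartSlope (-1) fun y hy => by
    have := hU y hy
    omega

theorem sum_vertexDiv_lt (hU : ∀ x ∈ Δ.cut U, g.dartSlope x < 0) (hx : x ∈ Δ.cut U)
    (hslope : g.dartSlope x < -1) : ∑ v ∈ U, g.vertexDiv v < -(Δ.cut U).card := by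
  rw [sum_vertexDiv]
  have hlt : ∑ x ∈ Δ.cut U, g.dartSlope x < ∑ _y ∈ Δ.cut U, (-1 : ℤ) :=
    Finset.sum_lt_sum (fun y hy => Int.le_sub_one_of_lt (hU y hy)) ⟨x, hx, hslope⟩
  simpa using hlt

theorem sum_vertexDiv_lt_card (hg : ∀ x, g.dartSlope x ≤ 1) (hx : x ∈ Δ.cut U)
    (hslope : g.dartSlope x = 0) : ∑ v ∈ U, g.vertexDiv v < (Δ.cut U).card := by
  rw [sum_vertexDiv]
  have hlt : ∑ x ∈ Δ.cut U, g.dartSlope x < ∑ _y ∈ Δ.cut U, (1 : ℤ) :=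
    Finset.sum_lt_sum (fun y _ => hg y) ⟨x, hx, hslope ▸ zero_lt_one⟩
  simpa using hlt

end

/-- The opposite of an edgewise affine function. -/
def neg : EdgewiseAffine Δ where
  val v := -g.val v
  slope e := -g.slope e
  val_sub_val e := by
    push_cast
    linarith [g.val_sub_val e]

theorem vertexDiv_neg (v : Δ.V) : g.neg.vertexDiv v = -g.vertexDiv v := by
  rw [vertexDiv, vertexDiv, ← Finset.sum_neg_distrib]
  refine Finset.sum_congr rfl fun x _ => ?_
  obtain ⟨e, _ | _⟩ := x <;> simp [dartSlope, neg]

/-- The difference of two edgewise affine functions. -/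
def sub : EdgewiseAffine Δ where
  val v := g.val v - h.val v
  slope e := g.slope e - h.slope e
  val_sub_val e := by
    push_cast
    linarith [g.val_sub_val e, h.val_sub_val e]

theorem vertexDiv_sub (v : Δ.V) : (g.sub h).vertexDiv v = g.vertexDiv v - h.vertexDiv v := by
  rw [vertexDiv, vertexDiv, vertexDiv, ← Finset.sum_sub_distrib]
  refine Finset.sum_congr rfl fun x _ => ?_
  obtain ⟨e, _ | _⟩ := x <;> simp [dartSlope, sub]
  ring

/-- The vertices at which the value exceeds `c`. -/
noncomputable def superlevel (c : ℝ) : Finset Δ.V := {v | c < g.val v}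

variable {g} in
theorem mem_superlevel {c : ℝ} {v : Δ.V} : v ∈ g.superlevel c ↔ c < g.val v := by
  simp [superlevel]

variable {g} in
theorem dartSlope_neg_of_mem_cut_superlevel {c : ℝ} {x : Δ.E × Bool}
    (hx : x ∈ Δ.cut (g.superlevel c)) : g.dartSlope x < 0 := by
  rw [mem_cut, mem_superlevel, mem_superlevel, not_lt] at hx
  exact g.dartSlope_neg_iff.2 (hx.2.trans_lt hx.1)

end EdgewiseAffine

/-- A model obtained by subdividing a graph with edges indexed by `E₀`: `vertexEdge v` is the
original edge containing `v` in its interior, and `none` if `v` is an original vertex.  Every cut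
has at least two edges, and at least `d` if it separates two original vertices. -/
structure Refinement (Δ : MetricGraphModel) (E₀ : Type) (d : ℕ) where
  vertexEdge : Δ.V → Option E₀
  edgeOf : Δ.E → E₀
  vertexEdge_of_incident : ∀ e v, Δ.Incident e v → vertexEdge v = none ∨ vertexEdge v = edgeOf e
  exists_original : ∃ v, vertexEdge v = none
  two_le_card_cut : ∀ U : Finset Δ.V, U.Nonempty → U ≠ Finset.univ → 2 ≤ (Δ.cut U).card
  le_card_cut : ∀ U : Finset Δ.V, (∃ v ∈ U, vertexEdge v = none) →
    (∃ v ∉ U, vertexEdge v = none) → d ≤ (Δ.cut U).card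

namespace Refinement

variable {E₀ : Type} {d : ℕ}

/-- Effective divisors of degree `d`, supported at vertices, with at most one chip in the interior
of each original edge. -/
structure IsAdmissible (R : Refinement Δ E₀ d) (P : Δ.V → ℤ) : Prop where
  nonneg : ∀ v, 0 ≤ P v
  sum_eq : ∑ v, P v = d
  le_unitDiv : ∀ e₀, ∃ p, ∀ v, R.vertexEdge v = some e₀ → P v ≤ unitDiv Δ p (Sum.inl v)

variable {R : Refinement Δ E₀ d} {P Q : Δ.V → ℤ} {g : EdgewiseAffine Δ}

theorem IsAdmissible.sum_le (hP : R.IsAdmissible P) (U : Finset Δ.V) : ∑ v ∈ U, P v ≤ d := by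
  rw [← hP.sum_eq]
  exact Finset.sum_le_univ_sum_of_nonneg hP.nonneg

theorem sum_unitDiv_inl_le_one (p : Δ.Pt) (U : Finset Δ.V) :
    ∑ v ∈ U, unitDiv Δ p (Sum.inl v) ≤ 1 := by
  refine (Finset.sum_le_univ_sum_of_nonneg fun v => unitDiv_nonneg p (Sum.inl v)).trans ?_
  rcases p with w | q <;> simp [unitDiv]

theorem IsAdmissible.sum_le_one (hP : R.IsAdmissible P) {U : Finset Δ.V} {e₀ : E₀}
    (hU : ∀ v ∈ U, R.vertexEdge v = some e₀) : ∑ v ∈ U, P v ≤ 1 := by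
  obtain ⟨p, hp⟩ := hP.le_unitDiv e₀
  exact (Finset.sum_le_sum fun v hv => hp v (hU v hv)).trans (sum_unitDiv_inl_le_one p U)

theorem IsAdmissible.sum_add_sum_vertexDiv_nonneg (hQ : R.IsAdmissible Q)
    (hg : ∀ v, Q v = P v + g.vertexDiv v) (U : Finset Δ.V) :
    0 ≤ ∑ v ∈ U, P v + ∑ v ∈ U, g.vertexDiv v := by
  rw [← Finset.sum_add_distrib]
  exact Finset.sum_nonneg fun v _ => hg v ▸ hQ.nonneg v

variable (hP : R.IsAdmissible P) (hQ : R.IsAdmissible Q) (hg : ∀ v, Q v = P v + g.vertexDiv v)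
include hP hQ hg

/-- Otherwise the part of the maximum set inside some original edge would lose at least two chips,
one along each edge leaving it. -/
theorem exists_original_isMax : ∃ x, R.vertexEdge x = none ∧ ∀ v, g.val v ≤ g.val x := by
  obtain ⟨m, hm⟩ := R.exists_original
  have : Nonempty Δ.V := ⟨m⟩
  obtain ⟨x, hx⟩ := Finite.exists_max g.val
  by_contra! hcon
  have hinner : ∀ v, g.val v = g.val x → R.vertexEdge v ≠ none := fun v hv h => by
    obtain ⟨w, hw⟩ := hcon v h
    exact (hv ▸ hw).not_ge (hx w)
  obtain ⟨e₀, he₀⟩ := Option.ne_none_iff_exists'.1 (hinner x rfl)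
  let U : Finset Δ.V := {v | g.val v = g.val x ∧ R.vertexEdge v = some e₀}
  have hU : ∀ {v}, v ∈ U ↔ g.val v = g.val x ∧ R.vertexEdge v = some e₀ := by simp [U]
  have hdown : ∀ y ∈ Δ.cut U, g.dartSlope y < 0 := fun y hy => by
    rw [mem_cut, hU, hU] at hy
    obtain ⟨⟨hsrc, hsrcE⟩, htgt⟩ := hy
    refine g.dartSlope_neg_iff.2 (hsrc ▸ (hx _).lt_of_ne fun heq => htgt ⟨heq, ?_⟩)
    have hE₁ := (R.vertexEdge_of_incident y.1 _ (incident_dSrc y)).resolve_left (hinner _ hsrc)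
    have hE₂ := (R.vertexEdge_of_incident y.1 _ (incident_dTgt y)).resolve_left (hinner _ heq)
    rw [hE₂, ← hE₁, hsrcE]
  have hcut := R.two_le_card_cut U ⟨x, hU.2 ⟨rfl, he₀⟩⟩ fun h =>
    hinner m (hU.1 (h ▸ Finset.mem_univ m)).1 hm
  have hloss := EdgewiseAffine.sum_vertexDiv_le hdown
  have hone := hP.sum_le_one (U := U) fun v hv => (hU.1 hv).2
  have hnonneg := hQ.sum_add_sum_vertexDiv_nonneg hg U
  omega

theorem exists_original_isMin : ∃ x, R.vertexEdge x = none ∧ ∀ v, g.val x ≤ g.val v := by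
  obtain ⟨x, hx, hmax⟩ := exists_original_isMax (g := g.neg) hQ hP fun v => by
    rw [g.vertexDiv_neg, hg]
    ring
  exact ⟨x, hx, fun v => neg_le_neg_iff.1 (hmax v)⟩

/-- At least `d` edges leave the superlevel set, each taking away at least one of its at most `d`
chips, so all these bounds are equalities. -/
theorem superlevel_tight {x y : Δ.V} (hxy : g.val y < g.val x) :
    ∑ v ∈ g.superlevel (g.val y), P v = d ∧ (Δ.cut (g.superlevel (g.val y))).card = d ∧
      ∀ z ∈ Δ.cut (g.superlevel (g.val y)), g.dartSlope z = -1 := by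
  set U := g.superlevel (g.val y)
  obtain ⟨a, ha, hmax⟩ := exists_original_isMax hP hQ hg
  obtain ⟨b, hb, hmin⟩ := exists_original_isMin hP hQ hg
  have hcut := R.le_card_cut U ⟨a, EdgewiseAffine.mem_superlevel.2 (hxy.trans_le (hmax x)), ha⟩
    ⟨b, fun h => (EdgewiseAffine.mem_superlevel.1 h).not_ge (hmin y), hb⟩
  have hneg : ∀ z ∈ Δ.cut U, g.dartSlope z < 0 :=
    fun z => EdgewiseAffine.dartSlope_neg_of_mem_cut_superlevel
  have hloss := EdgewiseAffine.sum_vertexDiv_le hneg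
  have hle := hP.sum_le U
  have hnonneg := hQ.sum_add_sum_vertexDiv_nonneg hg U
  refine ⟨by omega, by omega, fun z hz => ?_⟩
  by_contra hz'
  have hz₀ := hneg z hz
  have hlt := EdgewiseAffine.sum_vertexDiv_lt hneg hz (by omega)
  omega

theorem val_le_of_pos {v : Δ.V} (hv : 0 < P v) (w : Δ.V) : g.val w ≤ g.val v := by
  by_contra! hlt
  have htight := (superlevel_tight hP hQ hg hlt).1
  have hle := hP.sum_le (insert v (g.superlevel (g.val v)))
  rw [Finset.sum_insert (by simp [EdgewiseAffine.mem_superlevel]), htight] at hle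
  omega

theorem le_val_of_pos {v : Δ.V} (hv : 0 < Q v) (w : Δ.V) : g.val v ≤ g.val w :=
  neg_le_neg_iff.1 <| val_le_of_pos (g := g.neg) hQ hP
    (fun v => by rw [g.vertexDiv_neg, hg]; ring) hv w

theorem neg_one_le_dartSlope (x : Δ.E × Bool) : -1 ≤ g.dartSlope x := by
  rcases lt_or_ge (g.dartSlope x) 0 with hneg | hnonneg
  · have hlt := g.dartSlope_neg_iff.1 hneg
    refine ((superlevel_tight hP hQ hg hlt).2.2 x ?_).ge
    simp [mem_cut, EdgewiseAffine.mem_superlevel, hlt]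
  · omega

theorem val_lt_of_pos (hne : P ≠ Q) {v w : Δ.V} (hv : 0 < P v) (hw : 0 < Q w) :
    g.val w < g.val v := by
  refine (val_le_of_pos hP hQ hg hv w).lt_of_ne fun h => hne (funext fun z => ?_)
  have hconst : ∀ z, g.val z = g.val v := fun z =>
    (val_le_of_pos hP hQ hg hv z).antisymm (h ▸ le_val_of_pos hP hQ hg hw z)
  rw [hg, EdgewiseAffine.vertexDiv, Finset.sum_eq_zero fun x _ => ?_, add_zero]
  rw [g.dartSlope_eq_zero_iff, hconst, hconst (Δ.dSrc x)]

end Refinement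

end MetricGraphModel

/-! ### The quotient tree -/

namespace MetricGraphModel

variable {Δ : MetricGraphModel} {E₀ : Type} {d : ℕ}

theorem exists_isWalk_of_reflTransGen {u v : Δ.V}
    (h : Relation.ReflTransGen (fun u v => ∃ x, Δ.dSrc x = u ∧ Δ.dTgt x = v) u v) :
    ∃ L, IsWalk Δ L u v := by
  induction h using Relation.ReflTransGen.head_induction_on with
  | refl => exact ⟨[], rfl⟩
  | head hstep _ ih =>
    obtain ⟨x, rfl, rfl⟩ := hstep
    obtain ⟨L, hL⟩ := ih
    exact ⟨x :: L, rfl, hL⟩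

/-- Pairwise equivalent admissible divisors whose supports cover all vertices; the equivalences are
realised by differences of edgewise affine functions. -/
structure ChipPartition (R : Refinement Δ E₀ d) (ι : Type) where
  div : ι → Δ.V → ℤ
  div_injective : Function.Injective div
  isAdmissible : ∀ i, R.IsAdmissible (div i)
  potential : ι → EdgewiseAffine Δ
  div_sub_div : ∀ i j v, div j v - div i v = (potential j).vertexDiv v - (potential i).vertexDiv v
  exists_pos : ∀ v, ∃ i, 0 < div i v

namespace ChipPartition

variable {R : Refinement Δ E₀ d} {ι : Type} (F : ChipPartition R ι) {i j k : ι} {u v w : Δ.V}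
  {x y : Δ.E × Bool}

/-- A function whose divisor is `div j - div i`. -/
def diff (i j : ι) : EdgewiseAffine Δ := (F.potential j).sub (F.potential i)

theorem div_eq (i j : ι) (v : Δ.V) : F.div j v = F.div i v + (F.diff i j).vertexDiv v := by
  rw [diff, EdgewiseAffine.vertexDiv_sub, ← F.div_sub_div]
  ring

theorem diff_val_add (i k j : ι) (v : Δ.V) :
    (F.diff i k).val v + (F.diff k j).val v = (F.diff i j).val v := by
  simp [diff, EdgewiseAffine.sub]

theorem neg_one_le_diff_dartSlope (i j : ι) (x : Δ.E × Bool) : -1 ≤ (F.diff i j).dartSlope x :=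
  Refinement.neg_one_le_dartSlope (F.isAdmissible i) (F.isAdmissible j) (F.div_eq i j) x

theorem diff_dartSlope_le_one (i j : ι) (x : Δ.E × Bool) : (F.diff i j).dartSlope x ≤ 1 := by
  have hopp := F.neg_one_le_diff_dartSlope i j (x.1, !x.2)
  rw [EdgewiseAffine.dartSlope_not] at hopp
  exact neg_le_neg_iff.1 hopp

theorem diff_val_sub_val (h : (F.diff i j).val (Δ.dTgt x) < (F.diff i j).val (Δ.dSrc x)) :
    (F.diff i j).val (Δ.dSrc x) - (F.diff i j).val (Δ.dTgt x) = Δ.len x.1 := by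
  have hslope : (F.diff i j).dartSlope x = -1 :=
    le_antisymm (Int.le_sub_one_of_lt ((F.diff i j).dartSlope_neg_iff.2 h))
      (F.neg_one_le_diff_dartSlope i j x)
  have hval := (F.diff i j).val_dTgt_sub_val_dSrc x
  rw [hslope] at hval
  push_cast at hval
  linarith

theorem eq_of_pos (hi : 0 < F.div i v) (hj : 0 < F.div j v) : i = j := by
  by_contra hij
  exact lt_irrefl _ <| Refinement.val_lt_of_pos (F.isAdmissible i) (F.isAdmissible j) (F.div_eq i j)
    (F.div_injective.ne hij) hi hj

/-- The member of the partition having a chip at `v`. -/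
noncomputable def index (v : Δ.V) : ι := (F.exists_pos v).choose

variable {F}

theorem div_index_pos (v : Δ.V) : 0 < F.div (F.index v) v := (F.exists_pos v).choose_spec

theorem index_eq_iff : F.index v = i ↔ 0 < F.div i v :=
  ⟨fun h => h ▸ div_index_pos v, F.eq_of_pos (div_index_pos v)⟩

theorem div_eq_zero (h : F.index v ≠ i) : F.div i v = 0 :=
  le_antisymm (not_lt.1 (mt index_eq_iff.2 h)) ((F.isAdmissible i).nonneg v)

theorem sum_div_eq {U : Finset Δ.V} (hU : ∀ v, F.index v = i → v ∈ U) :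
    ∑ v ∈ U, F.div i v = d := by
  rw [← (F.isAdmissible i).sum_eq]
  exact Finset.sum_subset (Finset.subset_univ U) fun v _ hv => div_eq_zero (mt (hU v) hv)

variable (F) in
theorem index_surjective : Function.Surjective F.index := fun i => by
  obtain ⟨w, -⟩ := R.exists_original
  have hd : 0 < ∑ v, F.div i v := by
    rw [(F.isAdmissible i).sum_eq, ← (F.isAdmissible (F.index w)).sum_eq]
    exact Finset.sum_pos' (fun v _ => (F.isAdmissible _).nonneg v)
      ⟨w, Finset.mem_univ w, div_index_pos w⟩
  obtain ⟨v, -, hv⟩ := Finset.exists_lt_of_sum_lt (f := fun _ => (0 : ℤ)) (by simpa using hd)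
  exact ⟨v, index_eq_iff.2 hv⟩

theorem diff_val_le (hv : F.index v = i) (w : Δ.V) : (F.diff i j).val w ≤ (F.diff i j).val v :=
  Refinement.val_le_of_pos (F.isAdmissible i) (F.isAdmissible j) (F.div_eq i j)
    (index_eq_iff.1 hv) w

theorem le_diff_val (hv : F.index v = j) (w : Δ.V) : (F.diff i j).val v ≤ (F.diff i j).val w :=
  Refinement.le_val_of_pos (F.isAdmissible i) (F.isAdmissible j) (F.div_eq i j)
    (index_eq_iff.1 hv) w

theorem diff_val_lt (hij : i ≠ j) (hv : F.index v = i) (hw : F.index w = j) :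
    (F.diff i j).val w < (F.diff i j).val v :=
  Refinement.val_lt_of_pos (F.isAdmissible i) (F.isAdmissible j) (F.div_eq i j)
    (F.div_injective.ne hij) (index_eq_iff.1 hv) (index_eq_iff.1 hw)

theorem diff_val_congr (i j : ι) (h : F.index v = F.index w) :
    (F.diff i j).val v = (F.diff i j).val w := by
  rw [← F.diff_val_add i (F.index v) j, ← F.diff_val_add i (F.index v) j]
  exact congrArg₂ _ ((le_diff_val rfl w).antisymm (le_diff_val h.symm v))
    ((diff_val_le h.symm v).antisymm (diff_val_le rfl w))

theorem index_eq_of_dartSlope_ne_zero (hmax : ∀ w, (F.diff i j).val w ≤ (F.diff i j).val v)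
    (hx : Δ.dSrc x = v) (hslope : (F.diff i j).dartSlope x ≠ 0) : F.index v = i := by
  have hnonpos : ∀ y ∈ Δ.darts v, (F.diff i j).dartSlope y ≤ 0 := fun y hy => by
    by_contra! hpos
    have hneg : (F.diff i j).dartSlope (y.1, !y.2) < 0 := by
      rw [EdgewiseAffine.dartSlope_not]
      exact neg_neg_of_pos hpos
    rw [EdgewiseAffine.dartSlope_neg_iff, dTgt_not, dSrc_not, mem_darts.1 hy] at hneg
    exact hneg.not_ge (hmax _)
  have hloss : (F.diff i j).vertexDiv v < 0 :=
    Finset.sum_neg' hnonpos ⟨x, mem_darts.2 hx, (hnonpos x (mem_darts.2 hx)).lt_of_ne hslope⟩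
  have heq := F.div_eq i j v
  have hj := (F.isAdmissible j).nonneg v
  exact index_eq_iff.2 (by omega)

/-- The superlevel set of `diff i k` above the class `k` has `d` outgoing edges and contains all
chips of `div j` if it contains one, so `diff k j` has slope `1` along all of them. -/
theorem diff_val_dTgt_eq (hik : i ≠ k) (hsrc : F.index (Δ.dSrc x) = i)
    (htgt : F.index (Δ.dTgt x) = k) (hslope : (F.diff k j).dartSlope x = 0)
    (hv : F.index v = j) : (F.diff i k).val (Δ.dTgt x) = (F.diff i k).val v := by
  refine (le_diff_val htgt v).antisymm (not_lt.1 fun hlt => ?_)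
  let U := (F.diff i k).superlevel ((F.diff i k).val (Δ.dTgt x))
  have hU : ∀ {w}, w ∈ U ↔ (F.diff i k).val (Δ.dTgt x) < (F.diff i k).val w :=
    EdgewiseAffine.mem_superlevel
  have hxU : x ∈ Δ.cut U :=
    mem_cut.2 ⟨hU.2 (diff_val_lt hik hsrc htgt), fun h => lt_irrefl _ (hU.1 h)⟩
  have hcard : (Δ.cut U).card = d :=
    (Refinement.superlevel_tight (F.isAdmissible i) (F.isAdmissible k) (F.div_eq i k) hlt).2.1
  have hlt_card := EdgewiseAffine.sum_vertexDiv_lt_card (F.diff_dartSlope_le_one k j) hxU hslope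
  have hj : ∑ w ∈ U, F.div j w = d :=
    sum_div_eq fun w hw => hU.2 (hlt.trans_eq (diff_val_congr i k (hv.trans hw.symm)))
  have hk : ∑ w ∈ U, F.div k w = 0 := Finset.sum_eq_zero fun w hw => div_eq_zero fun h =>
    (hU.1 hw).ne (diff_val_congr i k (htgt.trans h.symm))
  rw [Finset.sum_congr rfl fun w _ => F.div_eq k j w, Finset.sum_add_distrib, hk] at hj
  omega

theorem index_dTgt_eq (hij : i ≠ j) (hx : F.index (Δ.dSrc x) = i) (hx' : F.index (Δ.dTgt x) = j)
    (hy : F.index (Δ.dSrc y) = i) (hslope : (F.diff i j).dartSlope y ≠ 0) :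
    F.index (Δ.dTgt y) = j := by
  by_contra hkj
  set k := F.index (Δ.dTgt y) with hk
  have hik : i ≠ k := fun hik => hslope <| (F.diff i j).dartSlope_eq_zero_iff.2 <|
    diff_val_congr i j (hk.symm.trans (hik.symm.trans hy.symm))
  have hdropk := F.diff_val_sub_val (diff_val_lt hik hy rfl)
  have hdropj := F.diff_val_sub_val <|
    (diff_val_le hy _).lt_of_ne fun h => hslope ((F.diff i j).dartSlope_eq_zero_iff.2 h)
  have hflat : (F.diff k j).dartSlope y = 0 := by
    rw [EdgewiseAffine.dartSlope_eq_zero_iff]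
    linarith [F.diff_val_add i k j (Δ.dSrc y), F.diff_val_add i k j (Δ.dTgt y)]
  have hmin := diff_val_dTgt_eq hik hy rfl hflat hx'
  have hdropj' := F.diff_val_sub_val (diff_val_lt hij hx hx')
  have hdropk' := F.diff_val_sub_val (i := i) (j := k) (x := x) <| by
    rw [← hmin, diff_val_congr i k (hx.trans hy.symm)]
    exact diff_val_lt hik hy rfl
  have hstrict := diff_val_lt hkj rfl hx'
  rw [(F.diff k j).dartSlope_eq_zero_iff.1 hflat] at hstrict
  linarith [F.diff_val_add i k j (Δ.dSrc x), F.diff_val_add i k j (Δ.dTgt x),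
    diff_val_congr k j (hx.trans hy.symm)]

variable (F) in
/-- Two classes are adjacent if an edge joins them. -/
def quotientGraph : SimpleGraph ι where
  Adj i j := i ≠ j ∧ ∃ x, F.index (Δ.dSrc x) = i ∧ F.index (Δ.dTgt x) = j
  symm := ⟨fun _ _ ⟨hij, x, hi, hj⟩ =>
    ⟨hij.symm, (x.1, !x.2), (dSrc_not ..).symm ▸ hj, (dTgt_not ..).symm ▸ hi⟩⟩
  loopless := ⟨fun _ h => h.1 rfl⟩

theorem quotientGraph_connected (hΔ : Δ.Connected) : F.quotientGraph.Connected := by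
  have : Nonempty ι := hΔ.1.map F.index
  refine ⟨fun i j => ?_⟩
  obtain ⟨v, rfl⟩ := F.index_surjective i
  obtain ⟨w, rfl⟩ := F.index_surjective j
  refine hΔ.rel (r := fun v w => F.quotientGraph.Reachable (F.index v) (F.index w))
    ⟨fun _ => .rfl, .symm, .trans⟩ (fun e => ?_) v w
  by_cases he : F.index (Δ.src e) = F.index (Δ.tgt e)
  · rw [he]
  · exact SimpleGraph.Adj.reachable ⟨he, (e, true), rfl, rfl⟩

/-- Removing the edge between `i` and `j`, the function `diff i j` is constant on the component of
the class `i`. -/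
theorem quotientGraph_isAcyclic : F.quotientGraph.IsAcyclic := by
  rw [SimpleGraph.isAcyclic_iff_forall_adj_isBridge]
  rintro i j ⟨hij, x, hx, hx'⟩
  rw [SimpleGraph.isBridge_iff, SimpleGraph.reachable_iff_reflTransGen]
  intro hreach
  have hinv : ∀ a, Relation.ReflTransGen (F.quotientGraph.deleteEdges {s(i, j)}).Adj i a →
      ∀ v, F.index v = a → (F.diff i j).val v = (F.diff i j).val (Δ.dSrc x) := by
    intro a ha
    induction ha with
    | refl => exact fun v hv => diff_val_congr i j (hv.trans hx.symm)
    | @tail a b _ hab ih =>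
      rw [SimpleGraph.deleteEdges_adj] at hab
      obtain ⟨⟨-, y, hya, hyb⟩, hnot⟩ := hab
      intro v hv
      rw [diff_val_congr i j (hv.trans hyb.symm), ← ih _ hya,
        ← EdgewiseAffine.dartSlope_eq_zero_iff]
      by_contra hslope
      have hyi := index_eq_of_dartSlope_ne_zero (fun w => ih _ hya ▸ diff_val_le hx w) rfl hslope
      have hyj := index_dTgt_eq hij hx hx' hyi hslope
      exact hnot (by rw [← hya, ← hyb, hyi, hyj]; rfl)
  exact (diff_val_lt hij hx hx').ne (hinv j hreach _ hx')

theorem mk_mem_edgeSet_iff {e : Δ.E} :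
    s(F.index (Δ.src e), F.index (Δ.tgt e)) ∈ F.quotientGraph.edgeSet ↔
      F.index (Δ.src e) ≠ F.index (Δ.tgt e) :=
  ⟨And.left, fun h => ⟨h, (e, true), rfl, rfl⟩⟩

theorem mk_dSrc_dTgt (x : Δ.E × Bool) : s(F.index (Δ.dSrc x), F.index (Δ.dTgt x)) =
    s(F.index (Δ.src x.1), F.index (Δ.tgt x.1)) := by
  obtain ⟨e, _ | _⟩ := x
  exacts [Sym2.eq_swap, rfl]

theorem exists_edge (a : F.quotientGraph.edgeSet) :
    ∃ e, s(F.index (Δ.src e), F.index (Δ.tgt e)) = a := by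
  obtain ⟨⟨i, j⟩, h⟩ := a
  obtain ⟨-, x, hx, hx'⟩ := id h
  exact ⟨x.1, by rw [← mk_dSrc_dTgt, hx, hx']⟩

theorem len_eq_len (hij : i ≠ j) (hx : F.index (Δ.dSrc x) = i) (hx' : F.index (Δ.dTgt x) = j)
    (hy : F.index (Δ.dSrc y) = i) (hy' : F.index (Δ.dTgt y) = j) : Δ.len x.1 = Δ.len y.1 := by
  rw [← F.diff_val_sub_val (diff_val_lt hij hx hx'), ← F.diff_val_sub_val (diff_val_lt hij hy hy'),
    diff_val_congr i j (hx.trans hy.symm), diff_val_congr i j (hx'.trans hy'.symm)]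

theorem len_congr {e f : Δ.E} (he : F.index (Δ.src e) ≠ F.index (Δ.tgt e))
    (h : s(F.index (Δ.src e), F.index (Δ.tgt e)) = s(F.index (Δ.src f), F.index (Δ.tgt f))) :
    Δ.len e = Δ.len f := by
  rcases Sym2.eq_iff.1 h with ⟨hs, ht⟩ | ⟨hs, ht⟩
  · exact len_eq_len (x := (e, true)) (y := (f, true)) he rfl rfl hs.symm ht.symm
  · exact len_eq_len (x := (e, true)) (y := (f, false)) he rfl rfl hs.symm ht.symm

variable (F)

/-- The quotient of the metric graph by the partition into classes, contracting the edges inside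
a class. -/
noncomputable def quotient : MetricGraphModel where
  V := ι
  E := F.quotientGraph.edgeSet
  fV := Fintype.ofSurjective F.index F.index_surjective
  fE := have := Fintype.ofSurjective F.index F.index_surjective; Fintype.ofFinite _
  dV := Classical.decEq _
  dE := Classical.decEq _
  src a := F.index (Δ.src (exists_edge a).choose)
  tgt a := F.index (Δ.tgt (exists_edge a).choose)
  len a := Δ.len (exists_edge a).choose
  len_pos _ := Δ.len_pos _

variable {F}

theorem mk_src_tgt (a : F.quotient.E) : s(F.quotient.src a, F.quotient.tgt a) = a.1 :=
  (exists_edge a).choose_spec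

theorem quotient_src_ne_tgt (a : F.quotient.E) : F.quotient.src a ≠ F.quotient.tgt a := by
  have ha := a.2
  rw [← mk_src_tgt a] at ha
  exact ha.1

theorem exists_quotient_dart (h : F.quotientGraph.Adj i j) :
    ∃ x, F.quotient.dSrc x = i ∧ F.quotient.dTgt x = j := by
  rcases Sym2.eq_iff.1 (mk_src_tgt ⟨s(i, j), h⟩) with ⟨hi, hj⟩ | ⟨hj, hi⟩
  exacts [⟨(_, true), hi, hj⟩, ⟨(_, false), hi, hj⟩]

theorem quotient_isTreeModel (hΔ : Δ.Connected) : F.quotient.IsTreeModel := by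
  have htree : F.quotientGraph.IsTree := ⟨quotientGraph_connected hΔ, quotientGraph_isAcyclic⟩
  refine ⟨⟨htree.connected.nonempty, fun i j => exists_isWalk_of_reflTransGen ?_⟩, ?_⟩
  · have hreach := htree.connected.preconnected i j
    exact ((SimpleGraph.reachable_iff_reflTransGen i j).1 hreach).lift id
      fun _ _ => exists_quotient_dart
  · let _ : Fintype ι := F.quotient.fV
    let _ : Fintype F.quotientGraph.edgeSet := F.quotient.fE
    have hcard := htree.card_edgeFinset
    rw [SimpleGraph.edgeFinset_card] at hcard
    exact hcard

variable (F) in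
/-- The projection onto the quotient. -/
noncomputable def quotientMap : MGMorphism Δ F.quotient where
  vMap := F.index
  eMap e := if h : F.index (Δ.src e) = F.index (Δ.tgt e) then Sum.inr (F.index (Δ.tgt e))
    else Sum.inl ⟨s(F.index (Δ.src e), F.index (Δ.tgt e)), mk_mem_edgeSet_iff.2 h⟩
  mu e := if F.index (Δ.src e) = F.index (Δ.tgt e) then 0 else 1
  mu_zero e := by
    split_ifs
    exacts [iff_of_true rfl ⟨_, rfl⟩, iff_of_false id nofun]
  contract_ok e v' h := by
    split_ifs at h with heq
    cases h
    exact ⟨heq, rfl⟩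
  edge_ok e a h := by
    split_ifs at h with heq
    cases h
    exact Sym2.eq_iff.1 (mk_src_tgt ⟨_, mk_mem_edgeSet_iff.2 heq⟩).symm
  len_ok e a h := by
    split_ifs at h with heq
    cases h
    rw [if_neg heq, Nat.cast_one, one_mul]
    exact len_congr heq (exists_edge ⟨_, mk_mem_edgeSet_iff.2 heq⟩).choose_spec.symm

theorem quotientMap_eMap_eq_inl_iff {e : Δ.E} {a : F.quotient.E} :
    F.quotientMap.eMap e = Sum.inl a ↔ s(F.index (Δ.src e), F.index (Δ.tgt e)) = a.1 := by
  dsimp only [quotientMap]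
  split_ifs with h
  · exact iff_of_false nofun fun ha => mk_mem_edgeSet_iff.1 (ha ▸ a.2) h
  · exact Sum.inl.inj_iff.trans Subtype.ext_iff

theorem quotientMap_mu_eq_one {e : Δ.E} {a : F.quotient.E} (h : F.quotientMap.eMap e = Sum.inl a) :
    F.quotientMap.mu e = 1 :=
  if_neg (mk_mem_edgeSet_iff.1 (quotientMap_eMap_eq_inl_iff.1 h ▸ a.2))

theorem dartSlope_eq_ite (hij : i ≠ j) (hx : F.index (Δ.dSrc x) = i) (hx' : F.index (Δ.dTgt x) = j)
    (hy : F.index (Δ.dSrc y) = i) :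
    (F.diff i j).dartSlope y = if F.index (Δ.dTgt y) = j then -1 else 0 := by
  split_ifs with hy'
  · exact le_antisymm
      (Int.le_sub_one_of_lt ((F.diff i j).dartSlope_neg_iff.2 (diff_val_lt hij hy hy')))
      (F.neg_one_le_diff_dartSlope i j y)
  · exact not_not.1 fun h => hy' (index_dTgt_eq hij hx hx' hy h)

theorem locDeg_quotientMap {a : F.quotient.E} (ha : F.quotient.Incident a (F.index v)) :
    (F.quotientMap.locDeg v a : ℤ) = F.div (F.index v) v := by
  obtain ⟨j, hj⟩ : ∃ j, s(F.index v, j) = a.1 := by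
    rcases ha with ha | ha <;> rw [← ha, ← mk_src_tgt a]
    exacts [⟨_, rfl⟩, ⟨_, Sym2.eq_swap⟩]
  obtain ⟨hij, x, hx, hx'⟩ : F.quotientGraph.Adj (F.index v) j := by
    rw [← SimpleGraph.mem_edgeSet, hj]
    exact a.2
  have hslope : ∀ y ∈ Δ.darts v, ((if F.quotientMap.eMap y.1 = Sum.inl a then
      F.quotientMap.mu y.1 else 0 : ℕ) : ℤ) = -(F.diff (F.index v) j).dartSlope y := by
    intro y hy
    rw [mem_darts] at hy
    have hiff : F.quotientMap.eMap y.1 = Sum.inl a ↔ F.index (Δ.dTgt y) = j := by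
      rw [quotientMap_eMap_eq_inl_iff, ← mk_dSrc_dTgt, hy, ← hj, Sym2.congr_right]
    rw [dartSlope_eq_ite hij hx hx' (congrArg F.index hy)]
    by_cases h : F.quotientMap.eMap y.1 = Sum.inl a
    · rw [if_pos h, if_pos (hiff.1 h), quotientMap_mu_eq_one h]
      rfl
    · rw [if_neg h, if_neg (mt hiff.2 h)]
      rfl
  rw [MGMorphism.locDeg_eq_sum_darts, Nat.cast_sum, Finset.sum_congr rfl hslope,
    Finset.sum_neg_distrib]
  have hdiv := F.div_eq (F.index v) j v
  rw [div_eq_zero hij] at hdiv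
  exact (eq_neg_of_add_eq_zero_left hdiv.symm).symm

theorem quotientMap_harmonic : F.quotientMap.Harmonic := fun _ _ _ h₁ h₂ =>
  Nat.cast_injective ((locDeg_quotientMap h₁).trans (locDeg_quotientMap h₂).symm)

theorem quotientMap_nondegenerate [Nontrivial ι] (hΔ : Δ.Connected) :
    F.quotientMap.Nondegenerate := fun v => by
  have hconn : F.quotientGraph.Connected := quotientGraph_connected hΔ
  obtain ⟨j, hj⟩ := hconn.preconnected.exists_adj_of_nontrivial (F.index v)
  obtain ⟨x, hx, -⟩ := exists_quotient_dart hj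
  have hinc : F.quotient.Incident x.1 (F.index v) := hx ▸ incident_dSrc x
  refine ⟨x.1, hinc, (Nat.cast_pos (α := ℤ)).1 ?_⟩
  rw [locDeg_quotientMap hinc]
  exact div_index_pos v

theorem quotientMap_hasDegree : F.quotientMap.HasDegree d := fun a => by
  rw [← MGMorphism.sum_locDeg_src F.quotientMap (quotient_src_ne_tgt a)]
  refine Nat.cast_injective (R := ℤ) ?_
  rw [← (F.isAdmissible (F.quotient.src a)).sum_eq, Nat.cast_sum]
  refine Finset.sum_congr rfl fun v _ => ?_
  split_ifs with hv
  · exact hv ▸ locDeg_quotientMap (Or.inl hv.symm)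
  · exact (div_eq_zero hv).symm

end ChipPartition

end MetricGraphModel

/-! ### Subdividing at the chips -/

namespace MetricGraphModel

variable {Δ : MetricGraphModel} {E₀ : Type} {d : ℕ}

/-- Some model of the metric graph of `Γ` has a nondegenerate harmonic morphism of degree `d` to a
tree. -/
def StrictlyGonal (Γ : MetricGraphModel) (d : ℕ) : Prop :=
  ∃ Δ T : MetricGraphModel, SameMetricGraph Δ Γ ∧ T.IsTreeModel ∧
    ∃ φ : MGMorphism Δ T, φ.Harmonic ∧ φ.Nondegenerate ∧ φ.HasDegree d

theorem StrictlyGonal.of_seriesReduction {Γ : MetricGraphModel} (h : SeriesReduction Δ Γ)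
    (hΔ : Δ.StrictlyGonal d) : Γ.StrictlyGonal d := by
  obtain ⟨Δ', T, hΔ', hT⟩ := hΔ
  exact ⟨Δ', T, hΔ'.tail (Or.inl h), hT⟩

section Subdivision

variable {e₀ : Δ.E} {t : ℝ} {ht : 0 < t ∧ t < Δ.len e₀}

theorem two_le_card_cut_of_none {U : Finset (subdivision Δ e₀ t ht).V}
    (hsrc : some (Δ.src e₀) ∈ U ↔ none ∉ U) (htgt : some (Δ.tgt e₀) ∈ U ↔ none ∉ U) :
    2 ≤ ((subdivision Δ e₀ t ht).cut U).card := by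
  by_cases hU : none ∈ U
  · rw [← Finset.card_pair (a := ((none, true) : Option Δ.E × Bool)) (b := (some e₀, false))
      (by simp)]
    refine Finset.card_le_card (Finset.insert_subset ?_ (Finset.singleton_subset_iff.2 ?_)) <;>
      simp_all [mem_cut (Δ := subdivision Δ e₀ t ht), dSrc, dTgt]
  · rw [← Finset.card_pair (a := ((none, false) : Option Δ.E × Bool)) (b := (some e₀, true))
      (by simp)]
    refine Finset.card_le_card (Finset.insert_subset ?_ (Finset.singleton_subset_iff.2 ?_)) <;>
      simp_all [mem_cut (Δ := subdivision Δ e₀ t ht), dSrc, dTgt]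

theorem card_cut_eraseNone_le (U : Finset (subdivision Δ e₀ t ht).V) :
    (Δ.cut (Finset.eraseNone U)).card ≤ ((subdivision Δ e₀ t ht).cut U).card := by
  refine (Finset.card_le_card fun x hx => ?_).trans
    (Finset.card_image_le (f := fun y => (y.1.getD e₀, y.2)))
  obtain ⟨e, b⟩ := x
  rw [mem_cut, Finset.mem_eraseNone, Finset.mem_eraseNone] at hx
  rw [Finset.mem_image]
  by_cases he : e = e₀
  · subst he
    by_cases hU : none ∈ U
    · refine ⟨(if b then none else some e, b), ?_, ?_⟩ <;> cases b <;>
        simp_all [mem_cut (Δ := subdivision Δ e t ht), dSrc, dTgt]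
    · refine ⟨(if b then some e else none, b), ?_, ?_⟩ <;> cases b <;>
        simp_all [mem_cut (Δ := subdivision Δ e t ht), dSrc, dTgt]
  · refine ⟨(some e, b), ?_, rfl⟩
    cases b <;> simp_all [mem_cut (Δ := subdivision Δ e₀ t ht), dSrc, dTgt]

end Subdivision

namespace Refinement

variable (R : Refinement Δ E₀ d)

include R in
theorem connected : Δ.Connected := by
  refine ⟨⟨R.exists_original.choose⟩, fun u v => exists_isWalk_of_reflTransGen ?_⟩
  by_contra hv
  set r := fun u v => ∃ x, Δ.dSrc x = u ∧ Δ.dTgt x = v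
  let U : Finset Δ.V := {w | Relation.ReflTransGen r u w}
  have hU : ∀ {w}, w ∈ U ↔ Relation.ReflTransGen r u w := by simp [U]
  have hcut := R.two_le_card_cut U ⟨u, hU.2 .refl⟩ fun h => hv (hU.1 (h ▸ Finset.mem_univ v))
  obtain ⟨x, hx⟩ := Finset.card_pos.1 (two_pos.trans_le hcut)
  rw [mem_cut, hU, hU] at hx
  exact hx.2 (hx.1.tail ⟨x, rfl, rfl⟩)

/-- The original edge containing a point in its interior. -/
def ptEdge : Δ.Pt → Option E₀
  | Sum.inl v => R.vertexEdge v
  | Sum.inr q => some (R.edgeOf q.1)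

variable (e₀ : Δ.E) (t : ℝ) (ht : 0 < t ∧ t < Δ.len e₀)

/-- The refinement with one more vertex, at parameter `t` on the edge `e₀`. -/
noncomputable def subdivide : Refinement (subdivision Δ e₀ t ht) E₀ d where
  vertexEdge v := v.elim (some (R.edgeOf e₀)) R.vertexEdge
  edgeOf e := R.edgeOf (e.getD e₀)
  vertexEdge_of_incident := by
    rintro (_ | e) (_ | v) h
    · exact Or.inr rfl
    · exact R.vertexEdge_of_incident e₀ v (by simp_all [Incident])
    · obtain rfl : e = e₀ := by
        by_contra he
        simp [Incident, he] at h
      exact Or.inr rfl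
    · exact R.vertexEdge_of_incident e v (by
        by_cases he : e = e₀ <;> simp_all [Incident])
  exists_original := ⟨some R.exists_original.choose, R.exists_original.choose_spec⟩
  two_le_card_cut U hU hU' := by
    by_cases hne : (Finset.eraseNone U).Nonempty
    · by_cases huniv : Finset.eraseNone U = Finset.univ
      · have hmem : ∀ v, some v ∈ U := fun v => Finset.mem_eraseNone.1 (huniv ▸ Finset.mem_univ v)
        have hnone : none ∉ U := fun h => hU' (Finset.eq_univ_iff_forall.2 fun
          | none => h
          | some v => hmem v)
        exact two_le_card_cut_of_none (by simp [hnone, hmem]) (by simp [hnone, hmem])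
      · exact (R.two_le_card_cut _ hne huniv).trans (card_cut_eraseNone_le U)
    · have hmem : ∀ v, some v ∉ U := fun v h => hne ⟨v, Finset.mem_eraseNone.2 h⟩
      have hnone : none ∈ U := by
        obtain ⟨_ | v, hv⟩ := hU
        exacts [hv, absurd hv (hmem v)]
      exact two_le_card_cut_of_none (by simp [hnone, hmem]) (by simp [hnone, hmem])
  le_card_cut U := by
    rintro ⟨_ | v, hv, hv₀⟩ ⟨_ | w, hw, hw₀⟩
    · cases hv₀
    · cases hv₀
    · cases hw₀
    · exact (R.le_card_cut _ ⟨v, Finset.mem_eraseNone.2 hv, hv₀⟩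
        ⟨w, mt Finset.mem_eraseNone.1 hw, hw₀⟩).trans (card_cut_eraseNone_le U)

variable {e₀ t ht} in
theorem ptEdge_ptMap (p : (subdivision Δ e₀ t ht).Pt) :
    R.ptEdge ((subdivisionMap e₀ t ht).ptMap p) = (R.subdivide e₀ t ht).ptEdge p := by
  rcases p with (_ | v) | q
  · exact congrArg R.ptEdge (pointOn_of_mem ht)
  · rfl
  · obtain ⟨_, hq⟩ := (subdivisionMap e₀ t ht).ptMap_inr_eq q
    rw [hq]
    rfl

/-- A family of pairwise linearly equivalent effective divisors of degree `d`, with at most one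
chip in the interior of each original edge, whose supports cover the vertices. -/
structure ChipCovering {ι : Type} (D : ι → Divisor Δ) : Prop where
  injective : Function.Injective D
  effective : ∀ i, DivEffective (D i)
  divFinSupp : ∀ i, DivFinSupp (D i)
  divDegree_eq : ∀ i, divDegree (D i) = d
  linEquiv : ∀ i j, LinEquiv Δ (D i) (D j)
  le_unitDiv : ∀ i e₀, ∃ p, ∀ q, R.ptEdge q = some e₀ → D i q ≤ unitDiv Δ p q
  exists_pos : ∀ v, ∃ i, 0 < D i (Sum.inl v)

namespace ChipCovering

variable {R} {ι : Type} {D : ι → Divisor Δ} (h : R.ChipCovering D)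
include h

theorem subdivide {i : ι} {e₀ : Δ.E} {t : ℝ} {ht : 0 < t ∧ t < Δ.len e₀}
    (hi : D i (Sum.inr ⟨e₀, t, ht⟩) ≠ 0) :
    (R.subdivide e₀ t ht).ChipCovering fun i p => D i ((subdivisionMap e₀ t ht).ptMap p) where
  injective i j hij := h.injective <| funext fun q => by
    obtain ⟨p, rfl⟩ := (subdivisionMap_bijective (ht := ht)).2 q
    exact congrFun hij p
  effective i p := h.effective i _
  divFinSupp i := (h.divFinSupp i).preimage subdivisionMap_bijective.1.injOn
  divDegree_eq i :=
    (finsum_eq_of_bijective _ subdivisionMap_bijective fun _ => rfl).trans (h.divDegree_eq i)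
  linEquiv i j := SegmentMap.linEquiv_comp localIsoAt_subdivisionMap (h.linEquiv i j)
  le_unitDiv i e := by
    obtain ⟨q, hq⟩ := h.le_unitDiv i e
    obtain ⟨p, rfl⟩ := (subdivisionMap_bijective (ht := ht)).2 q
    refine ⟨p, fun p' hp' => (hq _ ((R.ptEdge_ptMap p').trans hp')).trans_eq ?_⟩
    exact if_congr subdivisionMap_bijective.1.eq_iff rfl rfl
  exists_pos := by
    rintro (_ | v)
    · refine ⟨i, ((h.effective i _).lt_of_ne' ?_)⟩
      rwa [SegmentMap.ptMap, show (subdivisionMap e₀ t ht).vMap none = _ from pointOn_of_mem ht]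
    · exact h.exists_pos v

omit h in
theorem eq_vertexSupported (hD : ∀ i q, D i (Sum.inr q) = 0) (i : ι) :
    D i = vertexSupported fun v => D i (Sum.inl v) := by
  funext p
  rcases p with v | q
  exacts [rfl, hD i q]

theorem nonempty_chipPartition [Nonempty ι] (hD : ∀ i q, D i (Sum.inr q) = 0) :
    Nonempty (ChipPartition R ι) := by
  obtain ⟨i₀⟩ := ‹Nonempty ι›
  choose F hF using fun i => h.linEquiv i i₀
  choose g _ hg using fun i => EdgewiseAffine.exists_of_bend_eq_zero (F i) fun q => by
    rw [← add_right_inj (D i₀ (Sum.inr q)), ← hF, hD, hD, add_zero]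
  exact ⟨{
    div i v := D i (Sum.inl v)
    div_injective i j hij := h.injective <| by
      rw [eq_vertexSupported hD i, eq_vertexSupported hD j]
      exact congrArg vertexSupported hij
    isAdmissible i :=
      { nonneg v := h.effective i _
        sum_eq := by
          rw [← divDegree_vertexSupported, ← eq_vertexSupported hD, h.divDegree_eq]
        le_unitDiv e₀ := by
          obtain ⟨p, hp⟩ := h.le_unitDiv i e₀
          exact ⟨p, fun v => hp (Sum.inl v)⟩ }
    potential := g
    div_sub_div i j v := by
      rw [hF i, hF j, hg, hg]
      ring
    exists_pos := h.exists_pos }⟩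

theorem finite_interior_chips [Finite ι] : {q | ∃ i, D i (Sum.inr q) ≠ 0}.Finite := by
  rw [Set.ofPred_exists]
  exact Set.finite_iUnion fun i => (h.divFinSupp i).preimage Sum.inr_injective.injOn

end ChipCovering

theorem ncard_interior_lt_of_subdivision {S : Set Δ.Pt} (hS : {q | Sum.inr q ∈ S}.Finite)
    {e₀ : Δ.E} {t : ℝ} {ht : 0 < t ∧ t < Δ.len e₀} (h : Sum.inr ⟨e₀, t, ht⟩ ∈ S) :
    {q | (subdivisionMap e₀ t ht).ptMap (Sum.inr q) ∈ S}.ncard < {q | Sum.inr q ∈ S}.ncard := by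
  set f := fun q => (subdivisionMap e₀ t ht).ptMap (Sum.inr q)
  have hf : Function.Injective f := subdivisionMap_bijective.1.comp Sum.inr_injective
  rw [← Set.ncard_image_of_injective _ hf,
    ← Set.ncard_image_of_injective {q | Sum.inr q ∈ S} Sum.inr_injective]
  refine Set.ncard_lt_ncard ⟨?_, fun hsub => ?_⟩ (hS.image _)
  · rintro _ ⟨q, hq, rfl⟩
    obtain ⟨_, hq'⟩ := (subdivisionMap e₀ t ht).ptMap_inr_eq q
    exact ⟨_, Set.mem_of_eq_of_mem (s := S) hq'.symm hq, hq'.symm⟩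
  · obtain ⟨q, -, hq⟩ := hsub ⟨_, h, rfl⟩
    exact Sum.inr_ne_inl (subdivisionMap_bijective.1 (hq.trans (pointOn_of_mem ht).symm :
      (subdivisionMap e₀ t ht).ptMap (Sum.inr q) = (subdivisionMap e₀ t ht).ptMap (Sum.inl none)))

theorem ChipCovering.strictlyGonal {ι : Type} [Finite ι] [Nontrivial ι] {D : ι → Divisor Δ}
    {R : Refinement Δ E₀ d} (h : R.ChipCovering D) : Δ.StrictlyGonal d := by
  induction hn : {q | ∃ i, D i (Sum.inr q) ≠ 0}.ncard using Nat.strong_induction_on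
    generalizing Δ with
  | _ n ih =>
    by_cases hD : ∀ i q, D i (Sum.inr q) = 0
    · obtain ⟨F⟩ := h.nonempty_chipPartition hD
      exact ⟨Δ, F.quotient, .refl, ChipPartition.quotient_isTreeModel R.connected, F.quotientMap,
        ChipPartition.quotientMap_harmonic, ChipPartition.quotientMap_nondegenerate R.connected,
        ChipPartition.quotientMap_hasDegree⟩
    · push Not at hD
      obtain ⟨i, ⟨e₀, t, ht⟩, hi⟩ := hD
      refine StrictlyGonal.of_seriesReduction (seriesReduction_subdivision (ht := ht))
        (ih _ ?_ (h.subdivide hi) rfl)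
      exact hn ▸ ncard_interior_lt_of_subdivision (S := {p | ∃ i, D i p ≠ 0})
        h.finite_interior_chips ⟨i, hi⟩

end Refinement

end MetricGraphModel

/-! ### Strict trigonality from a divisor of rank one -/

namespace MetricGraphModel

variable {Γ : MetricGraphModel}

theorem ThreeEdgeConnected.three_le_card_cut (hΓ : Γ.ThreeEdgeConnected) {U : Finset Γ.V}
    {u v : Γ.V} (hu : u ∈ U) (hv : v ∉ U) : 3 ≤ (Γ.cut U).card := by
  by_contra! hcard
  obtain ⟨L, hL, havoid⟩ := hΓ ((Γ.cut U).image Prod.fst)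
    (Finset.card_image_le.trans (Nat.le_of_lt_succ hcard)) u v
  have hside : Equivalence fun a b : Γ.V => (a ∈ U ↔ b ∈ U) :=
    ⟨fun _ => .rfl, Iff.symm, Iff.trans⟩
  refine hv ((hL.rel hside fun x hx => ?_).1 hu)
  have hcut : ∀ b, (x.1, b) ∉ Γ.cut U := fun b hb =>
    havoid x hx (Finset.mem_image.2 ⟨_, hb, rfl⟩)
  have htrue := hcut true
  have hfalse := hcut false
  simp only [mem_cut, dSrc, dTgt, if_true, Bool.false_eq_true, if_false] at htrue hfalse
  tauto

/-- A `3`-edge connected graph as a refinement of itself. -/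
def ThreeEdgeConnected.refinement (hΓ : Γ.ThreeEdgeConnected) [Nonempty Γ.V] :
    Refinement Γ Γ.E 3 where
  vertexEdge _ := none
  edgeOf := id
  vertexEdge_of_incident _ _ _ := Or.inl rfl
  exists_original := ⟨Classical.arbitrary _, rfl⟩
  two_le_card_cut U hU hU' := by
    obtain ⟨u, hu⟩ := hU
    obtain ⟨v, hv⟩ : ∃ v, v ∉ U := by simpa [Finset.eq_univ_iff_forall] using hU'
    exact (Nat.le_succ 2).trans (hΓ.three_le_card_cut hu hv)
  le_card_cut := fun _ ⟨_, hu, _⟩ ⟨_, hv, _⟩ => hΓ.three_le_card_cut hu hv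

theorem not_sameEdgeInterior_inl_left {v : Γ.V} {p : Γ.Pt} :
    ¬ SameEdgeInterior Γ (Sum.inl v) p := by
  rintro ⟨_, ⟨_, h⟩, _⟩
  cases h

theorem not_sameEdgeInterior_inl_right {p : Γ.Pt} {v : Γ.V} :
    ¬ SameEdgeInterior Γ p (Sum.inl v) := by
  rintro ⟨_, _, _, h⟩
  cases h

/-- Two chips on an edge move apart at equal speed until one of them reaches an end. -/
theorem exists_linEquiv_not_sameEdgeInterior_of_le (e : Γ.E) {s t : ℝ} (hs : 0 ≤ s) (hst : s ≤ t)
    (ht : t ≤ Γ.len e) :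
    ∃ p q, ¬ SameEdgeInterior Γ p q ∧
      LinEquiv Γ (fun z => unitDiv Γ (Γ.pointOn e s) z + unitDiv Γ (Γ.pointOn e t) z)
        fun z => unitDiv Γ p z + unitDiv Γ q z := by
  rcases le_total s (Γ.len e - t) with h | h
  · refine ⟨Γ.pointOn e 0, Γ.pointOn e (t + s), ?_, (linEquiv_pointOn_pair e le_rfl hs hst
      (by linarith) (by linarith) (by ring)).symm⟩
    rw [pointOn_zero]
    exact not_sameEdgeInterior_inl_left
  · refine ⟨Γ.pointOn e (s - (Γ.len e - t)), Γ.pointOn e (Γ.len e), ?_, (linEquiv_pointOn_pair e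
      (by linarith) (by linarith) hst ht le_rfl (by ring)).symm⟩
    rw [pointOn_len]
    exact not_sameEdgeInterior_inl_right

theorem exists_linEquiv_not_sameEdgeInterior (p q : Γ.Pt) :
    ∃ p' q', ¬ SameEdgeInterior Γ p' q' ∧
      LinEquiv Γ (fun z => unitDiv Γ p z + unitDiv Γ q z)
        fun z => unitDiv Γ p' z + unitDiv Γ q' z := by
  by_cases h : SameEdgeInterior Γ p q
  · obtain ⟨e, ⟨⟨s, hs⟩, rfl⟩, ⟨t, ht⟩, rfl⟩ := h
    rw [← pointOn_of_mem hs, ← pointOn_of_mem ht]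
    rcases le_total s t with hst | hts
    · exact exists_linEquiv_not_sameEdgeInterior_of_le e hs.1.le hst ht.2.le
    · simp only [add_comm (unitDiv Γ (Γ.pointOn e s) _)]
      exact exists_linEquiv_not_sameEdgeInterior_of_le e ht.1.le hts hs.2.le
  · exact ⟨p, q, h, .refl _⟩

theorem DivEffective.eq_unitDiv_add_unitDiv {D : Divisor Γ} (hD : DivEffective D)
    (hfin : DivFinSupp D) (h : divDegree D = 2) :
    ∃ p q, D = fun z => unitDiv Γ p z + unitDiv Γ q z := by
  obtain ⟨p, hp⟩ := hD.exists_one_le (by omega)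
  have hp' := unitDiv_divFinSupp p
  obtain ⟨q, hq⟩ := (hD.sub_unitDiv hp).eq_unitDiv (hfin.sub hp')
    (by rw [divDegree_sub hfin hp', divDegree_unitDiv, h]; rfl)
  exact ⟨p, q, by simp [← hq]⟩

theorem exists_admissibleRep {D : Divisor Γ} (hfin : DivFinSupp D) (hdeg : divDegree D = 3)
    (hD : IsMoving D) (v : Γ.V) : ∃ B, AdmissibleRep Γ D v B := by
  obtain ⟨B, hB, hv, hDB⟩ := hD (Sum.inl v)
  have hBfin := hDB.divFinSupp hfin
  have hv' := unitDiv_divFinSupp (Γ := Γ) (Sum.inl v)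
  obtain ⟨p, q, hpq⟩ := (hB.sub_unitDiv hv).eq_unitDiv_add_unitDiv (hBfin.sub hv')
    (by rw [divDegree_sub hBfin hv', hDB.divDegree_eq hfin, hdeg, divDegree_unitDiv]; rfl)
  obtain ⟨p', q', hnot, hequiv⟩ := exists_linEquiv_not_sameEdgeInterior p q
  rw [← hpq] at hequiv
  refine ⟨_, hDB.trans ?_, p', q', rfl, hnot⟩
  convert hequiv.add_right (unitDiv Γ (Sum.inl v)) using 2 <;> ring

namespace AdmissibleRep

variable {D B : Divisor Γ} {v : Γ.V} (h : AdmissibleRep Γ D v B)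
include h

theorem divEffective : DivEffective B := by
  obtain ⟨-, p, q, rfl, -⟩ := h
  exact ((unitDiv_nonneg _).add (unitDiv_nonneg p)).add (unitDiv_nonneg q)

theorem one_le : 1 ≤ B (Sum.inl v) := by
  obtain ⟨-, p, q, rfl, -⟩ := h
  linarith [unitDiv_self (Γ := Γ) (Sum.inl v), unitDiv_nonneg p (Sum.inl v),
    unitDiv_nonneg q (Sum.inl v)]

theorem exists_le_unitDiv (e : Γ.E) :
    ∃ p, ∀ q, interiorOf Γ e q → B q ≤ unitDiv Γ p q := by
  obtain ⟨-, p, q, rfl, hpq⟩ := h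
  have hv : ∀ z, interiorOf Γ e z → unitDiv Γ (Sum.inl v) z = 0 := by
    rintro _ ⟨x, rfl⟩
    exact unitDiv_of_ne Sum.inr_ne_inl
  have hfar : ∀ {p z}, ¬ interiorOf Γ e p → interiorOf Γ e z → unitDiv Γ p z = 0 :=
    fun hp hz => unitDiv_of_ne fun hzp => hp (hzp ▸ hz)
  by_cases hp : interiorOf Γ e p
  · exact ⟨p, fun z hz => by simp [hv z hz, hfar (fun hq => hpq ⟨e, hp, hq⟩) hz]⟩
  · exact ⟨q, fun z hz => by simp [hv z hz, hfar hp hz]⟩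

end AdmissibleRep

theorem ThreeEdgeConnected.chipCovering_range (hΓ : Γ.ThreeEdgeConnected) [Nonempty Γ.V]
    {D : Divisor Γ} (hfin : DivFinSupp D) (hdeg : divDegree D = 3) {B : Γ.V → Divisor Γ}
    (hB : ∀ v, AdmissibleRep Γ D v (B v)) :
    hΓ.refinement.ChipCovering ((↑) : Set.range B → Divisor Γ) where
  injective := Subtype.val_injective
  effective := by
    rintro ⟨_, v, rfl⟩
    exact (hB v).divEffective
  divFinSupp := by
    rintro ⟨_, v, rfl⟩
    exact (hB v).1.divFinSupp hfin
  divDegree_eq := by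
    rintro ⟨_, v, rfl⟩
    exact ((hB v).1.divDegree_eq hfin).trans hdeg
  linEquiv := by
    rintro ⟨_, v, rfl⟩ ⟨_, w, rfl⟩
    exact (hB v).1.symm.trans (hB w).1
  le_unitDiv := by
    rintro ⟨_, v, rfl⟩ e
    obtain ⟨p, hp⟩ := (hB v).exists_le_unitDiv e
    refine ⟨p, ?_⟩
    rintro (w | ⟨e', x⟩) hq
    · cases hq
    · obtain rfl : e' = e := Option.some_inj.1 hq
      exact hp _ ⟨x, rfl⟩
  exists_pos v := ⟨⟨_, v, rfl⟩, (hB v).one_le⟩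

theorem DivEffective.card_le_divDegree {D : Divisor Γ} (hD : DivEffective D)
    (hfin : DivFinSupp D) (h : ∀ v, 1 ≤ D (Sum.inl v)) : Fintype.card Γ.V ≤ divDegree D := by
  have hrest : 0 ≤ divDegree fun p => D p - vertexSupported 1 p := finsum_nonneg <| by
    rintro (v | q)
    · exact sub_nonneg.2 (h v)
    · simpa [vertexSupported] using hD (Sum.inr q)
  rw [divDegree_sub hfin (vertexSupported_divFinSupp 1), divDegree_vertexSupported] at hrest
  simpa using hrest

theorem DivisoriallyGonal.strictlyTrigonal (hD : Γ.DivisoriallyGonal 3)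
    (hΓ : Γ.ThreeEdgeConnected) (hcard : 3 < Fintype.card Γ.V) : StrictlyTrigonal Γ := by
  obtain ⟨D, hfin, hdeg, hmov⟩ := hD
  choose B hB using exists_admissibleRep hfin hdeg hmov
  have : Nonempty Γ.V := Fintype.card_pos_iff.1 (by omega)
  have : Nontrivial (Set.range B) := by
    by_contra hcon
    rw [Set.nontrivial_coe_sort, Set.not_nontrivial_iff] at hcon
    let a : Γ.V := Classical.arbitrary _
    have hle := (hB a).divEffective.card_le_divDegree ((hB a).1.divFinSupp hfin) fun v =>
      hcon ⟨v, rfl⟩ ⟨a, rfl⟩ ▸ (hB v).one_le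
    rw [(hB a).1.divDegree_eq hfin, hdeg] at hle
    omega
  exact (hΓ.chipCovering_range hfin hdeg hB).strictlyGonal

theorem StrictlyTrigonal.trigonal (h : StrictlyTrigonal Γ) : Trigonal Γ := by
  obtain ⟨Δ, T, hΔ, hT⟩ := h
  exact ⟨Δ, T, Relation.ReflTransGen.mono (fun _ _ => Or.inr) _ _ hΔ, hT⟩

theorem IsCanonical.two_le_card (hΓ : Γ.IsCanonical) (hl : Γ.Loopless) :
    2 ≤ Fintype.card Γ.V := by
  by_contra! hlt
  have : Subsingleton Γ.V := Fintype.card_le_one_iff_subsingleton.1 (Nat.le_of_lt_succ hlt)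
  have : IsEmpty Γ.E := ⟨fun e => hl e (Subsingleton.elim _ _)⟩
  obtain ⟨v⟩ := hΓ.1.1
  simpa [valence] using hΓ.2 v

end MetricGraphModel

/-- Let `Γ` be a loopless `3`-edge connected metric graph
with canonical model `(G₀, l₀)`.  Then `|V(G₀)| ∈ {2,3}` or `Γ` is trigonal,
if and only if `Γ` is divisorially trigonal; moreover if `|V(G₀)| > 3` the
tropical modification may be taken to be `Γ` itself, i.e. `Γ` is strictly
trigonal. -/
theorem loopless_trigonal_iff_divisoriallyTrigonal
    (Γ : MetricGraphModel) (hcan : Γ.IsCanonical) (h3ec : Γ.ThreeEdgeConnected)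
    (hll : Γ.Loopless) :
    ((Fintype.card Γ.V = 2 ∨ Fintype.card Γ.V = 3 ∨ Trigonal Γ) ↔
        DivisoriallyTrigonal Γ)
    ∧ (3 < Fintype.card Γ.V → Trigonal Γ → StrictlyTrigonal Γ) := by
  have hne : Nonempty Γ.V := hcan.1.1
  have hcard := hcan.two_le_card hll
  rw [divisoriallyTrigonal_iff]
  refine ⟨⟨?_, fun hD => ?_⟩, fun hlt h =>
    (Trigonal.divisoriallyGonal h hll hne).strictlyTrigonal h3ec hlt⟩
  · rintro (h | h | h)
    · exact .of_card_le hll (by omega)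
    · exact .of_card_le hll (by omega)
    · exact Trigonal.divisoriallyGonal h hll hne
  · by_cases hlt : 3 < Fintype.card Γ.V
    · exact Or.inr (Or.inr (StrictlyTrigonal.trigonal (hD.strictlyTrigonal h3ec hlt)))
    · omega
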